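/- For every finite subgroup G of the orthogonal group O(8) acting freely on the unit sphere S⁷ ⊂ ℝ⁸, there exists a nonzero G-invariant harmonic polynomial on ℝ⁸, homogeneous of degree d with 1 ≤ d ≤ 4. (Equivalently, the first nonzero eigenvalue of the scalar Laplacian on any smooth quotient S⁷/G is at most 4·(4 + 7 − 1) = 40.) -/

import Mathlib

/-!
Suppose that there is no invariant harmonic polynomial of degree one to four. The whole proof uses this only through
`PropD`: a symmetric matrix `s` commuting with all its conjugates under the group is scalar. For a traceless such `s`,
the sum of the squares `(g s g⁻¹)²` is a scalar `l` because there is no invariant harmonic quadratic, and the quartic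
`∑ (quadratic form of g s g⁻¹)² - (l/5)|x|⁴` is harmonic and invariant, hence zero; at a joint eigenvector it takes the
value `(4l/5)|x|⁴`, so `l = 0` and `s = 0` (`propD_traceless`).

Freeness makes abelian subgroups cyclic and gives at most one involution (`Good`). With `PropD` one obtains that the
centralizer of a cyclic normal subgroup has index at most two (`Ix2_of_cyclic`), and that a subgroup of index at most
two is neither abelian (`no_abelian_ix2`) nor contained in the product of a quaternion algebra with a commuting family
of matrices commuting with it (`no_quaternion_gen`): in both cases there would be an invariant orthogonal projection
of too small a rank.

Elements `a` of order three are studied through `x = a - a⁻¹`, which satisfies `x² = -3`. For two of them the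
anticommutator satisfies a relation between roots of unity, which leaves few possibilities (`IsX.trichotomy`), and all
of these anticommutators are scalar (`all_scalar`). Hence two noncommuting ones generate a quaternion algebra; it
contains all of them, and a subgroup of index at most two then lies in the product of this algebra with matrices
commuting with it, which is excluded. So elements of order three commute (`IsX.comm`).

In that case transfer splits off the elements of order divisible by three, and groups of order prime to three with the
property `Good` are controlled by their elements of odd order and their 2-subgroups. This yields a normal abelian
subgroup `K` and a normal 2-subgroup `S` describing a subgroup of index at most two (`exists_struct`). Finally
`not_propD` excludes the possible `S`: either a self-centralizing abelian subgroup of `S` gives an abelian subgroup of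
index at most two, or `S` lies in a quaternion algebra.
-/

open MvPolynomial

/-- The Laplacian `Σ ∂²p/∂xᵢ²` of a polynomial in finitely many real variables. -/
noncomputable def polyLap {σ : Type*} [Fintype σ] (p : MvPolynomial σ ℝ) : MvPolynomial σ ℝ :=
  ∑ i, MvPolynomial.pderiv i (MvPolynomial.pderiv i p)

/-- A polynomial is harmonic if its Laplacian vanishes identically. -/
def IsHarmonic {σ : Type*} [Fintype σ] (p : MvPolynomial σ ℝ) : Prop := polyLap p = 0

/-- The substitution `x ↦ g·x` on polynomials: the variable `xᵢ` is replaced by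
`Σⱼ gᵢⱼ xⱼ`, so that `(aeval (matSub g) p)(x) = p(g·x)`. -/
noncomputable def matSub {m : ℕ} (g : Matrix (Fin m) (Fin m) ℝ) :
    Fin m → MvPolynomial (Fin m) ℝ :=
  fun i => ∑ j, MvPolynomial.C (g i j) * MvPolynomial.X j

set_option linter.unusedSimpArgs false

namespace FreeS7

/-! ### Quadratic forms and the absence of low-degree invariants -/

/-- Real `8 × 8` matrices. -/
abbrev Mat := Matrix (Fin 8) (Fin 8) ℝ

/-- The quadratic form `⟨x, s x⟩` of a matrix `s`, as a polynomial. -/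
noncomputable def quad (s : Mat) : MvPolynomial (Fin 8) ℝ := ∑ i, X i * matSub s i

lemma C_two : (C 2 : MvPolynomial (Fin 8) ℝ) = 2 := map_ofNat C 2

lemma matSub_add (s t : Mat) (i : Fin 8) : matSub (s + t) i = matSub s i + matSub t i := by
  simp [matSub, add_mul, Finset.sum_add_distrib]

lemma matSub_smul (c : ℝ) (s : Mat) (i : Fin 8) : matSub (c • s) i = C c * matSub s i := by
  simp [matSub, Finset.mul_sum, mul_assoc]

lemma quad_add (s t : Mat) : quad (s + t) = quad s + quad t := by
  simp [quad, matSub_add, mul_add, Finset.sum_add_distrib]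

lemma quad_smul (c : ℝ) (s : Mat) : quad (c • s) = C c * quad s := by
  simp only [quad, matSub_smul, Finset.mul_sum]
  exact Finset.sum_congr rfl fun _ _ => by ring

lemma quad_sum {ι : Type*} (I : Finset ι) (s : ι → Mat) :
    quad (∑ i ∈ I, s i) = ∑ i ∈ I, quad (s i) := by
  classical
  induction I using Finset.induction_on with
  | empty => simp [quad, matSub]
  | insert a I ha ih => rw [Finset.sum_insert ha, Finset.sum_insert ha, quad_add, ih]

lemma matSub_homog (s : Mat) (i : Fin 8) : (matSub s i).IsHomogeneous 1 :=
  IsHomogeneous.sum _ _ _ fun j _ => by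
    simpa using (isHomogeneous_C (Fin 8) (s i j)).mul (isHomogeneous_X ℝ j)

lemma quad_homog (s : Mat) : (quad s).IsHomogeneous 2 :=
  IsHomogeneous.sum _ _ _ fun i _ => (isHomogeneous_X ℝ i).mul (matSub_homog s i)

lemma eval_matSub (s : Mat) (v : Fin 8 → ℝ) (i : Fin 8) : eval v (matSub s i) = (s.mulVec v) i := by
  simp [matSub, Matrix.mulVec, dotProduct]

lemma eval_quad (s : Mat) (v : Fin 8 → ℝ) : eval v (quad s) = v ⬝ᵥ s.mulVec v := by
  simp [quad, eval_matSub, dotProduct]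

lemma pderiv_matSub (s : Mat) (i k : Fin 8) : pderiv k (matSub s i) = C (s i k) := by
  classical
  simp [matSub, pderiv_X, Pi.single_apply]

lemma pderiv_quad (s : Mat) (hs : s.transpose = s) (k : Fin 8) :
    pderiv k (quad s) = 2 * matSub s k := by
  classical
  have hs' : ∀ i j, s i j = s j i := fun i j => by
    conv_lhs => rw [← hs]
    rfl
  have h : ∀ i, pderiv k (X i * matSub s i) = C (s k i) * X i + (if i = k then matSub s k else 0) := by
    intro i
    rw [pderiv_mul, pderiv_matSub, pderiv_X, Pi.single_apply, hs' i k]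
    by_cases hik : i = k
    · subst hik; simp; ring
    · simp [hik]; ring
  rw [quad, map_sum, Finset.sum_congr rfl fun i _ => h i, Finset.sum_add_distrib]
  simp only [Finset.sum_ite_eq', Finset.mem_univ, if_true]
  rw [show ∑ i, C (s k i) * X i = matSub s k from rfl]; ring

lemma polyLap_add (p q : MvPolynomial (Fin 8) ℝ) : polyLap (p + q) = polyLap p + polyLap q := by
  simp [polyLap, Finset.sum_add_distrib]

lemma polyLap_sum {ι : Type*} (I : Finset ι) (p : ι → MvPolynomial (Fin 8) ℝ) :
    polyLap (∑ i ∈ I, p i) = ∑ i ∈ I, polyLap (p i) := by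
  simp only [polyLap, map_sum]
  exact Finset.sum_comm

lemma polyLap_C_mul (c : ℝ) (p : MvPolynomial (Fin 8) ℝ) : polyLap (C c * p) = C c * polyLap p := by
  simp [polyLap, Finset.mul_sum]

lemma polyLap_quad (s : Mat) (hs : s.transpose = s) : polyLap (quad s) = C (2 * s.trace) := by
  have h : ∀ k, pderiv k (2 * matSub s k) = C (2 * s k k) := by
    intro k
    rw [pderiv_mul, pderiv_matSub]
    have : pderiv k (2 : MvPolynomial (Fin 8) ℝ) = 0 := by
      rw [show (2 : MvPolynomial (Fin 8) ℝ) = C 2 from (C_two).symm]; exact pderiv_C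
    rw [this, ← C_two, ← C_mul]; simp
  simp only [polyLap, pderiv_quad s hs, h]
  rw [← map_sum, ← Finset.mul_sum]; rfl

lemma sum_matSub_sq (s : Mat) (hs : s.transpose = s) : ∑ k, matSub s k ^ 2 = quad (s * s) := by
  apply MvPolynomial.funext
  intro v
  rw [eval_quad, ← Matrix.mulVec_mulVec, Matrix.dotProduct_mulVec, ← Matrix.mulVec_transpose, hs]
  simp [eval_matSub, dotProduct, pow_two]

lemma polyLap_quad_sq (s : Mat) (hs : s.transpose = s) :
    polyLap (quad s ^ 2) = C (4 * s.trace) * quad s + 8 * quad (s * s) := by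
  have h : ∀ k, pderiv k (pderiv k (quad s ^ 2)) =
      2 * quad s * pderiv k (pderiv k (quad s)) + 8 * matSub s k ^ 2 := by
    intro k
    have e : pderiv k (quad s ^ 2) = C 2 * (quad s * pderiv k (quad s)) := by
      rw [pow_two, pderiv_mul, C_two]; ring
    rw [e, pderiv_C_mul, pderiv_mul]
    rw [pderiv_quad s hs, C_two]; ring
  have h2 := polyLap_quad s hs
  rw [polyLap] at h2 ⊢
  simp only [h]
  rw [Finset.sum_add_distrib, ← Finset.mul_sum, ← Finset.mul_sum, h2, sum_matSub_sq s hs]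
  rw [show (4 : ℝ) * s.trace = 2 * (2 * s.trace) by ring]
  simp only [C_mul, C_two]
  ring

lemma eval_aeval_matSub (g : Mat) (p : MvPolynomial (Fin 8) ℝ) (v : Fin 8 → ℝ) :
    eval v (aeval (matSub g) p) = eval (g.mulVec v) p := by
  have h : (eval v).comp (aeval (matSub g) : MvPolynomial (Fin 8) ℝ →ₐ[ℝ] _).toRingHom =
      eval (g.mulVec v) := by
    apply MvPolynomial.ringHom_ext
    · intro r; simp
    · intro i; simp [eval_matSub]
  exact DFunLike.congr_fun h p

lemma aeval_quad (g s : Mat) : aeval (matSub g) (quad s) = quad (g.transpose * s * g) := by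
  apply MvPolynomial.funext
  intro v
  rw [eval_aeval_matSub, eval_quad, eval_quad, ← Matrix.mulVec_mulVec, ← Matrix.mulVec_mulVec,
    Matrix.dotProduct_mulVec v g.transpose, ← Matrix.mulVec_transpose, Matrix.transpose_transpose]

lemma quad_eq_zero (s : Mat) (hs : s.transpose = s) (h : quad s = 0) : s = 0 := by
  ext i j
  have := pderiv_matSub s i j
  have h2 := pderiv_quad s hs i
  rw [h, map_zero] at h2
  have h3 : matSub s i = 0 := by simpa using h2.symm
  rw [h3, map_zero] at this
  have := (C_eq_zero (σ := Fin 8)).1 this.symm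
  simpa using this

/-- Commuting real symmetric matrices have a common eigenvector. -/
lemma exists_joint_eigenvector {ι : Type*} [Finite ι] (s : ι → Mat)
    (hs : ∀ i, (s i).transpose = s i) (hc : ∀ i j, Commute (s i) (s j)) :
    ∃ v : Fin 8 → ℝ, v ≠ 0 ∧ ∀ i, ∃ c : ℝ, (s i).mulVec v = c • v := by
  have hsym : ∀ i, (Matrix.toEuclideanLin (s i)).IsSymmetric := fun i =>
    Matrix.isSymmetric_toEuclideanLin_iff.2 (by rw [Matrix.IsHermitian, Matrix.conjTranspose_eq_transpose_of_trivial, hs])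
  have hcom : Pairwise fun i j => Commute (Matrix.toEuclideanLin (s i)) (Matrix.toEuclideanLin (s j)) := by
    intro i j _
    ext1 v
    have := hc i j
    simp only [Module.End.mul_apply, Matrix.toLpLin_apply, Matrix.mulVec_mulVec, this.eq]
  have := LinearMap.IsSymmetric.iSup_iInf_eq_top_of_commute hsym hcom
  by_contra hno
  push Not at hno
  have h0 : ∀ χ : ι → ℝ, ⨅ i, Module.End.eigenspace (Matrix.toEuclideanLin (s i)) (χ i) = ⊥ := by
    intro χ
    rw [eq_bot_iff]
    intro v hv
    rw [Submodule.mem_iInf] at hv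
    by_contra hv0
    obtain ⟨i, hi⟩ := hno v.ofLp (fun h => hv0 (by simpa using congrArg (WithLp.toLp 2) h))
    have h1 := hv i
    rw [Module.End.mem_eigenspace_iff] at h1
    apply hi (χ i)
    have := congrArg WithLp.ofLp h1
    simpa [Matrix.toLpLin_apply] using this
  simp [h0] at this

/-- An orthogonal representation on `ℝ⁸` that is free on the unit sphere. -/
structure FreeRep {Γ : Type*} [Group Γ] (ρ : Γ →* Mat) : Prop where
  orth : ∀ g, ρ g⁻¹ = (ρ g).transpose
  free : ∀ g v, (ρ g).mulVec v = v → v ≠ 0 → g = 1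

/-- The consequence of the absence of low-degree invariant harmonics that drives the whole proof:
a symmetric matrix that commutes with all of its conjugates under the group is scalar. -/
def PropD {Γ : Type*} [Group Γ] (ρ : Γ →* Mat) : Prop :=
  ∀ s : Mat, s.transpose = s → (∀ g, Commute s (ρ g * s * ρ g⁻¹)) → ∃ c : ℝ, s = c • 1

section
variable {Γ : Type*} [Group Γ] {ρ : Γ →* Mat}

lemma rho_inv_mul (g : Γ) : ρ g⁻¹ * ρ g = 1 := by rw [← map_mul]; simp
lemma rho_mul_inv (g : Γ) : ρ g * ρ g⁻¹ = 1 := by rw [← map_mul]; simp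

lemma isHarmonic_iff (p : MvPolynomial (Fin 8) ℝ) : IsHarmonic p ↔ polyLap p = 0 := Iff.rfl

/-- A traceless symmetric `s` commuting with all its conjugates `S g` vanishes. The sum of the
`(S g)²` is a scalar `l`, and the sum of the squares of the quadratic forms of the `S g`, minus `(l/5)|x|⁴`, is an
invariant harmonic quartic, hence zero. At a unit vector which is a joint eigenvector of the `S g` this reads
`l = l/5`, so `l = 0`. -/
lemma propD_traceless [Finite Γ] (hρ : FreeRep ρ)
    (hno : ∀ (p : MvPolynomial (Fin 8) ℝ) (d : ℕ), 1 ≤ d → d ≤ 4 → p.IsHomogeneous d →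
      IsHarmonic p → (∀ g, aeval (matSub (ρ g)) p = p) → p = 0)
    (s : Mat) (hs : s.transpose = s) (hc : ∀ g, Commute s (ρ g * s * ρ g⁻¹))
    (ht : s.trace = 0) : s = 0 := by
  classical
  have := Fintype.ofFinite Γ
  set S : Γ → Mat := fun g => ρ g * s * ρ g⁻¹ with hS
  have hSs : ∀ g, (S g).transpose = S g := fun g => by
    simp only [hS, Matrix.transpose_mul, hs, hρ.orth, Matrix.transpose_transpose, mul_assoc]
  have hSt : ∀ g, (S g).trace = 0 := fun g => by
    simp only [hS]; rw [Matrix.trace_mul_comm, ← mul_assoc, rho_inv_mul, one_mul, ht]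
  have hSconj : ∀ g h, (ρ g).transpose * S h * ρ g = S (g⁻¹ * h) := fun g h => by
    simp only [hS, ← hρ.orth, map_mul, mul_inv_rev, inv_inv, mul_assoc]
  have hScom : ∀ g h, Commute (S g) (S h) := fun g h => by
    have h1 := hc (g⁻¹ * h)
    have e : S h = ρ g * S (g⁻¹ * h) * ρ g⁻¹ := by
      rw [← hSconj, ← hρ.orth]
      simp only [mul_assoc, rho_mul_inv, mul_one]
      rw [← mul_assoc, rho_mul_inv, one_mul]
    rw [e]
    have h2 : ∀ a b : Mat, Commute a b → Commute (ρ g * a * ρ g⁻¹) (ρ g * b * ρ g⁻¹) := by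
      intro a b hab
      have k : ∀ a b : Mat, ρ g * a * ρ g⁻¹ * (ρ g * b * ρ g⁻¹) = ρ g * (a * b) * ρ g⁻¹ := by
        intro a b
        calc _ = ρ g * a * (ρ g⁻¹ * ρ g) * b * ρ g⁻¹ := by simp only [mul_assoc]
          _ = _ := by rw [rho_inv_mul]; simp only [mul_assoc, mul_one]
      rw [Commute, SemiconjBy, k, k, hab.eq]
    exact h2 _ _ h1
  -- the sum of squares is scalar, from the absence of invariant harmonic quadratics
  set T : Mat := ∑ g, S g * S g with hT
  have hTs : T.transpose = T := by
    simp [hT, Matrix.transpose_sum, Matrix.transpose_mul, hSs]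
  obtain ⟨l, hl⟩ : ∃ l : ℝ, T = l • 1 := by
    refine ⟨T.trace / 8, ?_⟩
    have h0 : quad (T + (-(T.trace / 8)) • 1) = 0 := by
      apply hno _ 2 (by norm_num) (by norm_num) (quad_homog _)
      · rw [isHarmonic_iff, polyLap_quad]
        · rw [Matrix.trace_add, Matrix.trace_smul, Matrix.trace_one]
          simp
        · simp [hTs]
      · intro g
        have hg : (ρ g).transpose * ρ g = 1 := by rw [← hρ.orth, rho_inv_mul]
        rw [aeval_quad]
        congr 1
        rw [mul_add, add_mul]
        congr 1
        · rw [hT, Finset.mul_sum, Finset.sum_mul]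
          refine (Fintype.sum_equiv (Equiv.mulLeft g⁻¹) _ _ fun h => ?_)
          simp only [Equiv.coe_mulLeft, ← hSconj]
          have hg' : ρ g * (ρ g).transpose = 1 := by rw [← hρ.orth, rho_mul_inv]
          calc _ = (ρ g).transpose * S h * 1 * S h * ρ g := by simp only [mul_assoc, mul_one, one_mul]
            _ = _ := by rw [← hg']; simp only [mul_assoc]
        · simp [hg]
    have := quad_eq_zero _ (by simp [hTs]) h0
    rw [neg_smul, ← sub_eq_add_neg, sub_eq_zero] at this
    exact this
  -- the constant `1/5`: the Laplacian of the first sum is `8 l |x|²`, that of `|x|⁴` is `40 |x|²`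
  have hq : ∑ g, quad (S g) ^ 2 + C (-(l/5)) * quad 1 ^ 2 = 0 := by
    apply hno _ 4 (by norm_num) (by norm_num)
    · refine IsHomogeneous.add (IsHomogeneous.sum _ _ _ fun g _ => (quad_homog _).pow 2) ?_
      simpa using (isHomogeneous_C (Fin 8) (-(l/5))).mul ((quad_homog 1).pow 2)
    · rw [isHarmonic_iff, polyLap_add, polyLap_sum, polyLap_C_mul, polyLap_quad_sq 1 (by simp)]
      simp only [polyLap_quad_sq _ (hSs _), hSt]
      simp only [mul_zero, map_zero, zero_mul, zero_add]
      rw [← Finset.mul_sum, ← quad_sum, ← hT, hl, quad_smul, Matrix.trace_one, mul_one]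
      have e8 : (8 : MvPolynomial (Fin 8) ℝ) = C 8 := (map_ofNat C 8).symm
      rw [e8]
      have e : ∀ a b c d : ℝ, C a * (C b * quad 1) + C c * (C d * quad 1 + C a * quad 1) =
          C (a * b + c * (d + a)) * quad 1 := by
        intro a b c d; simp only [C_add, C_mul]; ring
      rw [e, Fintype.card_fin]
      have : (8 * l + -(l / 5) * (4 * ((8 : ℕ) : ℝ) + 8)) = 0 := by push_cast; ring
      rw [this, map_zero, zero_mul]
    · intro g
      have hg : (ρ g).transpose * ρ g = 1 := by rw [← hρ.orth, rho_inv_mul]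
      have e1 : ∑ h, quad (S (g⁻¹ * h)) ^ 2 = ∑ h, quad (S h) ^ 2 :=
        Fintype.sum_equiv (Equiv.mulLeft g⁻¹) _ _ fun h => rfl
      rw [map_add, map_sum, map_mul, aeval_C, MvPolynomial.algebraMap_eq, map_pow, aeval_quad,
        mul_one, hg, ← e1]
      simp only [map_pow, aeval_quad, hSconj]
  obtain ⟨v, hv, hve⟩ := exists_joint_eigenvector S hSs hScom
  choose c hcv using hve
  have hvv : v ⬝ᵥ v ≠ 0 := by simpa [dotProduct_self_eq_zero] using hv
  have h1 := congrArg (eval v) hq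
  simp only [map_add, map_sum, map_pow, eval_quad, map_mul, eval_C, map_zero, hcv,
    Matrix.one_mulVec, dotProduct_smul, smul_eq_mul, mul_pow] at h1
  rw [← Finset.sum_mul] at h1
  have h2 : (∑ g, (c g) ^ 2) * (v ⬝ᵥ v) = l * (v ⬝ᵥ v) := by
    have := congrArg (fun t : Mat => v ⬝ᵥ t.mulVec v) hl
    simp only [hT, Matrix.sum_mulVec, ← Matrix.mulVec_mulVec, hcv, Matrix.mulVec_smul, smul_smul,
      dotProduct_sum, Matrix.smul_mulVec, Matrix.one_mulVec, dotProduct_smul, smul_eq_mul] at this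
    rw [← this, Finset.sum_mul]
    exact Finset.sum_congr rfl fun g _ => by ring
  have h3 := mul_right_cancel₀ hvv h2
  rw [h3] at h1
  have hl0 : l = 0 := by
    have : l * (v ⬝ᵥ v) ^ 2 = 0 := by linarith
    rcases mul_eq_zero.1 this with h | h
    · exact h
    · exact absurd (pow_eq_zero_iff (two_ne_zero) |>.1 h) hvv
  rw [hl0, zero_smul] at hl
  -- a sum of squares of symmetric matrices vanishes only if every term does
  have key : ∀ w : Fin 8 → ℝ, s.mulVec w = 0 := by
    intro w
    have h4 := congrArg (fun t : Mat => w ⬝ᵥ t.mulVec w) hl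
    simp only [hT, Matrix.sum_mulVec, dotProduct_sum, Matrix.zero_mulVec, dotProduct_zero] at h4
    have h5 : ∀ g, w ⬝ᵥ (S g * S g).mulVec w = (S g).mulVec w ⬝ᵥ (S g).mulVec w := by
      intro g
      rw [← Matrix.mulVec_mulVec, Matrix.dotProduct_mulVec, ← Matrix.mulVec_transpose, hSs]
    simp only [h5] at h4
    have h6 := (Finset.sum_eq_zero_iff_of_nonneg (fun g _ => by
      have := dotProduct_star_self_nonneg ((S g).mulVec w)
      simpa using this)).1 h4 1 (Finset.mem_univ _)
    rw [dotProduct_self_eq_zero] at h6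
    simpa [hS] using h6
  ext i j
  have := congrFun (key (Pi.single j 1)) i
  simpa using this

/-- The absence of invariant harmonic polynomials of degree one to four implies `PropD`; subtracting
`tr s / 8` reduces this to traceless matrices. -/
theorem propD_of_no_invariant [Finite Γ] (hρ : FreeRep ρ)
    (hno : ∀ (p : MvPolynomial (Fin 8) ℝ) (d : ℕ), 1 ≤ d → d ≤ 4 → p.IsHomogeneous d →
      IsHarmonic p → (∀ g, aeval (matSub (ρ g)) p = p) → p = 0) : PropD ρ := by
  intro s hs hc
  refine ⟨s.trace / 8, ?_⟩
  have := propD_traceless hρ hno (s - (s.trace / 8) • 1) (by simp [hs]) (fun g => ?_) (by simp)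
  · exact sub_eq_zero.1 this
  · have h1 : ρ g * (s - (s.trace / 8) • 1) * ρ g⁻¹ = ρ g * s * ρ g⁻¹ - (s.trace / 8) • 1 := by
      rw [mul_sub, sub_mul]; simp [rho_mul_inv]
    rw [h1]
    have h2 : ∀ t : Mat, Commute t ((s.trace / 8) • (1 : Mat)) := fun t => (Commute.one_right t).smul_right _
    exact ((hc g).sub_left (h2 _).symm).sub_right (h2 _)

end

/-! ### Subgroups of index at most two -/

section
variable {Γ : Type*} [Group Γ] {ρ : Γ →* Mat}

lemma mat_ext_mulVec {m n : Mat} (h : ∀ v, m.mulVec v = n.mulVec v) : m = n := by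
  ext i j
  simpa using congrFun (h (Pi.single j 1)) i

lemma FreeRep.isUnit_sub_one (hρ : FreeRep ρ) {g : Γ} (hg : g ≠ 1) : IsUnit (ρ g - 1) := by
  rw [Matrix.isUnit_iff_isUnit_det, isUnit_iff_ne_zero]
  intro h0
  obtain ⟨v, hv, hv0⟩ := Matrix.exists_mulVec_eq_zero_iff.2 h0
  rw [Matrix.sub_mulVec, Matrix.one_mulVec, sub_eq_zero] at hv0
  exact hg (hρ.free g v hv0 hv)

lemma FreeRep.inj (hρ : FreeRep ρ) {g h : Γ} (e : ρ g = ρ h) : g = h := by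
  by_contra hne
  have h1 : g * h⁻¹ ≠ 1 := fun h2 => hne (mul_inv_eq_one.1 h2)
  have := hρ.isUnit_sub_one h1
  rw [map_mul, e, rho_mul_inv, sub_self] at this
  exact not_isUnit_zero this

/-- Differences of distinct group elements are invertible matrices. -/
lemma FreeRep.isUnit_sub (hρ : FreeRep ρ) {g h : Γ} (hne : g ≠ h) : IsUnit (ρ g - ρ h) := by
  have h1 : g * h⁻¹ ≠ 1 := fun h2 => hne (mul_inv_eq_one.1 h2)
  have h2 := hρ.isUnit_sub_one h1
  have e : ρ g - ρ h = (ρ (g * h⁻¹) - 1) * ρ h := by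
    rw [sub_mul, one_mul, ← map_mul]; simp
  rw [e]
  exact h2.mul (by rw [isUnit_iff_exists]; exact ⟨ρ h⁻¹, rho_mul_inv h, rho_inv_mul h⟩)

lemma FreeRep.comp (hρ : FreeRep ρ) (H : Subgroup Γ) : FreeRep (ρ.comp H.subtype) :=
  ⟨fun g => by simpa using hρ.orth g, fun g v h hv => by
    have := hρ.free g v (by simpa using h) hv
    exact_mod_cast this⟩

lemma FreeRep.involution (hρ : FreeRep ρ) {g : Γ} (h2 : g * g = 1) (h1 : g ≠ 1) : ρ g = -1 := by
  have := hρ.isUnit_sub_one h1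
  have e : (ρ g - 1) * (ρ g + 1) = 0 := by
    rw [sub_mul, mul_add, ← map_mul, h2, map_one]; simp; abel
  exact eq_neg_of_add_eq_zero_left ((this.mul_right_eq_zero).1 e)

/-- The subgroup `H` has index at most two. -/
def Ix2 (H : Subgroup Γ) : Prop := ∀ g h, g ∉ H → h ∉ H → g * h ∈ H

lemma Ix2.conj_mem {H : Subgroup Γ} (hH : Ix2 H) {h : Γ} (hh : h ∈ H) (g : Γ) : g * h * g⁻¹ ∈ H := by
  by_cases hg : g ∈ H
  · exact H.mul_mem (H.mul_mem hg hh) (H.inv_mem hg)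
  · exact hH _ _ (fun h1 => hg (by simpa using H.mul_mem h1 (H.inv_mem hh)))
      (fun h1 => hg (by simpa using H.inv_mem h1))

/-- A symmetric matrix commuting with a subgroup of index at most two is scalar: it has at most
two conjugates, whose sum is invariant and hence scalar, so they commute and `PropD` applies. -/
lemma PropD.comm (hD : PropD ρ) (hρ : FreeRep ρ) {H : Subgroup Γ} (hH : Ix2 H) (s : Mat)
    (hs : s.transpose = s) (hc : ∀ h ∈ H, Commute s (ρ h)) : ∃ c : ℝ, s = c • 1 := by
  have hfix : ∀ h ∈ H, ρ h * s * ρ h⁻¹ = s := fun h hh => by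
    rw [← (hc h hh).eq, mul_assoc, rho_mul_inv, mul_one]
  have hcj : ∀ g h : Γ, ρ (g * h) * s * ρ (g * h)⁻¹ = ρ g * (ρ h * s * ρ h⁻¹) * ρ g⁻¹ := by
    intro g h; simp only [map_mul, mul_inv_rev, mul_assoc]
  apply hD s hs
  intro g
  by_cases hg : g ∈ H
  · rw [hfix g hg]
  set s' := ρ g * s * ρ g⁻¹ with hs'
  have hout : ∀ h, h ∉ H → ρ h * s * ρ h⁻¹ = s' := by
    intro h hh
    have hm : g⁻¹ * h ∈ H := hH _ _ (fun h1 => hg (by simpa using H.inv_mem h1)) hh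
    have := hcj g (g⁻¹ * h)
    rw [hfix _ hm, mul_inv_cancel_left] at this
    exact this
  have ht : ∃ c : ℝ, s + s' = c • 1 := by
    apply hD
    · simp only [hs', Matrix.transpose_add, Matrix.transpose_mul, hs, hρ.orth,
        Matrix.transpose_transpose, mul_assoc]
    · intro h
      have : ρ h * (s + s') * ρ h⁻¹ = s + s' := by
        rw [mul_add, add_mul, hs', ← hcj]
        by_cases hh : h ∈ H
        · rw [hfix h hh, hout (h * g)]
          intro h1; exact hg (by simpa using H.mul_mem (H.inv_mem hh) h1)
        · rw [hout h hh, hfix (h * g) (hH _ _ hh hg), add_comm]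
      rw [this]
  obtain ⟨c, hc'⟩ := ht
  have : s' = c • 1 - s := by rw [← hc']; abel
  rw [this]
  exact ((Commute.one_right s).smul_right c).sub_right (Commute.refl s)

/-- If `B` is an abelian normal subgroup, then `k + k⁻¹` is scalar for each `k ∈ B`, so that every
conjugate of `k` is `k` or `k⁻¹`. -/
lemma PropD.conj_eq (hD : PropD ρ) (hρ : FreeRep ρ) (B : Subgroup Γ) [B.Normal]
    (hB : ∀ a ∈ B, ∀ b ∈ B, a * b = b * a) {k : Γ} (hk : k ∈ B) (g : Γ) :
    g * k * g⁻¹ = k ∨ g * k * g⁻¹ = k⁻¹ := by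
  have hN : B.Normal := inferInstance
  have hcj : ∀ g : Γ, ρ g * (ρ k + ρ k⁻¹) * ρ g⁻¹ = ρ (g * k * g⁻¹) + ρ (g * k * g⁻¹)⁻¹ := by
    intro g; simp only [map_mul, mul_inv_rev, mul_add, add_mul, mul_assoc, inv_inv]
  have hcom : ∀ a ∈ B, ∀ b ∈ B, Commute (ρ a) (ρ b) := fun a ha b hb => by
    rw [Commute, SemiconjBy, ← map_mul, hB a ha b hb, map_mul]
  obtain ⟨c, hc⟩ := hD (ρ k + ρ k⁻¹) (by rw [hρ.orth]; simp [add_comm]) (fun g => by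
    rw [hcj]
    have h1 := hN.conj_mem k hk g
    have h2 := B.inv_mem h1
    have h3 := B.inv_mem hk
    exact ((hcom _ hk _ h1).add_left (hcom _ h3 _ h1)).add_right
      ((hcom _ hk _ h2).add_left (hcom _ h3 _ h2)))
  have h1 := hcj g
  rw [hc] at h1
  have h2 : ρ g * (c • 1) * ρ g⁻¹ = c • (1 : Mat) := by simp [rho_mul_inv]
  rw [h2, ← hc] at h1
  set k' := g * k * g⁻¹ with hk'
  have hk'B : k' ∈ B := hN.conj_mem k hk g
  by_contra hno
  push Not at hno
  have u1 := hρ.isUnit_sub hno.1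
  have e : (ρ k' - ρ k) * (ρ k' - ρ k⁻¹) = 0 := by
    have c1 := (hcom _ hk'B _ hk).eq
    have c3 : ρ k * ρ k⁻¹ = 1 := rho_mul_inv k
    have c4 : ρ k' * ρ k'⁻¹ = 1 := rho_mul_inv k'
    have : ρ k' * (ρ k + ρ k⁻¹) = ρ k' * ρ k' + 1 := by rw [h1, mul_add, c4]
    rw [mul_add] at this
    calc (ρ k' - ρ k) * (ρ k' - ρ k⁻¹) = ρ k' * ρ k' - ρ k' * ρ k⁻¹ - ρ k * ρ k' + ρ k * ρ k⁻¹ := by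
          noncomm_ring
      _ = (ρ k' * ρ k' + 1) - (ρ k' * ρ k + ρ k' * ρ k⁻¹) := by rw [c3, c1]; abel
      _ = 0 := by rw [this, sub_self]
  have := (u1.mul_right_eq_zero).1 e
  exact hno.2 (hρ.inj (sub_eq_zero.1 this))

/-- A generator of a cyclic normal subgroup is conjugate only to itself and its inverse, so the
centralizer of the subgroup has index at most two. -/
lemma Ix2_of_cyclic (hD : PropD ρ) (hρ : FreeRep ρ) (B : Subgroup Γ) [B.Normal] (hB : IsCyclic B) :
    Ix2 (Subgroup.centralizer (B : Set Γ)) := by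
  obtain ⟨⟨k, hk⟩, hgen⟩ := hB
  have hgen' : ∀ b ∈ B, ∃ n : ℤ, k ^ n = b := by
    intro b hb
    obtain ⟨n, hn⟩ := Subgroup.mem_zpowers_iff.1 (hgen ⟨b, hb⟩)
    exact ⟨n, by simpa using congrArg Subtype.val hn⟩
  have hcomm : ∀ a ∈ B, ∀ b ∈ B, a * b = b * a := by
    intro a ha b hb
    obtain ⟨m, rfl⟩ := hgen' a ha
    obtain ⟨n, rfl⟩ := hgen' b hb
    rw [← zpow_add, ← zpow_add, add_comm]
  have hmem : ∀ g, g ∈ Subgroup.centralizer (B : Set Γ) ↔ g * k * g⁻¹ = k := by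
    intro g
    rw [Subgroup.mem_centralizer_iff]
    constructor
    · intro h; rw [← h k hk]; simp
    · intro h b hb
      obtain ⟨n, rfl⟩ := hgen' b hb
      have : Commute g k := mul_inv_eq_iff_eq_mul.1 h
      exact ((this.zpow_right n).eq).symm
  intro g h hg hh
  rw [hmem] at hg hh ⊢
  have h1 := (hD.conj_eq hρ B hcomm hk g).resolve_left hg
  have h2 := (hD.conj_eq hρ B hcomm hk h).resolve_left hh
  calc g * h * k * (g * h)⁻¹ = g * (h * k * h⁻¹) * g⁻¹ := by group
    _ = (g * k * g⁻¹)⁻¹ := by rw [h2]; group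
    _ = k := by rw [h1, inv_inv]

lemma vecMulVec_conj (m : Mat) (a b : Fin 8 → ℝ) :
    m * Matrix.vecMulVec a b * m.transpose = Matrix.vecMulVec (m.mulVec a) (m.mulVec b) := by
  rw [Matrix.mul_vecMulVec, Matrix.vecMulVec_mul, Matrix.vecMul_transpose]

/-- A sum of fewer than eight rank-one projections cannot commute with a subgroup of index at most
two: it would be a scalar matrix. -/
lemma rank_contra (hD : PropD ρ) (hρ : FreeRep ρ) {H : Subgroup Γ} (hH : Ix2 H) {k : ℕ} (hk : k < 8)
    (v : Fin k → Fin 8 → ℝ) (i₀ : Fin k) (hv : v i₀ ≠ 0)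
    (hc : ∀ h ∈ H, Commute (∑ i, Matrix.vecMulVec (v i) (v i)) (ρ h)) : False := by
  set P : Mat := ∑ i, Matrix.vecMulVec (v i) (v i) with hP
  obtain ⟨c, hc⟩ := hD.comm hρ hH P (by simp [hP, Matrix.transpose_sum, Matrix.transpose_vecMulVec]) hc
  have hPw : ∀ w, P.mulVec w = ∑ i, (v i ⬝ᵥ w) • v i := by
    intro w
    simp only [hP, Matrix.sum_mulVec, Matrix.vecMulVec_mulVec]
    exact Finset.sum_congr rfl fun i _ => by ext j; simp [mul_comm]
  obtain ⟨w, hw, hw0⟩ : ∃ w : Fin 8 → ℝ, w ≠ 0 ∧ ∀ i, v i ⬝ᵥ w = 0 := by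
    have hlt : Module.finrank ℝ (Fin k → ℝ) < Module.finrank ℝ (Fin 8 → ℝ) := by simpa using hk
    have := LinearMap.ker_ne_bot_of_finrank_lt (f := Matrix.mulVecLin (Matrix.of v)) hlt
    obtain ⟨w, hw, hw0⟩ := (Submodule.ne_bot_iff _).1 this
    refine ⟨w, hw0, fun i => ?_⟩
    rw [LinearMap.mem_ker] at hw
    exact congrFun hw i
  have h1 : P.mulVec w = 0 := by rw [hPw]; simp [hw0]
  rw [hc, Matrix.smul_mulVec, Matrix.one_mulVec] at h1
  have hc0 : c = 0 := by simpa [hw] using h1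
  have h2 : v i₀ ⬝ᵥ P.mulVec (v i₀) = 0 := by rw [hc, hc0]; simp
  rw [hPw, dotProduct_sum] at h2
  simp only [dotProduct_smul, smul_eq_mul] at h2
  have h3 := (Finset.sum_eq_zero_iff_of_nonneg (fun i _ => by
    rw [dotProduct_comm (v i₀)]; exact mul_self_nonneg _)).1 h2 i₀ (Finset.mem_univ _)
  have h4 : v i₀ ⬝ᵥ v i₀ = 0 := by simpa using h3
  exact hv (dotProduct_self_eq_zero.1 h4)

lemma eq_zero_of_transpose_mul {m : Mat} (h : m.transpose * m = 0) : m = 0 := by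
  have := Matrix.conjTranspose_mul_self_eq_zero (A := m)
  rw [Matrix.conjTranspose_eq_transpose_of_trivial] at this
  exact this.1 h

lemma sq_scalar_nonneg {e : Mat} (he : e.transpose = -e) {l : ℝ} (h : e * e = l • 1) : l ≤ 0 := by
  have h1 := congrFun (congrFun h 0) 0
  rw [Matrix.mul_apply] at h1
  have h2 : ∀ i j, e j i = - e i j := fun i j => congrFun (congrFun he i) j
  have : ∑ j, e 0 j * e j 0 = - ∑ j, e 0 j ^ 2 := by
    rw [← Finset.sum_neg_distrib]; exact Finset.sum_congr rfl fun j _ => by rw [h2 0 j]; ring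
  rw [this] at h1
  have h3 : 0 ≤ ∑ j, e 0 j ^ 2 := Finset.sum_nonneg fun j _ => sq_nonneg _
  simp at h1
  linarith

/-- Let a commuting, transpose-closed family of matrices be such that `c + cᵀ` and
`(c - cᵀ)(d - dᵀ)` are scalar whenever symmetric. Then it consists of scalars, or lies in `ℝ + ℝ ι` for a
complex structure `ι`. -/
lemma exists_complex_structure (𝒞 : Set Mat) (hcomm : ∀ c ∈ 𝒞, ∀ d ∈ 𝒞, Commute c d)
    (htr : ∀ c ∈ 𝒞, c.transpose ∈ 𝒞)
    (hsc : ∀ s : Mat, s.transpose = s → (∃ c ∈ 𝒞, ∃ d ∈ 𝒞, s = c + c.transpose ∨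
      s = (c - c.transpose) * (d - d.transpose)) → ∃ l : ℝ, s = l • 1) :
    (∀ c ∈ 𝒞, ∃ l : ℝ, c = l • 1) ∨ ∃ c₀ ∈ 𝒞, ∃ ι : Mat, ∃ r : ℝ, ι = r • (c₀ - c₀.transpose) ∧
      ι.transpose = -ι ∧ ι * ι = -1 ∧ ∀ c ∈ 𝒞, ∃ l m : ℝ, c = l • 1 + m • ι := by
  have hskew : ∀ c : Mat, (c - c.transpose).transpose = -(c - c.transpose) := fun c => by simp
  have hsum : ∀ c ∈ 𝒞, ∃ l : ℝ, c + c.transpose = l • 1 := fun c hc =>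
    hsc _ (by simp [add_comm]) ⟨c, hc, c, hc, Or.inl rfl⟩
  have hprod : ∀ c ∈ 𝒞, ∀ d ∈ 𝒞, ∃ l : ℝ, (c - c.transpose) * (d - d.transpose) = l • 1 := by
    intro c hc d hd
    refine hsc _ ?_ ⟨c, hc, d, hd, Or.inr rfl⟩
    rw [Matrix.transpose_mul, hskew, hskew, neg_mul_neg]
    have := ((hcomm d hd c hc).sub_right (hcomm d hd _ (htr c hc))).sub_left
      ((hcomm _ (htr d hd) c hc).sub_right (hcomm _ (htr d hd) _ (htr c hc)))
    exact this.eq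
  by_cases hall : ∀ c ∈ 𝒞, c - c.transpose = 0
  · left
    intro c hc
    obtain ⟨l, hl⟩ := hsum c hc
    refine ⟨l / 2, ?_⟩
    have h1 := hall c hc
    rw [sub_eq_zero] at h1
    rw [← h1] at hl
    have : (2 : ℝ) • c = l • 1 := by rw [two_smul, hl]
    rw [div_eq_inv_mul, mul_smul, ← this, smul_smul]; norm_num
  right
  push Not at hall
  obtain ⟨c₀, hc₀, hne⟩ := hall
  obtain ⟨l, hl⟩ := hprod c₀ hc₀ c₀ hc₀
  set e := c₀ - c₀.transpose with he
  have hl0 : l ≤ 0 := sq_scalar_nonneg (hskew c₀) hl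
  have hl1 : l ≠ 0 := by
    rintro rfl
    apply hne
    apply eq_zero_of_transpose_mul
    rw [hskew, ← he, neg_mul, hl]; simp
  have hl2 : 0 < -l := by
    rcases hl0.lt_or_eq with h | h
    · linarith
    · exact absurd h hl1
  have hr2 : Real.sqrt (-l) ^ 2 = -l := Real.sq_sqrt hl2.le
  have hr0 : Real.sqrt (-l) ≠ 0 := (Real.sqrt_pos.2 hl2).ne'
  set r := Real.sqrt (-l) with hr
  refine ⟨c₀, hc₀, r⁻¹ • e, r⁻¹, rfl, by rw [Matrix.transpose_smul, hskew, smul_neg], ?_, ?_⟩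
  · rw [smul_mul_smul_comm, hl, smul_smul, show l = -(r^2) by rw [hr2]; ring]
    rw [show r⁻¹ * r⁻¹ * -(r^2) = -1 by field_simp]; simp
  · intro c hc
    obtain ⟨m, hm⟩ := hprod c hc c₀ hc₀
    obtain ⟨p, hp⟩ := hsum c hc
    refine ⟨p / 2, m / l * r / 2, ?_⟩
    have h1 : c - c.transpose = (m / l) • e := by
      have : (c - c.transpose) * e * e = m • e := by rw [← he] at hm; rw [hm]; simp
      rw [mul_assoc, hl, mul_smul_comm, mul_one] at this
      rw [div_eq_inv_mul, mul_smul, ← this, smul_smul, inv_mul_cancel₀ hl1, one_smul]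
    have h2 : (2 : ℝ) • c = p • 1 + (m / l) • e := by rw [← hp, ← h1, two_smul]; abel
    have h3 : c = (2 : ℝ)⁻¹ • (2 : ℝ) • c := by rw [smul_smul]; norm_num
    rw [h3, h2, smul_add, smul_smul, smul_smul, smul_smul]
    congr 2 <;> field_simp

lemma ortho_comm_of_conj {m P : Mat} (hm : m.transpose = -m) (h1 : m * m = -1)
    (h : m * P * m.transpose = P) : Commute P m := by
  rw [hm] at h
  rw [Commute, SemiconjBy]
  conv_lhs => rw [← h]
  rw [mul_neg, neg_mul, mul_assoc, h1]; simp

/-- Abelian subgroups of index at most two cannot occur. -/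
lemma no_abelian_ix2 (hD : PropD ρ) (hρ : FreeRep ρ) {H : Subgroup Γ} (hH : Ix2 H)
    (hab : ∀ a ∈ H, ∀ b ∈ H, a * b = b * a) : False := by
  have hcom : ∀ a ∈ H, ∀ b ∈ H, Commute (ρ a) (ρ b) := fun a ha b hb => by
    rw [Commute, SemiconjBy, ← map_mul, hab a ha b hb, map_mul]
  have hcomT : ∀ a ∈ H, ∀ b ∈ H, Commute (ρ a).transpose (ρ b) := fun a ha b hb => by
    rw [← hρ.orth]; exact hcom _ (H.inv_mem ha) _ hb
  obtain h | ⟨c₀, -, ι, r, -, h1, h2, h3⟩ := exists_complex_structure (ρ '' (H : Set Γ)) (by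
      rintro _ ⟨a, ha, rfl⟩ _ ⟨b, hb, rfl⟩; exact hcom a ha b hb)
    (by rintro _ ⟨a, ha, rfl⟩; exact ⟨a⁻¹, H.inv_mem ha, hρ.orth a⟩)
    (by
      rintro s hs ⟨_, ⟨a, ha, rfl⟩, _, ⟨b, hb, rfl⟩, rfl | rfl⟩
      · exact hD.comm hρ hH _ hs fun h hh => (hcom a ha h hh).add_left (hcomT a ha h hh)
      · exact hD.comm hρ hH _ hs fun h hh => ((hcom a ha h hh).sub_left (hcomT a ha h hh)).mul_left
          ((hcom b hb h hh).sub_left (hcomT b hb h hh)))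
  · refine rank_contra hD hρ hH (k := 1) (by norm_num) (fun _ => Pi.single 0 1) 0 (by simp) ?_
    intro g hg
    obtain ⟨l, hl⟩ := h _ ⟨g, hg, rfl⟩
    rw [hl]; exact (Commute.one_right _).smul_right l
  · set v : Fin 8 → ℝ := Pi.single 0 1 with hv
    refine rank_contra hD hρ hH (k := 2) (by norm_num) ![v, ι.mulVec v] 0 (by simp [hv]) ?_
    intro g hg
    obtain ⟨l, m, hl⟩ := h3 _ ⟨g, hg, rfl⟩
    rw [hl]
    refine ((Commute.one_right _).smul_right l).add_right (Commute.smul_right ?_ m)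
    apply ortho_comm_of_conj h1 h2
    rw [Finset.mul_sum, Finset.sum_mul]
    simp only [vecMulVec_conj, Fin.sum_univ_two, Matrix.cons_val_zero, Matrix.cons_val_one, Matrix.mulVec_mulVec, h2,
      Matrix.neg_mulVec, Matrix.one_mulVec, Matrix.neg_vecMulVec, Matrix.vecMulVec_neg, neg_neg]
    rw [add_comm]

/-- A subgroup of index at most two cannot lie in `ℍ · 𝒞` with `ℍ` a quaternion algebra generated
by skew matrices `i`, `j`, and `𝒞` a commuting family centralizing it. -/
lemma no_quaternion_ix2 (hD : PropD ρ) (hρ : FreeRep ρ) {H : Subgroup Γ} (hH : Ix2 H)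
    {i j : Mat} (hi : i.transpose = -i) (hj : j.transpose = -j) (hii : i * i = -1) (hjj : j * j = -1)
    (hij : j * i = -(i * j)) (𝒞 : Set Mat) (hcomm : ∀ c ∈ 𝒞, ∀ d ∈ 𝒞, Commute c d)
    (htr : ∀ c ∈ 𝒞, c.transpose ∈ 𝒞) (hCi : ∀ c ∈ 𝒞, Commute c i) (hCj : ∀ c ∈ 𝒞, Commute c j)
    (hfac : ∀ g ∈ H, ∃ α β γ δ : ℝ, ∃ c ∈ 𝒞,
      ρ g = (α • 1 + β • i + γ • j + δ • (i * j)) * c) : False := by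
  have hCg : ∀ s : Mat, Commute s i → Commute s j → (∀ d ∈ 𝒞, Commute s d) → ∀ g ∈ H, Commute s (ρ g) := by
    intro s h1 h2 h3 g hg
    obtain ⟨α, β, γ, δ, c, hc, e⟩ := hfac g hg
    rw [e]
    refine Commute.mul_right (((((Commute.one_right _).smul_right α).add_right
      (h1.smul_right β)).add_right (h2.smul_right γ)).add_right ((h1.mul_right h2).smul_right δ)) (h3 c hc)
  -- the four vectors spanning the quaternionic line of `v`, on which `P` is supported
  have main : ∀ v : Fin 8 → ℝ, v ≠ 0 → (∀ d ∈ 𝒞, Commute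
      (∑ k, Matrix.vecMulVec (![v, i.mulVec v, j.mulVec v, (i * j).mulVec v] k)
        (![v, i.mulVec v, j.mulVec v, (i * j).mulVec v] k)) d) → False := by
    intro v hv hd
    refine rank_contra hD hρ hH (k := 4) (by norm_num)
      ![v, i.mulVec v, j.mulVec v, (i * j).mulVec v] 0 (by simpa using hv) ?_
    have e1 : i * (i * j) = -j := by rw [← mul_assoc, hii]; simp
    have e2 : j * (i * j) = i := by rw [← mul_assoc, hij, neg_mul, mul_assoc, hjj]; simp
    apply hCg _ _ _ hd
    · apply ortho_comm_of_conj hi hii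
      rw [Finset.mul_sum, Finset.sum_mul]
      simp only [vecMulVec_conj, Fin.sum_univ_four, Matrix.cons_val_zero, Matrix.cons_val_one,
        Matrix.cons_val, Matrix.mulVec_mulVec, hii, e1,
        Matrix.neg_mulVec, Matrix.one_mulVec, Matrix.neg_vecMulVec, Matrix.vecMulVec_neg, neg_neg]
      abel
    · apply ortho_comm_of_conj hj hjj
      rw [Finset.mul_sum, Finset.sum_mul]
      simp only [vecMulVec_conj, Fin.sum_univ_four, Matrix.cons_val_zero, Matrix.cons_val_one,
        Matrix.cons_val, Matrix.mulVec_mulVec, hij, hjj, e2,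
        Matrix.neg_mulVec, Matrix.one_mulVec, Matrix.neg_vecMulVec, Matrix.vecMulVec_neg, neg_neg]
      abel
  have hT : ∀ c ∈ 𝒞, ∀ d ∈ 𝒞, Commute c.transpose d := fun c hc d hd => hcomm _ (htr c hc) d hd
  obtain h | ⟨c₀, hc₀, ι, r, hιr, h1, h2, h3⟩ := exists_complex_structure 𝒞 hcomm htr
    (by
      rintro s hs ⟨c, hc, d, hd, rfl | rfl⟩
      · exact hD.comm hρ hH _ hs (hCg _ ((hCi c hc).add_left (hCi _ (htr c hc)))
          ((hCj c hc).add_left (hCj _ (htr c hc))) fun d hd => (hcomm c hc d hd).add_left (hT c hc d hd))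
      · refine hD.comm hρ hH _ hs (hCg _ ?_ ?_ fun d' hd' => ?_)
        · exact ((hCi c hc).sub_left (hCi _ (htr c hc))).mul_left ((hCi d hd).sub_left (hCi _ (htr d hd)))
        · exact ((hCj c hc).sub_left (hCj _ (htr c hc))).mul_left ((hCj d hd).sub_left (hCj _ (htr d hd)))
        · exact ((hcomm c hc d' hd').sub_left (hT c hc d' hd')).mul_left
            ((hcomm d hd d' hd').sub_left (hT d hd d' hd')))
  · refine main (Pi.single 0 1) (by simp) fun d hd => ?_
    obtain ⟨l, hl⟩ := h _ hd
    rw [hl]; exact (Commute.one_right _).smul_right l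
  · have hιi : Commute ι i := by
      rw [hιr]; exact ((hCi c₀ hc₀).sub_left (hCi _ (htr c₀ hc₀))).smul_left r
    have hιj : Commute ι j := by
      rw [hιr]; exact ((hCj c₀ hc₀).sub_left (hCj _ (htr c₀ hc₀))).smul_left r
    -- `ι` preserves the complex line of `v` with respect to `i`
    obtain ⟨v, hv, ε, hε, hvε⟩ : ∃ v : Fin 8 → ℝ, v ≠ 0 ∧ ∃ ε : ℝ, ε * ε = 1 ∧
        ι.mulVec v = ε • i.mulVec v := by
      by_cases hw : ∃ w, (1 + i * ι).mulVec w ≠ 0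
      · obtain ⟨w, hw⟩ := hw
        refine ⟨_, hw, -1, by norm_num, ?_⟩
        rw [Matrix.mulVec_mulVec, Matrix.mulVec_mulVec, neg_one_smul, ← Matrix.neg_mulVec]
        congr 1
        rw [mul_add, mul_add, ← mul_assoc, hιi.eq, mul_assoc, h2, ← mul_assoc, hii]
        noncomm_ring
      · push Not at hw
        refine ⟨Pi.single 0 1, by simp, 1, by norm_num, ?_⟩
        have : 1 + i * ι = 0 := mat_ext_mulVec fun w => by rw [hw w]; simp
        have h5 : i * (1 + i * ι) = 0 := by rw [this, mul_zero]
        rw [mul_add, ← mul_assoc, hii] at h5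
        have : i = ι := by
          rw [mul_one, neg_one_mul, ← sub_eq_add_neg, sub_eq_zero] at h5; exact h5
        rw [one_smul, this]
    refine main v hv fun d hd => ?_
    obtain ⟨l, m, hl⟩ := h3 _ hd
    rw [hl]
    refine ((Commute.one_right _).smul_right l).add_right (Commute.smul_right ?_ m)
    apply ortho_comm_of_conj h1 h2
    have e0 : ∀ q : Mat, Commute ι q → ι.mulVec (q.mulVec v) = ε • (q * i).mulVec v := by
      intro q hq
      rw [Matrix.mulVec_mulVec, hq.eq, ← Matrix.mulVec_mulVec, hvε, Matrix.mulVec_smul, Matrix.mulVec_mulVec]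
    have e4 : i * j * i = j := by rw [mul_assoc, hij, mul_neg, ← mul_assoc, hii]; simp
    rw [Finset.mul_sum, Finset.sum_mul]
    simp only [vecMulVec_conj, Fin.sum_univ_four, Matrix.cons_val_zero, Matrix.cons_val_one,
        Matrix.cons_val, e0 _ hιi, e0 _ hιj, e0 _ (hιi.mul_right hιj), hvε, hii, hij, e4,
        Matrix.neg_mulVec, Matrix.one_mulVec, Matrix.neg_vecMulVec, Matrix.vecMulVec_neg, neg_neg,
        Matrix.smul_vecMulVec, Matrix.vecMulVec_smul, smul_smul, hε, one_smul, smul_neg]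
    abel

end

/-! ### Eigenvalues, cyclicity and sums of roots of unity -/

/-- Complex `8 × 8` matrices. -/
abbrev CMat := Matrix (Fin 8) (Fin 8) ℂ

/-- Commuting complex matrices have a common eigenvector. -/
lemma common_eigenvector {ι : Type*} (f : ι → CMat) (hc : ∀ i j, Commute (f i) (f j)) :
    ∃ v : Fin 8 → ℂ, v ≠ 0 ∧ ∀ i, ∃ c : ℂ, (f i).mulVec v = c • v := by
  have key : ∀ n : ℕ, ∀ W : Submodule ℂ (Fin 8 → ℂ), Module.finrank ℂ W = n → W ≠ ⊥ →
      (∀ i, ∀ w ∈ W, (f i).mulVec w ∈ W) →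
      ∃ v : Fin 8 → ℂ, v ≠ 0 ∧ ∀ i, ∃ c : ℂ, (f i).mulVec v = c • v := by
    intro n
    induction n using Nat.strong_induction_on with
    | _ n ih =>
    intro W hn hW hinv
    by_cases hall : ∀ i, ∃ c : ℂ, ∀ w ∈ W, (f i).mulVec w = c • w
    · obtain ⟨v, hv, hv0⟩ := (Submodule.ne_bot_iff _).1 hW
      exact ⟨v, hv0, fun i => (hall i).imp fun c h => h v hv⟩
    push Not at hall
    obtain ⟨i, hi⟩ := hall
    have : Nontrivial W := Submodule.nontrivial_iff_ne_bot.2 hW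
    obtain ⟨μ, hμ⟩ := Module.End.exists_eigenvalue
      (((f i).mulVecLin.restrict (p := W) (q := W) (fun w hw => hinv i w hw)) : Module.End ℂ W)
    obtain ⟨w, hw⟩ := hμ.exists_hasEigenvector
    have hw1 : (f i).mulVec (w : Fin 8 → ℂ) = μ • (w : Fin 8 → ℂ) := congrArg Subtype.val hw.apply_eq_smul
    have hw0 : (w : Fin 8 → ℂ) ≠ 0 := fun h => hw.2 (Subtype.ext h)
    set W' : Submodule ℂ (Fin 8 → ℂ) := W ⊓ Module.End.eigenspace (f i).mulVecLin μ with hW'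
    have hmem : ∀ w, w ∈ W' ↔ w ∈ W ∧ (f i).mulVec w = μ • w := fun w => by
      rw [hW', Submodule.mem_inf, Module.End.mem_eigenspace_iff]; rfl
    obtain ⟨u, hu, hu'⟩ := hi μ
    have hlt : W' < W := lt_of_le_of_ne inf_le_left fun h => by
      rw [← h] at hu; exact hu' ((hmem u).1 hu).2
    refine ih _ (hn ▸ Submodule.finrank_lt_finrank_of_lt hlt) W' rfl
      ((Submodule.ne_bot_iff _).2 ⟨w, (hmem _).2 ⟨w.2, hw1⟩, hw0⟩) ?_
    intro j w hw
    rw [hmem] at hw ⊢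
    refine ⟨hinv j w hw.1, ?_⟩
    rw [Matrix.mulVec_mulVec, (hc i j).eq, ← Matrix.mulVec_mulVec, hw.2, Matrix.mulVec_smul]
  exact key _ ⊤ rfl (by simp) (by simp)

section
variable {Γ : Type*} [Group Γ] {ρ : Γ →* Mat}

/-- The complexified representation. -/
noncomputable def cx (ρ : Γ →* Mat) : Γ →* CMat :=
  ((algebraMap ℝ ℂ).mapMatrix (m := Fin 8)).toMonoidHom.comp ρ

lemma cx_apply (g : Γ) : cx ρ g = (algebraMap ℝ ℂ).mapMatrix (ρ g) := rfl

lemma FreeRep.cx_free (hρ : FreeRep ρ) {g : Γ} {v : Fin 8 → ℂ} (h : (cx ρ g).mulVec v = v)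
    (hv : v ≠ 0) : g = 1 := by
  by_contra hg
  have h1 := (hρ.isUnit_sub_one hg).map ((algebraMap ℝ ℂ).mapMatrix (m := Fin 8))
  rw [map_sub, ← cx_apply, map_one, Matrix.isUnit_iff_isUnit_det, isUnit_iff_ne_zero] at h1
  apply h1
  rw [← Matrix.exists_mulVec_eq_zero_iff]
  exact ⟨v, hv, by rw [Matrix.sub_mulVec, h, Matrix.one_mulVec, sub_self]⟩

lemma smul_cancel_vec {v : Fin 8 → ℂ} (hv : v ≠ 0) {a b : ℂ} (h : a • v = b • v) : a = b := by
  by_contra hne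
  have : (a - b) • v = 0 := by rw [sub_smul, h, sub_self]
  rcases smul_eq_zero.1 this with h | h
  · exact hne (sub_eq_zero.1 h)
  · exact hv h

/-- An abelian group acting freely is cyclic: by freeness its character on a common eigenvector is
faithful. -/
lemma FreeRep.isCyclic [Finite Γ] (hρ : FreeRep ρ) (hab : ∀ a b : Γ, a * b = b * a) : IsCyclic Γ := by
  obtain ⟨v, hv, h⟩ := common_eigenvector (fun g => cx ρ g) (fun a b => by
    rw [Commute, SemiconjBy, ← map_mul, hab, map_mul])
  choose c hc using h
  let χ : Γ →* ℂ :=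
    { toFun := c
      map_one' := smul_cancel_vec hv (by rw [← hc]; simp)
      map_mul' := fun a b => smul_cancel_vec hv (by
        rw [← hc, map_mul, ← Matrix.mulVec_mulVec, hc b, Matrix.mulVec_smul, hc a, smul_smul, mul_comm]) }
  apply isCyclic_of_injective_ringHom χ
  rw [injective_iff_map_eq_one]
  intro g hg
  refine hρ.cx_free (v := v) ?_ hv
  rw [hc g]
  change χ g • v = v
  rw [hg, one_smul]

lemma FreeRep.isCyclic_subgroup [Finite Γ] (hρ : FreeRep ρ) (H : Subgroup Γ)
    (hab : ∀ a ∈ H, ∀ b ∈ H, a * b = b * a) : IsCyclic H :=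
  (hρ.comp H).isCyclic fun a b => Subtype.ext (hab a a.2 b b.2)

end

/-- Galois conjugation of `ζ + ζ⁻¹ + η + η⁻¹ = 1`: every primitive `n`-th root of unity has real
part at least `-1/2`. -/
lemma re_ge_of_root_relation {n N : ℕ} (hN : N ≠ 0) (hnN : n ∣ N) {ζ η : ℂ} (hζ : IsPrimitiveRoot ζ n)
    (hη : η ^ N = 1) (hrel : ζ + ζ⁻¹ + η + η⁻¹ = 1) {k : ℕ} (hk : k.Coprime n) :
    -(1/2) ≤ (ζ ^ k).re := by
  have : NeZero N := ⟨hN⟩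
  obtain ⟨k', hk'⟩ := ZMod.unitsMap_surjective hnN (ZMod.unitOfCoprime k hk)
  set K : ℕ := (k' : ZMod N).val with hKdef
  have hKN : K.Coprime N := ZMod.val_coe_unit_coprime k'
  have hKn : (K : ZMod n) = k := by
    have := congrArg (fun u : (ZMod n)ˣ => (u : ZMod n)) hk'
    simp only [ZMod.unitsMap_val, ZMod.coe_unitOfCoprime] at this
    rw [← this, hKdef, ZMod.natCast_val]
  have hζK : ζ ^ K = ζ ^ k := by
    rw [ZMod.natCast_eq_natCast_iff] at hKn
    exact pow_eq_pow_of_modEq hKn hζ.pow_eq_one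
  have hω := Complex.isPrimitiveRoot_exp N hN
  set ω := Complex.exp (2 * Real.pi * Complex.I / N) with hωdef
  have hζN : ζ ^ N = 1 := by obtain ⟨d, rfl⟩ := hnN; rw [pow_mul, hζ.pow_eq_one, one_pow]
  obtain ⟨a, -, ha⟩ := hω.eq_pow_of_pow_eq_one hζN
  obtain ⟨b, -, hb⟩ := hω.eq_pow_of_pow_eq_one hη
  have hinv : ∀ z : ℂ, z ^ N = 1 → z⁻¹ = z ^ (N - 1) := by
    intro z hz
    apply inv_eq_of_mul_eq_one_left
    rw [← pow_succ, Nat.sub_add_cancel (Nat.pos_of_ne_zero hN), hz]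
  let P : Polynomial ℤ := Polynomial.X ^ a + Polynomial.X ^ (a * (N - 1)) + Polynomial.X ^ b +
    Polynomial.X ^ (b * (N - 1)) - 1
  have hP : ∀ z : ℂ, Polynomial.aeval z P = z ^ a + z ^ (a * (N - 1)) + z ^ b + z ^ (b * (N - 1)) - 1 := by
    intro z; simp [P]
  have hP0 : Polynomial.aeval ω P = 0 := by
    rw [hP, pow_mul, pow_mul, ha, hb, ← hinv _ hζN, ← hinv _ hη, hrel, sub_self]
  have hIntegral : IsIntegral ℤ ω := hω.isIntegral (Nat.pos_of_ne_zero hN)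
  have hdvd : minpoly ℤ ω ∣ P := minpoly.isIntegrallyClosed_dvd hIntegral hP0
  have hP1 : Polynomial.aeval (ω ^ K) P = 0 := by
    obtain ⟨Q, hQ⟩ := hdvd
    rw [hQ, hω.minpoly_eq_pow_coprime hKN, map_mul, minpoly.aeval, zero_mul]
  rw [hP, pow_mul (ω ^ K), pow_mul (ω ^ K), ← pow_mul ω K a, ← pow_mul ω K b, mul_comm K a, mul_comm K b,
    pow_mul ω a, pow_mul ω b, ha, hb,
    ← hinv (ζ ^ K) (by rw [← pow_mul, mul_comm, pow_mul, hζN, one_pow]),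
    ← hinv (η ^ K) (by rw [← pow_mul, mul_comm, pow_mul, hη, one_pow]), hζK] at hP1
  have nrm : ∀ z : ℂ, z ^ N = 1 → z.re ≤ 1 ∧ (z⁻¹).re = z.re := by
    intro z hz
    have h1 : ‖z‖ = 1 := Complex.norm_eq_one_of_pow_eq_one hz hN
    refine ⟨h1 ▸ Complex.re_le_norm z, ?_⟩
    rw [Complex.inv_re, Complex.normSq_eq_norm_sq, h1]; simp
  obtain ⟨-, e1⟩ := nrm (ζ ^ k) (by rw [← pow_mul, mul_comm, pow_mul, hζN, one_pow])
  obtain ⟨e2, e3⟩ := nrm (η ^ K) (by rw [← pow_mul, mul_comm, pow_mul, hη, one_pow])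
  have := congrArg Complex.re hP1
  simp only [Complex.add_re, Complex.sub_re, Complex.one_re, Complex.zero_re, e1, e3] at this
  linarith

/-- The orders `n` for which no primitive `n`-th root of unity has real part less than `-1/2`. -/
lemma order_cases {n : ℕ} (hn : n ≠ 0) (h : ∀ z : ℂ, IsPrimitiveRoot z n → -(1/2) ≤ z.re) :
    n = 1 ∨ n = 3 ∨ n = 4 ∨ n = 6 ∨ n = 10 := by
  have hcos : ∀ k : ℕ, k.Coprime n → -(1/2) ≤ Real.cos (2 * Real.pi * (k / n)) := by
    intro k hk
    have e : (2 * (Real.pi : ℂ) * Complex.I * (k / n)) = ((2 * Real.pi * (k / n) : ℝ) : ℂ) * Complex.I := by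
      push_cast; ring
    have h2 := h _ (Complex.isPrimitiveRoot_exp_of_coprime k n hn hk)
    rw [e, Complex.exp_ofReal_mul_I_re] at h2
    linarith
  have hnpos : (0 : ℝ) < n := by exact_mod_cast Nat.pos_of_ne_zero hn
  -- an angle `π - δ` with `0 ≤ δ < π/3` is excluded
  have hex : ∀ (k j : ℕ), k.Coprime n → 2 * k + j = n → 3 * j < n → False := by
    intro k j hk hj hlt
    have h1 := hcos k hk
    have e : 2 * Real.pi * ((k : ℝ) / n) = Real.pi - Real.pi * j / n := by
      have : (n : ℝ) = 2 * k + j := by exact_mod_cast hj.symm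
      field_simp; rw [this]; ring
    rw [e, Real.cos_pi_sub] at h1
    have hlt' : (3 * j : ℝ) < n := by exact_mod_cast hlt
    have hd : Real.pi * j / n < Real.pi / 3 := by
      rw [div_lt_div_iff₀ hnpos (by norm_num)]
      nlinarith [Real.pi_pos]
    have : Real.cos (Real.pi / 3) < Real.cos (Real.pi * j / n) :=
      Real.cos_lt_cos_of_nonneg_of_le_pi (by positivity) (by linarith [Real.pi_pos]) hd
    rw [Real.cos_pi_div_three] at this
    linarith
  rcases Nat.even_or_odd' n with ⟨m, hm | hm⟩
  · rcases Nat.even_or_odd' m with ⟨q, hq | hq⟩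
    · by_cases h6 : 6 < n
      · exfalso
        refine hex (2 * q - 1) 2 ?_ (by omega) (by omega)
        have h2 : Nat.Coprime (2 * q - 1) 4 := by
          have : Odd (2 * q - 1) := ⟨q - 1, by omega⟩
          rw [show 4 = 2 ^ 2 by norm_num]
          exact (Nat.coprime_two_right.2 this).pow_right 2
        have h3 : Nat.Coprime (2 * q - 1) q := by
          have : Nat.Coprime (2 * q - 1) (2 * q) := by
            have := Nat.coprime_self_add_right (m := 2 * q - 1) (n := 1)
            rw [Nat.sub_add_cancel (by omega)] at this; exact this.2 (Nat.coprime_one_right _)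
          exact this.coprime_dvd_right ⟨2, by ring⟩
        rw [show n = 4 * q by omega]
        exact h2.mul_right h3
      · omega
    · by_cases h12 : 12 < n
      · exfalso
        refine hex (2 * q - 1) 4 ?_ (by omega) (by omega)
        rw [show n = 4 + 2 * (2 * q - 1) by omega]
        rw [Nat.coprime_add_mul_right_right]
        have : Odd (2 * q - 1) := ⟨q - 1, by omega⟩
        rw [show 4 = 2 ^ 2 by norm_num]
        exact (Nat.coprime_two_right.2 this).pow_right 2
      · by_cases h2 : n = 2
        · exfalso
          subst h2
          have := h (-1) (IsPrimitiveRoot.neg_one 0 (by norm_num))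
          norm_num at this
        · omega
  · by_cases h3 : 3 < n
    · exfalso
      refine hex m 1 ?_ (by omega) (by omega)
      rw [hm, show 2 * m + 1 = 1 + 2 * m by ring, Nat.coprime_add_mul_right_right]
      exact Nat.coprime_one_right _
    · omega

section
variable {Γ : Type*} [Group Γ] {ρ : Γ →* Mat}

/-- The relation `g + g⁻¹ + h + h⁻¹ = 1` bounds the real parts of the eigenvalues of `g`, and of
their Galois conjugates, from below by `-1/2`. -/
lemma FreeRep.order_of_sum_eq_one [Finite Γ] (hρ : FreeRep ρ) {g h : Γ}
    (hs : ρ g + ρ g⁻¹ + ρ h + ρ h⁻¹ = 1) :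
    orderOf g = 1 ∨ orderOf g = 3 ∨ orderOf g = 4 ∨ orderOf g = 6 ∨ orderOf g = 10 := by
  obtain ⟨v, hv, hζ⟩ := common_eigenvector (fun _ : Unit => cx ρ g) (fun _ _ => Commute.refl _)
  obtain ⟨ζ, hζ⟩ := hζ ()
  have hpow : ∀ (g : Γ) (ζ : ℂ) (v : Fin 8 → ℂ), (cx ρ g).mulVec v = ζ • v →
      ∀ k : ℕ, (cx ρ (g ^ k)).mulVec v = ζ ^ k • v := by
    intro g ζ v hζ k
    induction k with
    | zero => simp
    | succ k ih => rw [pow_succ', map_mul, ← Matrix.mulVec_mulVec, ih, Matrix.mulVec_smul, hζ, smul_smul, pow_succ]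
  have hz1 : ∀ (g : Γ) (ζ : ℂ) (v : Fin 8 → ℂ), v ≠ 0 → (cx ρ g).mulVec v = ζ • v →
      ζ ^ orderOf g = 1 := by
    intro g ζ v hv hζ
    apply smul_cancel_vec hv
    rw [← hpow g ζ v hζ, pow_orderOf_eq_one]; simp
  have hprim : IsPrimitiveRoot ζ (orderOf g) := by
    refine ⟨hz1 g ζ v hv hζ, fun l hl => ?_⟩
    rw [orderOf_dvd_iff_pow_eq_one]
    refine hρ.cx_free (v := v) ?_ hv
    rw [hpow g ζ v hζ, hl, one_smul]
  have hn : orderOf g ≠ 0 := (orderOf_pos g).ne'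
  have hζ0 : ζ ≠ 0 := hprim.ne_zero hn
  have hinvv : (cx ρ g⁻¹).mulVec v = ζ⁻¹ • v := by
    have h1 : (cx ρ g⁻¹).mulVec ((cx ρ g).mulVec v) = v := by
      rw [Matrix.mulVec_mulVec, ← map_mul]; simp
    rw [hζ, Matrix.mulVec_smul] at h1
    conv_rhs => rw [← h1]
    rw [smul_smul, inv_mul_cancel₀ hζ0, one_smul]
  have hcs : cx ρ g + cx ρ g⁻¹ + cx ρ h + cx ρ h⁻¹ = 1 := by
    simp only [cx_apply, ← map_add, hs, map_one]
  have ht : (cx ρ h).mulVec v + (cx ρ h⁻¹).mulVec v = (1 - ζ - ζ⁻¹) • v := by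
    have := congrArg (fun m : CMat => m.mulVec v) hcs
    simp only [Matrix.add_mulVec, hζ, hinvv, Matrix.one_mulVec] at this
    rw [sub_smul, sub_smul, one_smul, eq_sub_iff_add_eq, eq_sub_iff_add_eq]
    refine Eq.trans ?_ this
    abel
  obtain ⟨η, hη⟩ : ∃ η : ℂ, η * η - (1 - ζ - ζ⁻¹) * η + 1 = 0 := by
    obtain ⟨s, hs⟩ := IsAlgClosed.exists_pow_nat_eq ((1 - ζ - ζ⁻¹) ^ 2 - 4) (n := 2) (by norm_num)
    refine ⟨((1 - ζ - ζ⁻¹) + s) / 2, ?_⟩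
    linear_combination (1/4) * hs
  have hη0 : η ≠ 0 := by rintro rfl; simp at hη
  have hηt : η + η⁻¹ = 1 - ζ - ζ⁻¹ := by field_simp; field_simp at hη; linear_combination hη
  -- `h` has eigenvalue `η` or `η⁻¹` on the span of `v` and `h v`
  have hηN : η ^ orderOf h = 1 := by
    set w := (cx ρ h).mulVec v - η⁻¹ • v with hw
    by_cases hw0 : w = 0
    · have := hz1 h η⁻¹ v hv (sub_eq_zero.1 hw0)
      rw [inv_pow, inv_eq_one] at this; exact this
    · apply hz1 h η w hw0
      have h2 : (cx ρ h).mulVec ((cx ρ h).mulVec v) + v = (1 - ζ - ζ⁻¹) • (cx ρ h).mulVec v := by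
        have := congrArg (fun u => (cx ρ h).mulVec u) ht
        simp only [Matrix.mulVec_add, Matrix.mulVec_smul] at this
        rw [← this, Matrix.mulVec_mulVec v (cx ρ h) (cx ρ h⁻¹), ← map_mul]; simp
      rw [hw, Matrix.mulVec_sub, Matrix.mulVec_smul, smul_sub, smul_smul, mul_inv_cancel₀ hη0, one_smul,
        eq_sub_of_add_eq h2, ← hηt, add_smul]
      abel
  refine order_cases hn fun z hz => ?_
  have : NeZero (orderOf g) := ⟨hn⟩
  obtain ⟨k, -, hk, rfl⟩ := (hprim.isPrimitiveRoot_iff).1 hz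
  refine re_ge_of_root_relation (N := orderOf g * orderOf h) (mul_ne_zero hn (orderOf_pos h).ne')
    (Dvd.intro _ rfl) hprim (by rw [mul_comm, pow_mul, hηN, one_pow]) ?_ hk
  linear_combination hηt

end

/-! ### Elements of order three and their anticommutators -/

section
variable {Γ : Type*} [Group Γ] {ρ : Γ →* Mat}

/-- `x = a - a⁻¹` for an element `a` of order three; such an `x` is skew with `x² = -3`. -/
def IsX (ρ : Γ →* Mat) (x : Mat) : Prop := ∃ a : Γ, a ^ 3 = 1 ∧ a ≠ 1 ∧ x = ρ a - ρ a⁻¹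

/-- The anticommutator. Two matrices `x = a - a⁻¹`, `y = b - b⁻¹` coming from elements of order three are
called adjacent when `T x y = -2`. -/
def T (x y : Mat) : Mat := x * y + y * x

lemma T_comm (x y : Mat) : T x y = T y x := by unfold T; rw [add_comm]
lemma T_neg_left (x y : Mat) : T (-x) y = -T x y := by unfold T; simp; abel
lemma T_neg_right (x y : Mat) : T x (-y) = -T x y := by unfold T; simp; abel
lemma T_add_right (x y z : Mat) : T x (y + z) = T x y + T x z := by unfold T; noncomm_ring
lemma T_smul_right (c : ℝ) (x y : Mat) : T x (c • y) = c • T x y := by unfold T; simp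

lemma FreeRep.cube (hρ : FreeRep ρ) {a : Γ} (h3 : a ^ 3 = 1) (h1 : a ≠ 1) :
    ρ a + ρ a⁻¹ = -1 := by
  have hu := hρ.isUnit_sub_one h1
  have e3 : ρ a * ρ a * ρ a = 1 := by
    rw [← map_mul, ← map_mul, show a * a * a = a ^ 3 by simp [pow_succ], h3, map_one]
  have e : (ρ a - 1) * (ρ a * ρ a + ρ a + 1) = 0 := by
    have : (ρ a - 1) * (ρ a * ρ a + ρ a + 1) = ρ a * ρ a * ρ a - 1 := by noncomm_ring
    rw [this, e3, sub_self]
  have e2 : ρ a * ρ a + ρ a + 1 = 0 := hu.mul_right_eq_zero.1 e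
  have e4 : ρ a⁻¹ = ρ a * ρ a := by
    rw [← map_mul]; congr 1
    rw [inv_eq_iff_mul_eq_one, ← mul_assoc, show a * a * a = a ^ 3 by simp [pow_succ], h3]
  rw [e4, eq_neg_iff_add_eq_zero]
  rw [← e2]; abel

/-- Since `a + a⁻¹ = -1`, the elements `a` and `a⁻¹` are recovered from `x = a - a⁻¹`. -/
lemma IsX.data (hρ : FreeRep ρ) {x : Mat} (hx : IsX ρ x) :
    ∃ a : Γ, a ^ 3 = 1 ∧ a ≠ 1 ∧ ρ a = (1/2 : ℝ) • (x - 1) ∧ ρ a⁻¹ = (1/2 : ℝ) • (-x - 1) := by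
  obtain ⟨a, h3, h1, rfl⟩ := hx
  have h := hρ.cube h3 h1
  refine ⟨a, h3, h1, ?_, ?_⟩
  · rw [sub_eq_add_neg _ (1 : Mat), ← h]; module
  · rw [sub_eq_add_neg _ (1 : Mat), ← h]; module

lemma IsX.of_data {x : Mat} {a : Γ} (h3 : a ^ 3 = 1) (h1 : a ≠ 1) (e : ρ a = (1/2 : ℝ) • (x - 1))
    (e' : ρ a⁻¹ = (1/2 : ℝ) • (-x - 1)) : IsX ρ x :=
  ⟨a, h3, h1, by rw [e, e']; module⟩

lemma IsX.neg {x : Mat} (hx : IsX ρ x) : IsX ρ (-x) := by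
  obtain ⟨a, h3, h1, rfl⟩ := hx
  exact ⟨a⁻¹, by rw [inv_pow, h3, inv_one], by simpa using h1, by simp⟩

lemma IsX.skew (hρ : FreeRep ρ) {x : Mat} (hx : IsX ρ x) : x.transpose = -x := by
  obtain ⟨a, h3, h1, rfl⟩ := hx
  have := hρ.orth a⁻¹
  rw [inv_inv] at this
  rw [Matrix.transpose_sub, ← hρ.orth, ← this]; abel

lemma IsX.sq (hρ : FreeRep ρ) {x : Mat} (hx : IsX ρ x) : x * x = (-3 : ℝ) • 1 := by
  obtain ⟨a, h3, h1, e, e'⟩ := hx.data hρ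
  have := rho_mul_inv (ρ := ρ) a
  rw [e, e'] at this
  have h : (1/2 : ℝ) • (x - 1) * (1/2 : ℝ) • (-x - 1) = (1/4 : ℝ) • (1 - x * x) := by
    simp only [smul_mul_smul_comm, sub_mul, mul_sub, mul_neg, mul_one, one_mul]; module
  rw [h] at this
  have h2 : x * x = 1 - (4 : ℝ) • ((1/4 : ℝ) • (1 - x * x)) := by module
  rw [h2, this]; module

lemma IsX.conj {x : Mat} (hx : IsX ρ x) (g : Γ) : IsX ρ (ρ g * x * ρ g⁻¹) := by
  obtain ⟨a, h3, h1, rfl⟩ := hx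
  refine ⟨g * a * g⁻¹, by rw [conj_pow, h3]; simp, by simpa using h1, ?_⟩
  simp only [mul_inv_rev, inv_inv, map_mul]; noncomm_ring

/-- Conjugation of `y` by the order three element attached to `x`. -/
lemma IsX.conjX (hρ : FreeRep ρ) {x y : Mat} (hx : IsX ρ x) (hy : IsX ρ y) :
    IsX ρ ((1/4 : ℝ) • ((1 - x) * y * (1 + x))) := by
  obtain ⟨a, h3, h1, e, e'⟩ := hx.data hρ
  have := hy.conj a
  rw [e, e'] at this
  convert this using 1
  simp only [smul_mul_assoc, mul_smul_comm, smul_smul, sub_mul, mul_sub, add_mul, mul_add, mul_neg, mul_one, one_mul]; module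

lemma skew_sq_zero {e : Mat} (he : e.transpose = -e) (h : e * e = 0) : e = 0 := by
  apply eq_zero_of_transpose_mul
  rw [he, neg_mul, h, neg_zero]

lemma IsX.eq_of_T (hρ : FreeRep ρ) {x y : Mat} (hx : IsX ρ x) (hy : IsX ρ y)
    (h : T x y = (-6 : ℝ) • 1) : y = x := by
  have : y - x = 0 := by
    apply skew_sq_zero
    · rw [Matrix.transpose_sub, hx.skew hρ, hy.skew hρ]; abel
    · have : (y - x) * (y - x) = x * x + y * y - T x y := by unfold T; noncomm_ring
      rw [this, hx.sq hρ, hy.sq hρ, h]; module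
  exact sub_eq_zero.1 this

lemma IsX.T_self (hρ : FreeRep ρ) {x : Mat} (hx : IsX ρ x) : T x x = (-6 : ℝ) • 1 := by
  unfold T; rw [hx.sq hρ]; module

lemma FreeRep.pow_half (hρ : FreeRep ρ) {g : Γ} {n : ℕ} (hn : n ≠ 0) (h : orderOf g = 2 * n) : ρ g ^ n = -1 := by
  rw [← map_pow]
  apply hρ.involution
  · rw [← pow_add, ← two_mul, ← h, pow_orderOf_eq_one]
  · intro h1
    have := Nat.le_of_dvd (Nat.pos_of_ne_zero hn) (orderOf_dvd_of_pow_eq_one h1)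
    omega

/-- The value of `u + u⁻¹` for `u = ρ g`, according to the order of `g`. -/
lemma FreeRep.sum_inv (hρ : FreeRep ρ) {g : Γ}
    (h : orderOf g = 1 ∨ orderOf g = 3 ∨ orderOf g = 4 ∨ orderOf g = 6 ∨ orderOf g = 10) :
    ρ g + ρ g⁻¹ = (2 : ℝ) • 1 ∨ ρ g + ρ g⁻¹ = (-1 : ℝ) • 1 ∨ ρ g + ρ g⁻¹ = (0 : ℝ) • 1 ∨
    ρ g + ρ g⁻¹ = (1 : ℝ) • 1 ∨ (orderOf g = 10 ∧
      (ρ g + ρ g⁻¹) * (ρ g + ρ g⁻¹) = (ρ g + ρ g⁻¹) + (1 : ℝ) • 1) := by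
  have huv := rho_mul_inv (ρ := ρ) g
  have hvu := rho_inv_mul (ρ := ρ) g
  rcases h with h | h | h | h | h
  · left
    rw [orderOf_eq_one_iff] at h; subst h; simp [two_smul]
  · right; left
    have := hρ.cube (a := g) (by rw [← h, pow_orderOf_eq_one]) (by rintro rfl; simp at h)
    rw [this]; module
  · right; right; left
    have e := hρ.pow_half (g := g) (n := 2) (by norm_num) h
    rw [pow_two] at e
    have : ρ g⁻¹ = -ρ g := by
      calc ρ g⁻¹ = -(ρ g⁻¹ * (-1)) := by simp
        _ = _ := by rw [← e, ← mul_assoc, hvu, one_mul]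
    rw [this]; simp
  · right; right; right; left
    have e := hρ.pow_half (g := g) (n := 3) (by norm_num) h
    have hu : IsUnit (ρ g - ρ (g ^ 3)) := hρ.isUnit_sub (by
      intro h1
      have : g ^ 2 = 1 := by
        have h2 : g * 1 = g * g ^ 2 := by rw [mul_one]; conv_lhs => rw [h1]
                                          group
        exact (mul_left_cancel h2).symm
      have := orderOf_dvd_of_pow_eq_one this
      rw [h] at this; omega)
    rw [map_pow, e] at hu
    have e0 : (ρ g - -1) * (ρ g * ρ g - ρ g + 1) = 0 := by
      have : (ρ g - -1) * (ρ g * ρ g - ρ g + 1) = ρ g ^ 3 + 1 := by noncomm_ring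
      rw [this, e]; simp
    have e1 := hu.mul_right_eq_zero.1 e0
    have e2 : ρ g⁻¹ * (ρ g * ρ g - ρ g + 1) = ρ g - 1 + ρ g⁻¹ := by
      rw [mul_add, mul_sub, ← mul_assoc, hvu]; simp
    rw [e1, mul_zero] at e2
    rw [one_smul, ← sub_eq_zero, e2]; abel
  · right; right; right; right
    refine ⟨h, ?_⟩
    have e := hρ.pow_half (g := g) (n := 5) (by norm_num) h
    have hu : IsUnit (ρ g - ρ (g ^ 5)) := hρ.isUnit_sub (by
      intro h1
      have : g ^ 4 = 1 := by
        have h2 : g * 1 = g * g ^ 4 := by rw [mul_one]; conv_lhs => rw [h1]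
                                          group
        exact (mul_left_cancel h2).symm
      have := orderOf_dvd_of_pow_eq_one this
      rw [h] at this; omega)
    rw [map_pow, e] at hu
    have e0 : (ρ g - -1) * (ρ g ^ 4 - ρ g ^ 3 + ρ g ^ 2 - ρ g + 1) = 0 := by
      have : (ρ g - -1) * (ρ g ^ 4 - ρ g ^ 3 + ρ g ^ 2 - ρ g + 1) = ρ g ^ 5 + 1 := by noncomm_ring
      rw [this, e]; simp
    have e1 := hu.mul_right_eq_zero.1 e0
    have hvu' : ∀ r, ρ g⁻¹ * (ρ g * r) = r := fun r => by rw [← mul_assoc, hvu, one_mul]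
    have huv' : ∀ r, ρ g * (ρ g⁻¹ * r) = r := fun r => by rw [← mul_assoc, huv, one_mul]
    have e2 : ρ g⁻¹ * (ρ g⁻¹ * (ρ g ^ 4 - ρ g ^ 3 + ρ g ^ 2 - ρ g + 1)) =
        ρ g * ρ g - ρ g + 1 - ρ g⁻¹ + ρ g⁻¹ * ρ g⁻¹ := by
      simp only [pow_succ, pow_zero, one_mul, mul_assoc, mul_add, mul_sub, hvu', hvu, mul_one]
    rw [e1, mul_zero, mul_zero] at e2
    rw [← sub_eq_zero, e2]
    simp only [mul_add, add_mul, huv, hvu, one_smul]; abel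

lemma IsX.sum_T {x y : Mat} {a b : Γ} (ha : ρ a = (1/2 : ℝ) • (x - 1)) (ha' : ρ a⁻¹ = (1/2 : ℝ) • (-x - 1))
    (hb : ρ b = (1/2 : ℝ) • (y - 1)) (hb' : ρ b⁻¹ = (1/2 : ℝ) • (-y - 1)) :
    T x y = (4 : ℝ) • (ρ (a * b) + ρ (a * b)⁻¹) - (2 : ℝ) • 1 := by
  rw [mul_inv_rev, map_mul, map_mul, ha, ha', hb, hb']
  unfold T
  simp only [smul_mul_smul_comm, sub_mul, mul_sub, mul_neg, neg_mul, mul_one, one_mul]; module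

/-- The possible anticommutators for two elements `a`, `b` of order three: the products `g = a b` and
`h = a b⁻¹` satisfy `g + g⁻¹ + h + h⁻¹ = 1`, which leaves few possible orders. -/
lemma IsX.trichotomy [Finite Γ] (hρ : FreeRep ρ) {x y : Mat} (hx : IsX ρ x) (hy : IsX ρ y) :
    y = x ∨ y = -x ∨ T x y = (-2 : ℝ) • 1 ∨ T x y = (2 : ℝ) • 1 ∨ T x y * T x y = (20 : ℝ) • 1 := by
  obtain ⟨a, -, -, ha, ha'⟩ := hx.data hρ
  obtain ⟨b, -, -, hb, hb'⟩ := hy.data hρ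
  have h1 := IsX.sum_T ha ha' hb hb'
  have h2 := IsX.sum_T (y := -y) (b := b⁻¹) ha ha' hb' (by rw [inv_inv, neg_neg, hb])
  rw [T_neg_right] at h2
  have hs : ρ (a * b) + ρ (a * b)⁻¹ + ρ (a * b⁻¹) + ρ (a * b⁻¹)⁻¹ = 1 := by
    have : (4 : ℝ) • (ρ (a * b) + ρ (a * b)⁻¹ + ρ (a * b⁻¹) + ρ (a * b⁻¹)⁻¹) = (4 : ℝ) • 1 := by
      linear_combination (norm := module) -h1 - h2
    exact smul_right_injective _ (by norm_num : (4 : ℝ) ≠ 0) this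
  rcases hρ.sum_inv (hρ.order_of_sum_eq_one hs) with h | h | h | h | ⟨-, h⟩
  · right; left
    have := hx.neg.eq_of_T hρ hy (by rw [T_neg_left, h1, h]; module)
    exact this
  · left
    exact hx.eq_of_T hρ hy (by rw [h1, h]; module)
  · right; right; left; rw [h1, h]; module
  · right; right; right; left; rw [h1, h]; module
  · right; right; right; right
    rw [h1]
    simp only [sub_mul, mul_sub, smul_mul_assoc, mul_smul_comm, one_mul, mul_one, h]; module
end

/-! ### Configurations of elements of order three -/

/-- The form of a relation `a * b = c` that rewrites inside right-associated words. -/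
lemma assoc2 {a b c : Mat} (h : a * b = c) (r : Mat) : a * (b * r) = c * r := by rw [← mul_assoc, h]

lemma swap_of_T {x y t : Mat} (h : T x y = t) : y * x = t - x * y := by
  rw [← h]; unfold T; abel

lemma smul_one_ne {a b : ℝ} (h : a ≠ b) : a • (1 : Mat) ≠ b • 1 := by
  intro e
  have := congrFun (congrFun e 0) 0
  simp at this; exact h this

lemma sq_smul_one (a : ℝ) : (a • (1 : Mat)) * (a • 1) = (a * a) • 1 := by simp [smul_smul]

/-- Conjugation of `y` by the order three element `a = (x - 1)/2` attached to `x`, whose inverse is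
`(-x - 1)/2`. -/
noncomputable def cj (x y : Mat) : Mat := (1/4 : ℝ) • ((1 - x) * y * (1 + x))

lemma cj_formula {x y t : Mat} (hx : x * x = (-3 : ℝ) • 1) (h : T x y = t) :
    cj x y = (1/2 : ℝ) • ((-1 : ℝ) • y - x * y + (1/2 : ℝ) • t - (1/2 : ℝ) • (x * t)) := by
  unfold cj
  simp only [mul_add, add_mul, mul_sub, sub_mul, mul_assoc, smul_mul_assoc, mul_smul_comm, mul_one, one_mul,
    smul_add, smul_sub, smul_smul, neg_mul, mul_neg, smul_neg, hx, assoc2 hx, swap_of_T h]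
  module

lemma cj_neg_cj {x y : Mat} (hx : x * x = (-3 : ℝ) • 1) : cj (-x) (cj x y) = y := by
  unfold cj
  simp only [mul_add, add_mul, mul_sub, sub_mul, mul_assoc, smul_mul_assoc, mul_smul_comm, mul_one, one_mul,
    smul_add, smul_sub, smul_smul, neg_mul, mul_neg, smul_neg, hx, assoc2 hx]
  module

lemma cj_cj_neg {x y : Mat} (hx : x * x = (-3 : ℝ) • 1) : cj x (cj (-x) y) = y := by
  have := cj_neg_cj (x := -x) (y := y) (by simpa using hx)
  rwa [neg_neg] at this

lemma T_cj {x y z : Mat} (hx : x * x = (-3 : ℝ) • 1) {c : ℝ} (h : T y z = c • 1) :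
    T (cj x y) (cj x z) = c • 1 := by
  have hz := swap_of_T h
  have e : T (cj x y) (cj x z) = cj x (T y z) := by
    unfold cj T
    simp only [mul_add, add_mul, mul_sub, sub_mul, mul_assoc, smul_mul_assoc, mul_smul_comm, mul_one, one_mul,
      smul_add, smul_sub, smul_smul, neg_mul, mul_neg, smul_neg, hx, assoc2 hx]
    module
  rw [e, h]; unfold cj
  simp only [mul_add, add_mul, mul_sub, sub_mul, mul_assoc, smul_mul_assoc, mul_smul_comm, mul_one, one_mul,
      smul_add, smul_sub, smul_smul, neg_mul, mul_neg, smul_neg, hx, assoc2 hx]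
  module

lemma cj_self {x : Mat} (hx : x * x = (-3 : ℝ) • 1) : cj x x = x := by
  unfold cj
  simp only [mul_add, add_mul, mul_sub, sub_mul, mul_assoc, smul_mul_assoc, mul_smul_comm, mul_one, one_mul,
      smul_add, smul_sub, smul_smul, neg_mul, mul_neg, smul_neg, hx, assoc2 hx]
  module

lemma T_cj_self {x y : Mat} (hx : x * x = (-3 : ℝ) • 1) {c : ℝ} (h : T x y = c • 1) :
    T x (cj x y) = c • 1 := by
  have := T_cj hx h
  rwa [cj_self hx] at this

lemma T_cj_neg_self {x y : Mat} (hx : x * x = (-3 : ℝ) • 1) {c : ℝ} (h : T x y = c • 1) :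
    T x (cj (-x) y) = c • 1 := by
  have := T_cj (x := -x) (by simpa using hx) (y := -x) (z := y) (c := -c) (by rw [T_neg_left, h]; module)
  rw [cj_self (by simpa using hx), T_neg_left] at this
  rw [← neg_neg (T x _), this]; module

/-- The sum of the three conjugates of `y` under the group generated by `a_x`. -/
lemma cj_sum {x y : Mat} (hx : x * x = (-3 : ℝ) • 1) {c : ℝ} (h : T x y = c • 1) :
    y + cj x y + cj (-x) y = (-c/2) • x := by
  rw [cj_formula hx h, cj_formula (x := -x) (t := (-c) • 1) (by simpa using hx) (by rw [T_neg_left, h]; module)]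
  simp only [mul_add, add_mul, mul_sub, sub_mul, mul_assoc, smul_mul_assoc, mul_smul_comm, mul_one, one_mul,
      smul_add, smul_sub, smul_smul, neg_mul, mul_neg, smul_neg]
  module

lemma commute_T_left {x y : Mat} (hx : x * x = (-3 : ℝ) • 1) : Commute (T x y) x := by
  unfold T Commute SemiconjBy
  simp only [mul_add, add_mul, mul_assoc, smul_mul_assoc, mul_smul_comm, mul_one, one_mul, hx, assoc2 hx]
  abel

lemma Commute.cj {e x y : Mat} (hx : Commute e x) (hy : Commute e y) : Commute e (cj x y) := by
  unfold FreeS7.cj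
  have h1 := Commute.one_right e
  exact (((h1.sub_right hx).mul_right hy).mul_right (h1.add_right hx)).smul_right _

/-- The trace of a square root of `20` is an integral multiple of `√5`. -/
lemma trace_of_sq {s : Mat} (hs : s * s = (20 : ℝ) • 1) : ∃ m : ℤ, s.trace = m * Real.sqrt 5 := by
  have h5 : Real.sqrt 5 * Real.sqrt 5 = 5 := Real.mul_self_sqrt (by norm_num)
  have h50 : Real.sqrt 5 ≠ 0 := by positivity
  set P : Mat := (1/2 : ℝ) • 1 + (Real.sqrt 5 / 20) • s with hP
  have hid : IsIdempotentElem (Matrix.toLin' P) := by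
    rw [IsIdempotentElem, Module.End.mul_eq_comp, ← Matrix.toLin'_mul]
    congr 1
    rw [hP]
    simp only [mul_add, add_mul, smul_mul_assoc, mul_smul_comm, mul_one, one_mul, smul_smul, smul_add, hs]
    rw [show Real.sqrt 5 / 20 * (Real.sqrt 5 / 20 * 20) = (Real.sqrt 5 * Real.sqrt 5) / 20 by ring, h5]
    module
  have htr := (LinearMap.IsIdempotentElem.isProj_range _ hid).trace
  rw [Matrix.trace_toLin'_eq, hP, Matrix.trace_add, Matrix.trace_smul, Matrix.trace_smul, Matrix.trace_one] at htr
  set n := Module.finrank ℝ ↥(LinearMap.range (Matrix.toLin' P))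
  refine ⟨4 * n - 16, ?_⟩
  simp at htr
  have : s.trace = (n - 4) * 20 / Real.sqrt 5 := by field_simp; linarith
  rw [this]; push_cast
  field_simp; nlinarith

/-- The traces of matrices of square `20` are integer multiples of `4√5`, while the trace of `-2` is
`-16`. -/
lemma no_three_opp {s s' s'' : Mat} (h : s * s = (20 : ℝ) • 1) (h' : s' * s' = (20 : ℝ) • 1)
    (h'' : s'' * s'' = (20 : ℝ) • 1) (e : s + s' + s'' = (-2 : ℝ) • 1) : False := by
  obtain ⟨m, hm⟩ := trace_of_sq h
  obtain ⟨m', hm'⟩ := trace_of_sq h'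
  obtain ⟨m'', hm''⟩ := trace_of_sq h''
  have := congrArg Matrix.trace e
  rw [Matrix.trace_add, Matrix.trace_add, hm, hm', hm'', Matrix.trace_smul, Matrix.trace_one] at this
  simp at this
  have h5 : Real.sqrt 5 * Real.sqrt 5 = 5 := Real.mul_self_sqrt (by norm_num)
  have h2 : ((m + m' + m'' : ℤ) : ℝ) * Real.sqrt 5 = -16 := by push_cast; linarith
  have h3 : ((m + m' + m'' : ℤ) : ℝ) ^ 2 * 5 = 256 := by rw [← h5]; linear_combination (((m + m' + m'' : ℤ) : ℝ) * Real.sqrt 5 - 16) * h2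
  have h4 : (m + m' + m'') ^ 2 * 5 = 256 := by exact_mod_cast h3
  omega

section
variable {Γ : Type*} [Group Γ] {ρ : Γ →* Mat}

lemma IsX.cj (hρ : FreeRep ρ) {x y : Mat} (hx : IsX ρ x) (hy : IsX ρ y) : IsX ρ (cj x y) :=
  hx.conjX hρ hy

lemma IsX.tri [Finite Γ] (hρ : FreeRep ρ) {x y : Mat} (hx : IsX ρ x) (hy : IsX ρ y) :
    T x y = (-6 : ℝ) • 1 ∨ T x y = (6 : ℝ) • 1 ∨ T x y = (-2 : ℝ) • 1 ∨ T x y = (2 : ℝ) • 1 ∨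
      T x y * T x y = (20 : ℝ) • 1 := by
  rcases hx.trichotomy hρ hy with rfl | rfl | h | h | h
  · exact .inl (hx.T_self hρ)
  · right; left; rw [T_neg_right, hx.T_self hρ]; module
  · exact .inr (.inr (.inl h))
  · exact .inr (.inr (.inr (.inl h)))
  · exact .inr (.inr (.inr (.inr h)))

/-- If `u`, `z`, `c` have pairwise anticommutator `2`, then `u` is one of the two other conjugates of `c`
under the order three element attached to `z`. -/
lemma IsX.third [Finite Γ] (hρ : FreeRep ρ) {z c u : Mat} (hz : IsX ρ z) (hc : IsX ρ c) (hu : IsX ρ u)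
    (h1 : T z c = (2 : ℝ) • 1) (h2 : T u z = (2 : ℝ) • 1) (h3 : T u c = (2 : ℝ) • 1) :
    u = FreeS7.cj z c ∨ u = FreeS7.cj (-z) c := by
  have qz := hz.sq hρ
  have qc := hc.sq hρ
  have qu := hu.sq hρ
  have hs := cj_sum qz h1
  have hsum : T u (FreeS7.cj z c) + T u (FreeS7.cj (-z) c) = (-4 : ℝ) • 1 := by
    have := congrArg (T u) hs
    rw [T_add_right, T_add_right, T_smul_right, h2, h3] at this
    linear_combination (norm := module) this
  have X1 := hz.cj hρ hc
  have X2 := hz.neg.cj hρ hc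
  have key : T u (FreeS7.cj (-z) c) = (-4 : ℝ) • 1 - T u (FreeS7.cj z c) := by rw [← hsum]; abel
  rcases hu.tri hρ X1 with h | h | h | h | h
  · left; exact (hu.eq_of_T hρ X1 h).symm
  · rw [h] at key
    have key : T u (FreeS7.cj (-z) c) = (-10 : ℝ) • 1 := by rw [key]; module
    exfalso
    rcases hu.tri hρ X2 with h' | h' | h' | h' | h'
    · exact smul_one_ne (by norm_num) (key.symm.trans h')
    · exact smul_one_ne (by norm_num) (key.symm.trans h')
    · exact smul_one_ne (by norm_num) (key.symm.trans h')
    · exact smul_one_ne (by norm_num) (key.symm.trans h')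
    · rw [key, sq_smul_one] at h'; exact smul_one_ne (by norm_num) h'
  · exfalso
    rw [cj_formula qz h1] at h
    have s1 := swap_of_T h1
    have s2 : z * u = (2 : ℝ) • 1 - u * z := swap_of_T h2
    have s3 : c * u = (2 : ℝ) • 1 - u * c := swap_of_T h3
    have e1 : (2 : ℝ) • u = (2 : ℝ) • c - (2 : ℝ) • z + (2 : ℝ) • (z * (c * u)) := by
      have h' := congrArg (fun m => (2 : ℝ) • m) h
      unfold T at h'
      simp only [mul_add, add_mul, mul_sub, sub_mul, mul_assoc, smul_mul_assoc, mul_smul_comm, mul_one, one_mul,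
        smul_add, smul_sub, smul_smul, neg_mul, mul_neg, smul_neg, s2, assoc2 s2, s3, assoc2 s3] at h' ⊢
      linear_combination (norm := module) h'
    have e2 : (1 - z * c) * ((2 : ℝ) • u + z + c) = 0 := by
      simp only [mul_add, add_mul, mul_sub, sub_mul, mul_assoc, smul_mul_assoc, mul_smul_comm, mul_one, one_mul,
        smul_add, smul_sub, smul_smul, neg_mul, mul_neg, smul_neg, qc, assoc2 qc, s1, assoc2 s1, qz, assoc2 qz]
      linear_combination (norm := module) e1
    have e3 : ((2 : ℝ) • u + z + c) * ((2 : ℝ) • u + z + c) = (-8 : ℝ) • 1 := by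
      simp only [mul_add, add_mul, mul_sub, sub_mul, mul_assoc, smul_mul_assoc, mul_smul_comm, mul_one, one_mul,
        smul_add, smul_sub, smul_smul, neg_mul, mul_neg, smul_neg, qc, assoc2 qc, s1, assoc2 s1, qz, assoc2 qz,
        qu, assoc2 qu, s2, assoc2 s2, s3, assoc2 s3]
      module
    have e4 : z * c = 1 := by
      have : (1 - z * c) * (-8 : ℝ) • 1 = 0 := by rw [← e3, ← mul_assoc, e2, zero_mul]
      rw [mul_smul_comm, mul_one] at this
      have := (smul_eq_zero.1 this).resolve_left (by norm_num)
      exact (sub_eq_zero.1 this).symm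
    have e5 : z = (-3 : ℝ) • c := by
      have : z * (z * c) = z * 1 := by rw [e4]
      rw [← mul_assoc, qz, mul_one, smul_mul_assoc, one_mul] at this
      exact this.symm
    rw [e5, smul_mul_smul_comm, qc, smul_smul] at qz
    exact smul_one_ne (by norm_num) qz
  · right
    refine (hu.eq_of_T hρ X2 ?_).symm
    rw [key, h]; module
  · exfalso
    rcases hu.tri hρ X2 with h' | h' | h' | h' | h'
    all_goals rw [key] at h'
    · have : T u (FreeS7.cj z c) = (2 : ℝ) • 1 := by linear_combination (norm := module) -h'
      rw [this, sq_smul_one] at h; exact smul_one_ne (by norm_num) h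
    · have : T u (FreeS7.cj z c) = (-10 : ℝ) • 1 := by linear_combination (norm := module) -h'
      rw [this, sq_smul_one] at h; exact smul_one_ne (by norm_num) h
    · have : T u (FreeS7.cj z c) = (-2 : ℝ) • 1 := by linear_combination (norm := module) -h'
      rw [this, sq_smul_one] at h; exact smul_one_ne (by norm_num) h
    · have : T u (FreeS7.cj z c) = (-6 : ℝ) • 1 := by linear_combination (norm := module) -h'
      rw [this, sq_smul_one] at h; exact smul_one_ne (by norm_num) h
    · simp only [sub_mul, mul_sub, smul_mul_assoc, mul_smul_comm, mul_one, one_mul, smul_smul, h] at h'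
      have : T u (FreeS7.cj z c) = (-2 : ℝ) • 1 := by
        linear_combination (norm := module) (1/8 : ℝ) • h'
      rw [this, sq_smul_one] at h; exact smul_one_ne (by norm_num) h

lemma T_line {z c : Mat} (qz : z * z = (-3 : ℝ) • 1) (qc : c * c = (-3 : ℝ) • 1) (h1 : T z c = (2 : ℝ) • 1) :
    T (cj z c) (cj (-z) c) = (2 : ℝ) • 1 := by
  have s1 := swap_of_T h1
  rw [cj_formula qz h1, cj_formula (x := -z) (t := (-2 : ℝ) • 1) (by simpa using qz) (by rw [T_neg_left, h1]; module)]
  unfold T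
  simp only [mul_add, add_mul, mul_sub, sub_mul, mul_assoc, smul_mul_assoc, mul_smul_comm, mul_one, one_mul,
        smul_add, smul_sub, smul_smul, neg_mul, mul_neg, smul_neg, qc, assoc2 qc, s1, assoc2 s1, qz, assoc2 qz]
  module

lemma IsX.third_two [Finite Γ] (hρ : FreeRep ρ) {z c u w : Mat} (hz : IsX ρ z) (hc : IsX ρ c) (hu : IsX ρ u)
    (hw : IsX ρ w) (h1 : T z c = (2 : ℝ) • 1) (h2 : T u z = (2 : ℝ) • 1) (h3 : T u c = (2 : ℝ) • 1)
    (h4 : T w z = (2 : ℝ) • 1) (h5 : T w c = (2 : ℝ) • 1) : T u w = (-6 : ℝ) • 1 ∨ T u w = (2 : ℝ) • 1 := by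
  have hl := T_line (hz.sq hρ) (hc.sq hρ) h1
  rcases hz.third hρ hc hu h1 h2 h3 with e | e <;> rcases hz.third hρ hc hw h1 h4 h5 with e' | e'
  · left; rw [e', ← e]; exact hu.T_self hρ
  · right; rw [e, e']; exact hl
  · right; rw [e, e', T_comm]; exact hl
  · left; rw [e', ← e]; exact hu.T_self hρ

/-- If `y`, `y₁`, `y₂` have pairwise anticommutator `2`, no `e` is adjacent to two of them and has
anticommutator `2` with the third. -/
lemma IsX.no_two_one [Finite Γ] (hρ : FreeRep ρ) {e y y₁ y₂ : Mat} (he : IsX ρ e) (hy : IsX ρ y) (hy₁ : IsX ρ y₁)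
    (hy₂ : IsX ρ y₂) (h : T y y₁ = (2 : ℝ) • 1) (h1 : T y y₂ = (2 : ℝ) • 1) (h2 : T y₁ y₂ = (2 : ℝ) • 1)
    (h3 : T e y = (-2 : ℝ) • 1) (h4 : T e y₁ = (-2 : ℝ) • 1) (h5 : T e y₂ = (2 : ℝ) • 1) : False := by
  have := hy.third_two hρ hy₁ he.neg hy₂ h (by rw [T_neg_left, h3]; module) (by rw [T_neg_left, h4]; module)
    (by rw [T_comm, h1]) (by rw [T_comm, h2])
  rw [T_neg_left, h5, ← neg_smul] at this
  rcases this with h | h <;> exact smul_one_ne (by norm_num) h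
end

lemma T_line_conj {x y : Mat} (qx : x * x = (-3 : ℝ) • 1) (qy : y * y = (-3 : ℝ) • 1) (h : T x y = (-2 : ℝ) • 1) :
    T y (cj x y) = (2 : ℝ) • 1 := by
  have s1 := swap_of_T h
  rw [cj_formula qx h]
  unfold T
  simp only [mul_add, add_mul, mul_sub, sub_mul, mul_assoc, smul_mul_assoc, mul_smul_comm, mul_one, one_mul,
        smul_add, smul_sub, smul_smul, neg_mul, mul_neg, smul_neg, qx, assoc2 qx, s1, assoc2 s1, qy, assoc2 qy]
  module

lemma T_line_inv {x y : Mat} (qx : x * x = (-3 : ℝ) • 1) (qy : y * y = (-3 : ℝ) • 1) (h : T x y = (-2 : ℝ) • 1) :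
    T y (cj (-x) y) = (2 : ℝ) • 1 := by
  have s1 := swap_of_T h
  rw [cj_formula (x := -x) (t := (2 : ℝ) • 1) (by simpa using qx) (by rw [T_neg_left, h]; module)]
  unfold T
  simp only [mul_add, add_mul, mul_sub, sub_mul, mul_assoc, smul_mul_assoc, mul_smul_comm, mul_one, one_mul,
        smul_add, smul_sub, smul_smul, neg_mul, mul_neg, smul_neg, qx, assoc2 qx, s1, assoc2 s1, qy, assoc2 qy]
  module

lemma T_line_conj_inv {x y : Mat} (qx : x * x = (-3 : ℝ) • 1) (qy : y * y = (-3 : ℝ) • 1) (h : T x y = (-2 : ℝ) • 1) :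
    T (cj x y) (cj (-x) y) = (2 : ℝ) • 1 := by
  have s1 := swap_of_T h
  rw [cj_formula qx h,
    cj_formula (x := -x) (t := (2 : ℝ) • 1) (by simpa using qx) (by rw [T_neg_left, h]; module)]
  unfold T
  simp only [mul_add, add_mul, mul_sub, sub_mul, mul_assoc, smul_mul_assoc, mul_smul_comm, mul_one, one_mul,
        smul_add, smul_sub, smul_smul, neg_mul, mul_neg, smul_neg, qx, assoc2 qx, s1, assoc2 s1, qy, assoc2 qy]
  module

/-- A skew matrix has nonpositive square: if `t² = 20` and `t - 4` is the square of a skew matrix,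
then `t` is scalar. -/
lemma scalar_of_skew_sq {k t : Mat} (hk : k.transpose = -k) (hkt : k * k = t - (4 : ℝ) • 1)
    (ht : t * t = (20 : ℝ) • 1) : t = (-Real.sqrt 20) • 1 := by
  have h20 : Real.sqrt 20 * Real.sqrt 20 = 20 := Real.mul_self_sqrt (by norm_num)
  have h4 : 4 < Real.sqrt 20 := Real.lt_sqrt_of_sq_lt (by norm_num)
  suffices t + Real.sqrt 20 • 1 = 0 by rw [eq_neg_of_add_eq_zero_left this]; module
  apply mat_ext_mulVec
  intro w
  set v := (t + Real.sqrt 20 • 1).mulVec w with hv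
  have htv : t.mulVec v = Real.sqrt 20 • v := by
    rw [hv, Matrix.mulVec_mulVec, ← Matrix.smul_mulVec]
    congr 1
    simp only [mul_add, mul_smul_comm, mul_one, ht, smul_add, smul_smul, h20]; abel
  have h1 : (k.mulVec v) ⬝ᵥ (k.mulVec v) = (4 - Real.sqrt 20) * (v ⬝ᵥ v) := by
    have : (k.mulVec v) ⬝ᵥ (k.mulVec v) = v ⬝ᵥ (k.transpose * k).mulVec v := by
      rw [← Matrix.mulVec_mulVec, Matrix.dotProduct_mulVec v, Matrix.vecMul_transpose]
    rw [this, hk, neg_mul, hkt, Matrix.neg_mulVec, Matrix.sub_mulVec, htv, Matrix.smul_mulVec, Matrix.one_mulVec]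
    simp only [dotProduct_neg, dotProduct_sub, dotProduct_smul, smul_eq_mul]; ring
  have h2 : 0 ≤ (k.mulVec v) ⬝ᵥ (k.mulVec v) := Finset.sum_nonneg fun i _ => mul_self_nonneg _
  have h3 : 0 ≤ v ⬝ᵥ v := Finset.sum_nonneg fun i _ => mul_self_nonneg _
  have h5 : v ⬝ᵥ v = 0 := by nlinarith
  rw [dotProduct_self_eq_zero.1 h5, Matrix.zero_mulVec]

lemma Q_comm {x y z c : Mat} (qx : x * x = (-3 : ℝ) • 1) (qz : z * z = (-3 : ℝ) • 1)
   (hxy : T x y = (-2 : ℝ) • 1) (hxz : T x z = (-2 : ℝ) • 1) (hxc : T x c = (-2 : ℝ) • 1)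
   (hyz : T y z = (-2 : ℝ) • 1) (hyc : T y c = (-2 : ℝ) • 1) (hzc : T z c = (-2 : ℝ) • 1) :
   Commute (cj x y) (cj (-z) c) := by
  rw [cj_formula qx hxy,
    cj_formula (x := -z) (t := (2 : ℝ) • 1) (by simpa using qz) (by rw [T_neg_left, hzc]; module)]
  have s1 := swap_of_T hxy
  have s2 := swap_of_T hxz
  have s3 := swap_of_T hxc
  have s4 := swap_of_T hyz
  have s5 := swap_of_T hyc
  have s6 := swap_of_T hzc
  unfold Commute SemiconjBy
  simp only [mul_add, add_mul, mul_sub, sub_mul, mul_assoc, smul_mul_assoc, mul_smul_comm, mul_one, one_mul,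
        smul_add, smul_sub, smul_smul, neg_mul, mul_neg, smul_neg, qx, assoc2 qx,
        s1, assoc2 s1, s2, assoc2 s2, s3, assoc2 s3, s4, assoc2 s4, s5, assoc2 s5, s6, assoc2 s6]
  module

section
variable {Γ : Type*} [Group Γ] {ρ : Γ →* Mat}

lemma IsX.eq_or_neg_of_commute (hρ : FreeRep ρ) {x y : Mat} (hx : IsX ρ x) (hy : IsX ρ y) (h : Commute x y) :
    y = x ∨ y = -x := by
  by_cases hxy : y = x
  · exact .inl hxy
  right
  obtain ⟨a, -, -, ha, -⟩ := hx.data hρ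
  obtain ⟨b, -, -, hb, -⟩ := hy.data hρ
  have hu : IsUnit (ρ b - ρ a) := hρ.isUnit_sub (by
    rintro rfl
    rw [ha] at hb
    have := smul_right_injective _ (by norm_num : (1/2 : ℝ) ≠ 0) hb
    exact hxy (sub_left_injective this).symm)
  have e : (ρ b - ρ a) * (y + x) = 0 := by
    rw [ha, hb]
    have : (1/2 : ℝ) • (y - 1) - (1/2 : ℝ) • (x - 1) = (1/2 : ℝ) • (y - x) := by module
    rw [this, smul_mul_assoc, sub_mul, mul_add, mul_add, hx.sq hρ, hy.sq hρ, h.eq]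
    module
  exact eq_neg_of_add_eq_zero_left (hu.mul_right_eq_zero.1 e)

/-- If `x` is adjacent to `y` and `e`, the anticommutators of `e` with the three conjugates of `y` under
the order three element attached to `x` add up to `-2`. -/
lemma IsX.sum_line (hρ : FreeRep ρ) {x y e : Mat} (hx : IsX ρ x) (h : T x y = (-2 : ℝ) • 1)
    (h' : T e x = (-2 : ℝ) • 1) : T e y + T e (FreeS7.cj x y) + T e (FreeS7.cj (-x) y) = (-2 : ℝ) • 1 := by
  have := congrArg (T e) (cj_sum (hx.sq hρ) h)
  rw [T_add_right, T_add_right, T_smul_right, h'] at this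
  rw [this]; module

variable [Finite Γ]

/-- If `x` is adjacent to `y` and `e`, then `e` equals or is adjacent to one of the three conjugates of
`y` under the order three element attached to `x`. -/
lemma IsX.type_two (hρ : FreeRep ρ) {x y e : Mat} (hx : IsX ρ x) (hy : IsX ρ y) (he : IsX ρ e)
    (h : T x y = (-2 : ℝ) • 1) (h' : T e x = (-2 : ℝ) • 1) :
    (e = y ∨ T e y = (-2 : ℝ) • 1) ∨ (e = FreeS7.cj x y ∨ T e (FreeS7.cj x y) = (-2 : ℝ) • 1) ∨
    (e = FreeS7.cj (-x) y ∨ T e (FreeS7.cj (-x) y) = (-2 : ℝ) • 1) := by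
  have hs := hx.sum_line hρ h h'
  have key : ∀ w, IsX ρ w → T x w = (-2 : ℝ) • 1 →
      (e = w ∨ T e w = (-2 : ℝ) • 1) ∨ T e w = (2 : ℝ) • 1 ∨ T e w * T e w = (20 : ℝ) • 1 := by
    intro w hw hxw
    rcases he.trichotomy hρ hw with r | r | r | r | r
    · exact .inl (.inl r.symm)
    · exfalso
      rw [r, T_neg_right, T_comm, h', ← neg_smul] at hxw
      exact smul_one_ne (by norm_num) hxw
    · exact .inl (.inr r)
    · exact .inr (.inl r)
    · exact .inr (.inr r)
  have F : ∀ {t : Mat} {c : ℝ}, t * t = (20 : ℝ) • 1 → t = c • 1 → c * c ≠ 20 → False := by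
    intro t c h1 h2 h3
    rw [h2, sq_smul_one] at h1
    exact smul_one_ne h3 h1
  have F2 : ∀ {t u : Mat} {c : ℝ}, t * t = (20 : ℝ) • 1 → u * u = (20 : ℝ) • 1 → t + u = (-4 : ℝ) • 1 → False := by
    intro t u c h1 h2 h3
    have : u = (-4 : ℝ) • 1 - t := by rw [← h3]; abel
    rw [this] at h2
    simp only [sub_mul, mul_sub, smul_mul_assoc, mul_smul_comm, mul_one, one_mul, smul_smul, h1] at h2
    exact F (c := -2) h1 (by linear_combination (norm := module) (1/8 : ℝ) • h2) (by norm_num)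
  rcases key y hy h with r | r
  · exact .inl r
  rcases key _ (hx.cj hρ hy) (T_cj_self (hx.sq hρ) h) with r1 | r1
  · exact .inr (.inl r1)
  rcases key _ (hx.neg.cj hρ hy) (T_cj_neg_self (hx.sq hρ) h) with r2 | r2
  · exact .inr (.inr r2)
  exfalso
  rcases r with r | r <;> rcases r1 with r1 | r1 <;> rcases r2 with r2 | r2
  · rw [r, r1, r2, ← add_smul, ← add_smul] at hs; exact smul_one_ne (by norm_num) hs
  · exact F (c := -6) r2 (by rw [r, r1] at hs; linear_combination (norm := module) hs) (by norm_num)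
  · exact F (c := -6) r1 (by rw [r, r2] at hs; linear_combination (norm := module) hs) (by norm_num)
  · exact F2 (c := 0) r1 r2 (by rw [r] at hs; linear_combination (norm := module) hs)
  · exact F (c := -6) r (by rw [r1, r2] at hs; linear_combination (norm := module) hs) (by norm_num)
  · exact F2 (c := 0) r r2 (by rw [r1] at hs; linear_combination (norm := module) hs)
  · exact F2 (c := 0) r r1 (by rw [r2] at hs; linear_combination (norm := module) hs)
  · exact no_three_opp r r1 r2 hs

/-- Exclusion of four pairwise adjacent elements. -/
lemma IsX.no_Q (hρ : FreeRep ρ) {x y z c : Mat} (hx : IsX ρ x) (hy : IsX ρ y) (hz : IsX ρ z) (hc : IsX ρ c)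
   (hxy : T x y = (-2 : ℝ) • 1) (hxz : T x z = (-2 : ℝ) • 1) (hxc : T x c = (-2 : ℝ) • 1)
   (hyz : T y z = (-2 : ℝ) • 1) (hyc : T y c = (-2 : ℝ) • 1) (hzc : T z c = (-2 : ℝ) • 1) : False := by
  have qx := hx.sq hρ
  have qy := hy.sq hρ
  have hcm := Q_comm qx (hz.sq hρ) hxy hxz hxc hyz hyc hzc
  have X1 := hx.cj hρ hy
  have X2 := hx.neg.cj hρ hy
  have hs := hx.sum_line hρ hxy (T_comm _ _ ▸ hxz)
  have hzy : T z y = (-2 : ℝ) • 1 := T_comm _ _ ▸ hyz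
  rw [hzy] at hs
  have hzc₁ := T_cj_neg_self (hz.sq hρ) hzc
  rcases X1.eq_or_neg_of_commute hρ (hz.neg.cj hρ hc) hcm with e | e
  · rw [e] at hzc₁
    rw [hzc₁] at hs
    exact hz.no_two_one hρ hy X1 X2 (T_line_conj qx qy hxy) (T_line_inv qx qy hxy) (T_line_conj_inv qx qy hxy)
      hzy hzc₁ (by linear_combination (norm := module) hs)
  · rw [e, T_neg_right] at hzc₁
    have h2 : T z (FreeS7.cj x y) = (2 : ℝ) • 1 := by linear_combination (norm := module) -hzc₁
    rw [h2] at hs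
    exact hz.no_two_one hρ hy X2 X1 (T_line_inv qx qy hxy) (T_line_conj qx qy hxy) (by rw [T_comm, T_line_conj_inv qx qy hxy])
      hzy (by linear_combination (norm := module) hs) h2

/-- Every anticommutator of square `20` is nonscalar. -/
def NonScalar (ρ : Γ →* Mat) : Prop :=
  ∀ x y, IsX ρ x → IsX ρ y → T x y * T x y = (20 : ℝ) • 1 → ∀ c : ℝ, T x y ≠ c • 1

/-- Two adjacent elements have at most one common neighbour. -/
lemma IsX.unique_nbr (hρ : FreeRep ρ) (hN : NonScalar ρ) {x y z c : Mat} (hx : IsX ρ x) (hy : IsX ρ y) (hz : IsX ρ z) (hc : IsX ρ c)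
   (hxy : T x y = (-2 : ℝ) • 1) (hxz : T x z = (-2 : ℝ) • 1) (hxc : T x c = (-2 : ℝ) • 1)
   (hyz : T y z = (-2 : ℝ) • 1) (hyc : T y c = (-2 : ℝ) • 1) : c = z := by
  rcases hz.trichotomy hρ hc with r | r | r | r | r
  · exact r
  · exfalso
    rw [r, T_neg_right, hxz, ← neg_smul] at hxc
    exact smul_one_ne (by norm_num) hxc
  · exact (hx.no_Q hρ hy hz hc hxy hxz hxc hyz hyc r).elim
  · exfalso
    have := hz.third_two hρ hc hx.neg hy.neg r (by rw [T_neg_left, hxz]; module) (by rw [T_neg_left, hxc]; module)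
      (by rw [T_neg_left, hyz]; module) (by rw [T_neg_left, hyc]; module)
    rw [T_neg_left, T_neg_right, neg_neg, hxy] at this
    rcases this with h | h <;> exact smul_one_ne (by norm_num) h
  · exfalso
    refine hN z c hz hc r _ (scalar_of_skew_sq (k := z + c - (1/2 : ℝ) • (x + y)) ?_ ?_ r)
    · simp only [Matrix.transpose_sub, Matrix.transpose_add, Matrix.transpose_smul, hx.skew hρ, hy.skew hρ, hz.skew hρ, hc.skew hρ]
      module
    · have s1 := swap_of_T hxy
      have s2 := swap_of_T hxz
      have s3 := swap_of_T hxc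
      have s4 := swap_of_T hyz
      have s5 := swap_of_T hyc
      have s6 := swap_of_T (rfl : T z c = T z c)
      simp only [mul_add, add_mul, mul_sub, sub_mul, mul_assoc, smul_mul_assoc, mul_smul_comm, mul_one, one_mul,
        smul_add, smul_sub, smul_smul, hx.sq hρ, hy.sq hρ, hz.sq hρ, hc.sq hρ, s1, s2, s3, s4, s5, s6]
      module
end

/-! ### Nonscalar anticommutators -/

/-- When `T x p` has square `20`, the element `p` is adjacent to its conjugate under the order three
element attached to `x`. -/
lemma opp_T1 {x p t : Mat} (qx : x * x = (-3 : ℝ) • 1) (qp : p * p = (-3 : ℝ) • 1) (h : T x p = t)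
    (ht : t * t = (20 : ℝ) • 1) : T p (cj x p) = (-2 : ℝ) • 1 := by
  have s := swap_of_T h
  have c1 : t * x = x * t := by rw [← h]; exact (commute_T_left qx).eq
  have c2 : t * p = p * t := by rw [← h, T_comm]; exact (commute_T_left qp).eq
  rw [cj_formula qx h]
  unfold T
  simp only [mul_add, add_mul, mul_sub, sub_mul, mul_assoc, smul_mul_assoc, mul_smul_comm, mul_one, one_mul,
        smul_add, smul_sub, smul_smul, neg_mul, mul_neg, smul_neg, qx, assoc2 qx, s, assoc2 s, qp, assoc2 qp,
        c1, assoc2 c1, c2, assoc2 c2, ht, assoc2 ht]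
  module

lemma opp_T2 {x p t : Mat} (qx : x * x = (-3 : ℝ) • 1) (qp : p * p = (-3 : ℝ) • 1) (h : T x p = t)
    (ht : t * t = (20 : ℝ) • 1) : T (cj x p) (cj (-x) p) = (-2 : ℝ) • 1 := by
  have s := swap_of_T h
  have c1 : t * x = x * t := by rw [← h]; exact (commute_T_left qx).eq
  have c2 : t * p = p * t := by rw [← h, T_comm]; exact (commute_T_left qp).eq
  rw [cj_formula qx h, cj_formula (x := -x) (t := -t) (by simpa using qx) (by rw [T_neg_left, h])]
  unfold T
  simp only [mul_add, add_mul, mul_sub, sub_mul, mul_assoc, smul_mul_assoc, mul_smul_comm, mul_one, one_mul,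
        smul_add, smul_sub, smul_smul, neg_mul, mul_neg, smul_neg, qx, assoc2 qx, s, assoc2 s, qp, assoc2 qp,
        c1, assoc2 c1, c2, assoc2 c2, ht, assoc2 ht]
  module

lemma opp_T3 {x p t : Mat} (qx : x * x = (-3 : ℝ) • 1) (qp : p * p = (-3 : ℝ) • 1) (h : T x p = t)
    (ht : t * t = (20 : ℝ) • 1) : T x (cj p (cj x p)) = (-2 : ℝ) • 1 := by
  have s := swap_of_T h
  have c1 : t * x = x * t := by rw [← h]; exact (commute_T_left qx).eq
  have c2 : t * p = p * t := by rw [← h, T_comm]; exact (commute_T_left qp).eq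
  rw [cj_formula qp (opp_T1 qx qp h ht), cj_formula qx h]
  unfold T
  simp only [mul_add, add_mul, mul_sub, sub_mul, mul_assoc, smul_mul_assoc, mul_smul_comm, mul_one, one_mul,
        smul_add, smul_sub, smul_smul, neg_mul, mul_neg, smul_neg, qx, assoc2 qx, s, assoc2 s, qp, assoc2 qp,
        c1, assoc2 c1, c2, assoc2 c2, ht, assoc2 ht]
  module
section
variable {Γ : Type*} [Group Γ] {ρ : Γ →* Mat}

/-- `x` belongs to a triangle of pairwise adjacent elements commuting with `ε`. -/
def InTri (ρ : Γ →* Mat) (ε x : Mat) : Prop :=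
  IsX ρ x ∧ Commute ε x ∧ ∃ y z, IsX ρ y ∧ IsX ρ z ∧ Commute ε y ∧ Commute ε z ∧
    T x y = (-2 : ℝ) • 1 ∧ T x z = (-2 : ℝ) • 1 ∧ T y z = (-2 : ℝ) • 1

lemma InTri.of_cj (hρ : FreeRep ρ) {ε x y z : Mat} (hx : IsX ρ x) (hy : IsX ρ y) (hz : IsX ρ z)
    (cx : Commute ε x) (cy : Commute ε y) (cz : Commute ε z) (h1 : T x y = (-2 : ℝ) • 1)
    (h2 : T x z = (-2 : ℝ) • 1) (h3 : T y z = (-2 : ℝ) • 1) :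
    InTri ρ ε y ∧ InTri ρ ε (cj x y) ∧ InTri ρ ε (cj (-x) y) := by
  have qx := hx.sq hρ
  refine ⟨⟨hy, cy, x, z, hx, hz, cx, cz, T_comm _ _ ▸ h1, h3, h2⟩,
    ⟨hx.cj hρ hy, Commute.cj cx cy, x, cj x z, hx, hx.cj hρ hz, cx, Commute.cj cx cz, ?_, T_cj qx h3, T_cj_self qx h2⟩,
    ⟨hx.neg.cj hρ hy, Commute.cj cx.neg_right cy, x, cj (-x) z, hx, hx.neg.cj hρ hz, cx, Commute.cj cx.neg_right cz, ?_,
      T_cj (by simpa using qx) h3, T_cj_neg_self qx h2⟩⟩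
  · rw [T_comm]; exact T_cj_self qx h1
  · rw [T_comm]; exact T_cj_neg_self qx h1

lemma InTri.neg {ε x : Mat} (hP : InTri ρ ε x) : InTri ρ ε (-x) := by
  obtain ⟨hx, cx, y, z, hy, hz, cy, cz, hxy, hxz, hyz⟩ := hP
  exact ⟨hx.neg, cx.neg_right, -y, -z, hy.neg, hz.neg, cy.neg_right, cz.neg_right,
    by rw [T_neg_left, T_neg_right, neg_neg, hxy], by rw [T_neg_left, T_neg_right, neg_neg, hxz],
    by rw [T_neg_left, T_neg_right, neg_neg, hyz]⟩

lemma T_symm (hρ : FreeRep ρ) {x y : Mat} (hx : IsX ρ x) (hy : IsX ρ y) : (T x y).transpose = T x y := by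
  unfold T
  rw [Matrix.transpose_add, Matrix.transpose_mul, Matrix.transpose_mul, hx.skew hρ, hy.skew hρ]
  simp [add_comm]

lemma T_conj (x y : Mat) (g : Γ) : ρ g * T x y * ρ g⁻¹ = T (ρ g * x * ρ g⁻¹) (ρ g * y * ρ g⁻¹) := by
  unfold T
  have := rho_inv_mul (ρ := ρ) g
  simp only [mul_add, add_mul, mul_assoc, assoc2 this, one_mul]

variable [Finite Γ]

/-- Lying in a triangle commuting with `ε` spreads to adjacent elements. -/
lemma InTri.step (hρ : FreeRep ρ) (hN : NonScalar ρ) {ε x e : Mat} (hP : InTri ρ ε x) (he : IsX ρ e)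
    (h : T x e = (-2 : ℝ) • 1) : InTri ρ ε e := by
  obtain ⟨hx, cx, y, z, hy, hz, cy, cz, hxy, hxz, hyz⟩ := hP
  obtain ⟨a1, a2, a3⟩ := InTri.of_cj hρ hx hy hz cx cy cz hxy hxz hyz
  obtain ⟨b1, b2, b3⟩ := InTri.of_cj hρ hx hz hy cx cz cy hxz hxy (T_comm _ _ ▸ hyz)
  have qx := hx.sq hρ
  have hyx : T y x = (-2 : ℝ) • 1 := T_comm _ _ ▸ hxy
  rcases hx.type_two hρ he hy h hyx with (r | r) | (r | r) | (r | r)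
  · exact r ▸ a1
  · have := hx.unique_nbr hρ hN hy he hz hxy h hxz r hyz
    exact this ▸ b1
  · rw [← cj_neg_cj qx (y := e), ← r]; exact a3
  · have := hx.unique_nbr hρ hN hy (hx.cj hρ he) hz hxy (T_cj_self qx h) hxz r hyz
    rw [← cj_neg_cj qx (y := e), ← this]; exact b3
  · rw [← cj_cj_neg qx (y := e), ← r]; exact a2
  · have := hx.unique_nbr hρ hN hy (hx.neg.cj hρ he) hz hxy (T_cj_neg_self qx h) hxz r hyz
    rw [← cj_cj_neg qx (y := e), ← this]; exact b2

/-- Lying in a triangle commuting with `ε` spreads to all elements, since any two are joined by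
adjacencies up to sign. -/
lemma InTri.all (hρ : FreeRep ρ) (hN : NonScalar ρ) {ε x e : Mat} (hP : InTri ρ ε x) (he : IsX ρ e) :
    InTri ρ ε e := by
  have hx := hP.1
  rcases hx.trichotomy hρ he with rfl | rfl | h | h | h
  · exact hP
  · exact hP.neg
  · exact hP.step hρ hN he h
  · have := hP.step hρ hN he.neg (by rw [T_neg_right, h]; module)
    simpa using this.neg
  · have qx := hx.sq hρ
    have qe := he.sq hρ
    have h1 := opp_T3 qx qe rfl h
    have h2 : T e (cj e (cj x e)) = (-2 : ℝ) • 1 := T_cj_self qe (opp_T1 qx qe rfl h)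
    exact (hP.step hρ hN (he.cj hρ (hx.cj hρ he)) h1).step hρ hN he (T_comm _ _ ▸ h2)

/-- If all anticommutators of square `20` are nonscalar, then there are none. -/
lemma no_nonscalar (hρ : FreeRep ρ) (hD : PropD ρ) (hN : NonScalar ρ) {x p : Mat} (hx : IsX ρ x) (hp : IsX ρ p)
    (h : T x p * T x p = (20 : ℝ) • 1) : False := by
  have qx := hx.sq hρ
  have qp := hp.sq hρ
  have cx : Commute (T x p) x := commute_T_left qx
  have cp : Commute (T x p) p := by rw [T_comm]; exact commute_T_left qp
  have hP : InTri ρ (T x p) p := ⟨hp, cp, cj x p, cj (-x) p, hx.cj hρ hp, hx.neg.cj hρ hp, Commute.cj cx cp,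
    Commute.cj cx.neg_right cp, opp_T1 qx qp rfl h,
    opp_T1 (x := -x) (t := -T x p) (by simpa using qx) qp (T_neg_left _ _) (by simpa using h), opp_T2 qx qp rfl h⟩
  have hall : ∀ e, IsX ρ e → Commute (T x p) e := fun e he => (hP.all hρ hN he).2.1
  obtain ⟨c, hc⟩ := hD (T x p) (T_symm hρ hx hp) (by
    intro g
    rw [T_conj]
    have h1 := hall _ (hx.conj g)
    have h2 := hall _ (hp.conj g)
    exact (h1.mul_right h2).add_right (h2.mul_right h1))
  exact hN x p hx hp h c hc
end

/-! ### Groups all of whose abelian subgroups are cyclic -/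

/-- The purely group-theoretic consequences of freeness: abelian subgroups are cyclic and there is
at most one involution. -/
structure Good (Γ : Type*) [Group Γ] : Prop where
  cyc : ∀ H : Subgroup Γ, (∀ a ∈ H, ∀ b ∈ H, a * b = b * a) → IsCyclic H
  inv : ∀ g h : Γ, g * g = 1 → g ≠ 1 → h * h = 1 → h ≠ 1 → g = h

section
variable {Γ : Type*} [Group Γ]

lemma FreeRep.good [Finite Γ] {ρ : Γ →* Mat} (hρ : FreeRep ρ) : Good Γ :=
  ⟨fun H => hρ.isCyclic_subgroup H, fun _ _ h1 h2 h3 h4 => hρ.inj ((hρ.involution h1 h2).trans (hρ.involution h3 h4).symm)⟩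

lemma Good.sub (h : Good Γ) (H : Subgroup Γ) : Good H := by
  refine ⟨fun K hK => ?_, fun g k h1 h2 h3 h4 => ?_⟩
  · have : IsCyclic (K.map H.subtype) := h.cyc _ (by
      rintro _ ⟨a, ha, rfl⟩ _ ⟨b, hb, rfl⟩
      rw [← map_mul, hK a ha b hb, map_mul])
    exact (K.equivMapOfInjective _ H.subtype_injective).isCyclic.2 this
  · apply Subtype.ext
    exact h.inv g k (by simpa using congrArg Subtype.val h1) (by simpa using h2) (by simpa using congrArg Subtype.val h3) (by simpa using h4)

lemma closure_pair_comm {s : Set Γ} (hs : ∀ a ∈ s, ∀ b ∈ s, a * b = b * a) :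
    ∀ a ∈ Subgroup.closure s, ∀ b ∈ Subgroup.closure s, a * b = b * a := by
  intro a ha b hb
  have := Subgroup.isMulCommutative_closure hs
  have h2 := this.is_comm.comm ⟨a, ha⟩ ⟨b, hb⟩
  exact congrArg Subtype.val h2

/-- Commuting elements: if `h ^ n = 1` where `n` is the order of `k`, then `h` is a power of `k`. -/
lemma Good.mem_zpowers [Finite Γ] (hG : Good Γ) {h k : Γ} (hc : h * k = k * h) (ho : h ^ orderOf k = 1) :
    h ∈ Subgroup.zpowers k := by
  classical
  set H := Subgroup.closure ({h, k} : Set Γ) with hH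
  have hcyc : IsCyclic H := hG.cyc H (closure_pair_comm (by
    rintro a (rfl | rfl) b (rfl | rfl)
    · rfl
    · exact hc
    · exact hc.symm
    · rfl))
  have hh : h ∈ H := Subgroup.subset_closure (by simp)
  have hk : k ∈ H := Subgroup.subset_closure (by simp)
  have : Fintype H := Fintype.ofFinite _
  have hle := IsCyclic.card_pow_eq_one_le (α := H) (n := orderOf k) (orderOf_pos k)
  let S : Finset H := Finset.univ.filter (· ∈ Subgroup.zpowers (⟨k, hk⟩ : H))
  have hS : S.card = orderOf k := by
    have h1 : S.card = Nat.card (Subgroup.zpowers (⟨k, hk⟩ : H)) := by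
      rw [Nat.card_eq_fintype_card, Fintype.card_subtype]
    rw [h1, Nat.card_zpowers]
    exact Subgroup.orderOf_mk k hk
  have hsub : S ⊆ Finset.univ.filter (fun a : H => a ^ orderOf k = 1) := by
    intro a ha
    simp only [S, Finset.mem_filter, Finset.mem_univ, true_and] at ha ⊢
    obtain ⟨i, rfl⟩ := ha
    apply Subtype.ext
    simp only [SubmonoidClass.coe_pow, SubgroupClass.coe_zpow, OneMemClass.coe_one]
    rw [← zpow_natCast, ← zpow_mul, mul_comm, zpow_mul, zpow_natCast, pow_orderOf_eq_one, one_zpow]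
  have heq := Finset.eq_of_subset_of_card_le hsub (hle.trans hS.ge)
  have hmem : (⟨h, hh⟩ : H) ∈ S := by
    rw [heq]; simp only [Finset.mem_filter, Finset.mem_univ, true_and]
    apply Subtype.ext; simpa using ho
  simp only [S, Finset.mem_filter, Finset.mem_univ, true_and] at hmem
  obtain ⟨i, hi⟩ := hmem
  exact ⟨i, by simpa using congrArg Subtype.val hi⟩

lemma pow_mul_of_comm {g v η : Γ} (hη1 : Commute η g) (hη2 : Commute η v) (h : v * g = η * (g * v)) (k : ℕ) :
    (g * v) ^ k = η ^ (k * (k - 1) / 2) * (g ^ k * v ^ k) := by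
  have hvk : ∀ k : ℕ, v ^ k * g = η ^ k * (g * v ^ k) := by
    intro k
    induction k with
    | zero => simp
    | succ k ih =>
      rw [pow_succ v, mul_assoc, h, ← mul_assoc, ← (hη2.pow_right k).eq, mul_assoc η, ← mul_assoc (v ^ k) g v, ih,
        pow_succ' η]
      simp only [mul_assoc]
  induction k with
  | zero => simp
  | succ k ih =>
    rw [pow_succ, ih]
    have e : (k + 1) * (k + 1 - 1) / 2 = k * (k - 1) / 2 + k := by
      rw [← Finset.sum_range_id, ← Finset.sum_range_id, Finset.sum_range_succ]
    rw [e, pow_add]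
    have h1 := (hη1.pow_pow k k).eq
    calc η ^ (k * (k - 1) / 2) * (g ^ k * v ^ k) * (g * v)
        = η ^ (k * (k - 1) / 2) * (g ^ k * (v ^ k * g) * v) := by simp only [mul_assoc]
      _ = η ^ (k * (k - 1) / 2) * ((g ^ k * η ^ k) * (g * v ^ k) * v) := by rw [hvk]; simp only [mul_assoc]
      _ = _ := by rw [← h1]; simp only [pow_succ, mul_assoc]

/-- In a nonabelian finite `p`-group whose abelian subgroups are cyclic there are noncommuting `h`, `w`
such that `h ^ p` is a suitable power of a central element of order `p`. -/
lemma Good.pgroup_trick [Finite Γ] (hG : Good Γ) {p : ℕ} [hp : Fact p.Prime] (hP : IsPGroup p Γ)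
    (hna : ¬ ∀ a b : Γ, a * b = b * a) :
    ∃ h w ξ : Γ, h * w ≠ w * h ∧ (∀ g, ξ * g = g * ξ) ∧ ξ ^ p = 1 ∧ ξ ≠ 1 ∧
      ∃ i : ℤ, h ^ p = ξ ^ (i * ((p * (p - 1) / 2 : ℕ) : ℤ)) := by
  -- an element of order `p` modulo the centre, central modulo the centre
  have hQ : IsPGroup p (Γ ⧸ Subgroup.center Γ) := hP.to_quotient _
  have hnt : Nontrivial (Γ ⧸ Subgroup.center Γ) := by
    rw [QuotientGroup.nontrivial_iff]
    intro htop
    apply hna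
    intro a b
    have : a ∈ Subgroup.center Γ := by rw [htop]; trivial
    exact (Subgroup.mem_center_iff.1 this b).symm
  have hc := hQ.center_nontrivial
  have hpc : IsPGroup p (Subgroup.center (Γ ⧸ Subgroup.center Γ)) := hQ.to_subgroup _
  have hdvd : p ∣ Nat.card (Subgroup.center (Γ ⧸ Subgroup.center Γ)) := by
    rcases hpc.card_eq_or_dvd with h | h
    · have := Finite.one_lt_card (α := Subgroup.center (Γ ⧸ Subgroup.center Γ)); omega
    · exact h
  obtain ⟨⟨xb, hxb⟩, hxo⟩ := exists_prime_orderOf_dvd_card' p hdvd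
  obtain ⟨x, rfl⟩ := QuotientGroup.mk_surjective xb
  rw [Subgroup.orderOf_mk] at hxo
  have hxZ : x ∉ Subgroup.center Γ := by
    intro h
    rw [(QuotientGroup.eq_one_iff x).2 h, orderOf_one] at hxo
    exact hp.1.one_lt.ne hxo
  have hxp : x ^ p ∈ Subgroup.center Γ := by
    rw [← QuotientGroup.eq_one_iff, QuotientGroup.mk_pow, ← hxo, pow_orderOf_eq_one]
  have : ∃ g, g * x ≠ x * g := by
    by_contra! h
    exact hxZ (Subgroup.mem_center_iff.2 h)
  obtain ⟨g, hgx⟩ := this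
  obtain ⟨ζ, hζ⟩ : ∃ ζ, ζ = g * x * g⁻¹ * x⁻¹ := ⟨_, rfl⟩
  have hζZ : ζ ∈ Subgroup.center Γ := by
    rw [← QuotientGroup.eq_one_iff, hζ]
    have := Subgroup.mem_center_iff.1 hxb g
    simp only [QuotientGroup.mk_mul, QuotientGroup.mk_inv, this]
    group
  have hζc : ∀ a, Commute ζ a := fun a => (Subgroup.mem_center_iff.1 hζZ a).symm
  have hconj : g * x * g⁻¹ = ζ * x := by rw [hζ]; group
  have hζp : ζ ^ p = 1 := by
    have h1 : g * x ^ p * g⁻¹ = ζ ^ p * x ^ p := by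
      rw [← conj_pow, hconj, (hζc x).mul_pow]
    rw [Subgroup.mem_center_iff.1 hxp g, mul_assoc, mul_inv_cancel, mul_one] at h1
    exact mul_right_cancel (b := x ^ p) (by rw [one_mul]; exact h1.symm)
  have hgp : g ^ p * x = x * g ^ p := by
    have : ∀ k : ℕ, g ^ k * x * (g ^ k)⁻¹ = ζ ^ k * x := by
      intro k
      induction k with
      | zero => simp
      | succ k ih =>
        rw [pow_succ', mul_inv_rev]
        calc g * g ^ k * x * ((g ^ k)⁻¹ * g⁻¹) = g * (g ^ k * x * (g ^ k)⁻¹) * g⁻¹ := by group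
          _ = _ := by rw [ih, ← mul_assoc g, ← ((hζc g).pow_left k).eq, mul_assoc, mul_assoc, ← mul_assoc g, hconj, pow_succ, mul_assoc]
    have h1 := this p
    rw [hζp, one_mul, mul_inv_eq_iff_eq_mul] at h1
    exact h1
  -- a cyclic subgroup containing `x` and `g ^ p`
  set W := Subgroup.closure ({x, ζ, g ^ p} : Set Γ) with hW
  have hcyc : IsCyclic W := hG.cyc W (closure_pair_comm (by
    rintro a (rfl | rfl | rfl) b (rfl | rfl | rfl)
    · rfl
    · exact (hζc _).eq.symm
    · exact hgp.symm
    · exact (hζc _).eq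
    · rfl
    · exact (hζc _).eq
    · exact hgp
    · exact (hζc _).eq.symm
    · rfl))
  obtain ⟨⟨w, hwW⟩, hw⟩ := hcyc.exists_generator
  have hgen : ∀ a ∈ W, ∃ n : ℤ, w ^ n = a := by
    intro a ha
    obtain ⟨n, hn⟩ := hw ⟨a, ha⟩
    exact ⟨n, by simpa using congrArg Subtype.val hn⟩
  have hcl : ∀ a ∈ W, ∃ i : ℤ, g * a * g⁻¹ = ζ ^ i * a := by
    intro a ha
    induction ha using Subgroup.closure_induction with
    | mem a ha =>
      rcases ha with rfl | rfl | rfl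
      · exact ⟨1, by rw [hconj, zpow_one]⟩
      · exact ⟨0, by rw [← (hζc g).eq]; simp⟩
      · exact ⟨0, by rw [← pow_succ', pow_succ]; simp⟩
    | one => exact ⟨0, by simp⟩
    | mul a b _ _ iha ihb =>
      obtain ⟨i, hi⟩ := iha
      obtain ⟨j, hj⟩ := ihb
      refine ⟨i + j, ?_⟩
      calc g * (a * b) * g⁻¹ = (g * a * g⁻¹) * (g * b * g⁻¹) := by group
        _ = _ := by rw [hi, hj, zpow_add, mul_assoc, ← mul_assoc a, ← ((hζc a).zpow_left j).eq]; simp only [mul_assoc]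
    | inv a _ iha =>
      obtain ⟨i, hi⟩ := iha
      refine ⟨-i, ?_⟩
      calc g * a⁻¹ * g⁻¹ = (g * a * g⁻¹)⁻¹ := by group
        _ = _ := by rw [hi, mul_inv_rev, zpow_neg, ((hζc a⁻¹).zpow_left i).inv_left.eq]
  have hxW : x ∈ W := Subgroup.subset_closure (by simp)
  obtain ⟨nx, hnx⟩ := hgen x hxW
  have hgw : g * w ≠ w * g := by
    intro h
    apply hgx
    rw [← hnx]
    exact ((show Commute g w from h).zpow_right nx).eq
  obtain ⟨i, hi⟩ := hcl w hwW
  obtain ⟨ξ, hξ⟩ : ∃ ξ, ξ = ζ ^ i := ⟨_, rfl⟩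
  rw [← hξ] at hi
  have hξc : ∀ a, Commute ξ a := fun a => hξ ▸ (hζc a).zpow_left i
  have hξp : ξ ^ p = 1 := by rw [hξ, ← zpow_natCast, ← zpow_mul, mul_comm, zpow_mul, zpow_natCast, hζp, one_zpow]
  have hξ1 : ξ ≠ 1 := by
    intro h
    rw [h, one_mul, mul_inv_eq_iff_eq_mul] at hi
    exact hgw hi
  obtain ⟨n, hn⟩ := hgen (g ^ p) (Subgroup.subset_closure (by simp))
  have hpn : (p : ℤ) ∣ n := by
    by_contra hnd
    obtain ⟨k, hk⟩ := IsPGroup.iff_orderOf.1 hP w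
    have hcop : IsCoprime n ((orderOf w : ℕ) : ℤ) := by
      rw [hk]; push_cast
      exact ((Nat.prime_iff_prime_int.1 hp.1).coprime_iff_not_dvd.2 hnd).symm.pow_right
    obtain ⟨a, b, hab⟩ := hcop
    apply hgw
    have : w = (g ^ p) ^ a := by
      rw [← hn, ← zpow_mul]
      calc w = w ^ (a * n + b * (orderOf w : ℕ)) := by rw [hab, zpow_one]
        _ = w ^ (n * a) := by rw [zpow_add, mul_comm b, zpow_mul w (orderOf w : ℤ), zpow_natCast, pow_orderOf_eq_one, one_zpow, mul_one, mul_comm]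
    rw [this]
    exact (((Commute.refl g).pow_right p).zpow_right a).eq
  obtain ⟨m, rfl⟩ := hpn
  refine ⟨g * w ^ (-m), w, ξ, ?_, fun a => (hξc a).eq, hξp, hξ1, ?_⟩
  · intro h
    apply hgw
    have h2 : Commute (g * w ^ (-m) * w ^ m) w := (show Commute (g * w ^ (-m)) w from h).mul_left ((Commute.refl w).zpow_left m)
    rw [mul_assoc, ← zpow_add, neg_add_cancel, zpow_zero, mul_one] at h2
    exact h2.eq
  · have hv : w ^ (-m) * g = ξ ^ m * (g * w ^ (-m)) := by
      have h1 : g * w ^ (-m) * g⁻¹ = ξ ^ (-m) * w ^ (-m) := by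
        rw [← conj_zpow, hi, (hξc w).mul_zpow]
      rw [mul_inv_eq_iff_eq_mul] at h1
      rw [h1, ← mul_assoc, ← mul_assoc, ← zpow_add]; simp
    rw [pow_mul_of_comm ((hξc g).zpow_left m) ((hξc _).zpow_left m) hv p]
    refine ⟨m, ?_⟩
    rw [← hn, ← zpow_natCast (w ^ (-m)), ← zpow_mul, ← zpow_add, ← zpow_natCast (ξ ^ m), ← zpow_mul]
    rw [show (p : ℤ) * m + -m * p = 0 by ring, zpow_zero, mul_one]

lemma Good.comm_of_odd_pgroup [Finite Γ] (hG : Good Γ) {p : ℕ} [hp : Fact p.Prime] (hp2 : p ≠ 2) (hP : IsPGroup p Γ) :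
    ∀ a b : Γ, a * b = b * a := by
  by_contra hna
  obtain ⟨h, w, ξ, hhw, hξ, hξp, hξ1, i, hi⟩ := hG.pgroup_trick hP hna
  have : p ∣ p * (p - 1) / 2 := by
    have hodd := hp.1.odd_of_ne_two hp2
    obtain ⟨k, hk⟩ := hodd
    rw [show p * (p - 1) / 2 = p * k by
      rw [show p - 1 = 2 * k by omega, mul_left_comm, Nat.mul_div_cancel_left _ (by norm_num)]]
    exact ⟨k, rfl⟩
  obtain ⟨j, hj⟩ := this
  have h1 : h ^ p = 1 := by
    rw [hi, hj]; push_cast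
    rw [← mul_assoc, mul_comm i, mul_assoc, zpow_mul, zpow_natCast, hξp, one_zpow]
  have ho : orderOf ξ = p := orderOf_eq_prime hξp hξ1
  obtain ⟨k, rfl⟩ := hG.mem_zpowers (h := h) (k := ξ) (hξ h).symm (by rw [ho, h1])
  exact hhw ((show Commute ξ w from hξ w).zpow_left k).eq

lemma Good.sylow_cyclic [Finite Γ] (hG : Good Γ) {p : ℕ} [hp : Fact p.Prime] (hp2 : p ≠ 2) (P : Subgroup Γ)
    (hP : IsPGroup p P) : IsCyclic P := by
  refine hG.cyc _ fun a ha b hb => ?_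
  exact congrArg Subtype.val ((hG.sub P).comm_of_odd_pgroup hp2 hP ⟨a, ha⟩ ⟨b, hb⟩)

/-- Subgroups of odd prime order are conjugate. -/
lemma Good.conj_of_order [Finite Γ] (hG : Good Γ) {p : ℕ} [hp : Fact p.Prime] (hp2 : p ≠ 2) {a b : Γ}
    (ha : orderOf a = p) (hb : orderOf b = p) : ∃ g, g * b * g⁻¹ ∈ Subgroup.zpowers a := by
  have hA : IsPGroup p (Subgroup.zpowers a) := IsPGroup.of_card (n := 1) (by rw [Nat.card_zpowers, ha, pow_one])
  have hB : IsPGroup p (Subgroup.zpowers b) := IsPGroup.of_card (n := 1) (by rw [Nat.card_zpowers, hb, pow_one])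
  obtain ⟨P, hAP⟩ := hA.exists_le_sylow
  obtain ⟨Q, hBQ⟩ := hB.exists_le_sylow
  obtain ⟨g, rfl⟩ := MulAction.exists_smul_eq Γ Q P
  refine ⟨g, ?_⟩
  have h1 : g * b * g⁻¹ ∈ (g • Q : Sylow p Γ) := by
    have : b ∈ Q := hBQ (Subgroup.mem_zpowers b)
    exact ⟨b, this, rfl⟩
  have h2 : a ∈ (g • Q : Sylow p Γ) := hAP (Subgroup.mem_zpowers a)
  have hcomm := (hG.sub _).comm_of_odd_pgroup hp2 (g • Q : Sylow p Γ).2 ⟨_, h1⟩ ⟨_, h2⟩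
  refine hG.mem_zpowers (congrArg Subtype.val hcomm) ?_
  rw [ha, conj_pow, ← hb, pow_orderOf_eq_one]; simp
end

/-! ### Anticommutators are scalar -/

section
variable {Γ : Type*} [Group Γ] {ρ : Γ →* Mat}

lemma sum_pow_scalar {w : Γ} {c : ℝ} (h : ρ w + ρ w⁻¹ = c • 1) (k : ℕ) :
    ∃ d : ℝ, ρ (w ^ k) + ρ (w ^ k)⁻¹ = d • 1 := by
  induction k using Nat.strong_induction_on with
  | _ k ih =>
    match k with
    | 0 => exact ⟨2, by simp [two_smul]⟩
    | 1 => exact ⟨c, by simpa using h⟩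
    | k + 2 =>
      obtain ⟨d, hd⟩ := ih (k + 1) (by omega)
      obtain ⟨d', hd'⟩ := ih k (by omega)
      refine ⟨d * c - d', ?_⟩
      have e : (ρ (w ^ (k + 1)) + ρ (w ^ (k + 1))⁻¹) * (ρ w + ρ w⁻¹) =
          (ρ (w ^ (k + 2)) + ρ (w ^ (k + 2))⁻¹) + (ρ (w ^ k) + ρ (w ^ k)⁻¹) := by
        simp only [mul_add, add_mul, ← map_mul]
        rw [show w ^ (k + 1) * w = w ^ (k + 2) by rw [← pow_succ], show (w ^ (k + 1))⁻¹ * w = (w ^ k)⁻¹ by rw [pow_succ']; simp,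
          show w ^ (k + 1) * w⁻¹ = w ^ k by rw [pow_succ]; simp,
          show (w ^ (k + 1))⁻¹ * w⁻¹ = (w ^ (k + 2))⁻¹ by rw [← mul_inv_rev, ← pow_succ']]
        abel
      rw [hd, h, hd', smul_mul_smul_comm, one_mul] at e
      rw [sub_smul, e]; abel

variable [Finite Γ]

/-- An anticommutator of square `20` comes from an element of order five. -/
lemma IsX.opp_order (hρ : FreeRep ρ) {x y : Mat} (hx : IsX ρ x) (hy : IsX ρ y)
    (h : T x y * T x y = (20 : ℝ) • 1) :
    ∃ w : Γ, orderOf w = 5 ∧ T x y = (4 : ℝ) • (ρ w + ρ w⁻¹) + (2 : ℝ) • 1 := by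
  obtain ⟨a, -, -, ha, ha'⟩ := hx.data hρ
  obtain ⟨b, -, -, hb, hb'⟩ := hy.data hρ
  have h1 := IsX.sum_T ha ha' hb hb'
  have h2 := IsX.sum_T (y := -y) (b := b⁻¹) ha ha' hb' (by rw [inv_inv, neg_neg, hb])
  rw [T_neg_right] at h2
  have hs : ρ (a * b) + ρ (a * b)⁻¹ + ρ (a * b⁻¹) + ρ (a * b⁻¹)⁻¹ = 1 := by
    have : (4 : ℝ) • (ρ (a * b) + ρ (a * b)⁻¹ + ρ (a * b⁻¹) + ρ (a * b⁻¹)⁻¹) = (4 : ℝ) • 1 := by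
      linear_combination (norm := module) -h1 - h2
    exact smul_right_injective _ (by norm_num : (4 : ℝ) ≠ 0) this
  have F : ∀ c : ℝ, ρ (a * b) + ρ (a * b)⁻¹ = c • 1 → (4 * c - 2) * (4 * c - 2) ≠ 20 → False := by
    intro c hc hne
    rw [hc, smul_smul, ← sub_smul] at h1
    rw [h1, sq_smul_one] at h
    exact smul_one_ne hne h
  rcases hρ.sum_inv (hρ.order_of_sum_eq_one hs) with r | r | r | r | ⟨ho, r⟩
  · exact (F _ r (by norm_num)).elim
  · exact (F _ r (by norm_num)).elim
  · exact (F _ r (by norm_num)).elim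
  · exact (F _ r (by norm_num)).elim
  · refine ⟨(a * b) ^ 2, by rw [orderOf_pow, ho]; norm_num, ?_⟩
    have huv := rho_mul_inv (ρ := ρ) (a * b)
    have hvu := rho_inv_mul (ρ := ρ) (a * b)
    rw [h1, ← inv_pow, map_pow, map_pow]
    simp only [mul_add, add_mul, huv, hvu] at r
    simp only [pow_two]
    linear_combination (norm := module) (-4 : ℝ) • r

/-- All anticommutators are scalar. Those not of square `20` are so by `IsX.tri`. The elements of order
five generate conjugate subgroups, so one scalar anticommutator of square `20` forces all of these to be scalar; if
there is none, `no_nonscalar` applies. -/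
lemma all_scalar (hρ : FreeRep ρ) (hD : PropD ρ) {x y : Mat} (hx : IsX ρ x) (hy : IsX ρ y) :
    ∃ c : ℝ, T x y = c • 1 := by
  classical
  by_contra hne
  have hopp : T x y * T x y = (20 : ℝ) • 1 := by
    rcases hx.tri hρ hy with h | h | h | h | h
    · exact (hne ⟨_, h⟩).elim
    · exact (hne ⟨_, h⟩).elim
    · exact (hne ⟨_, h⟩).elim
    · exact (hne ⟨_, h⟩).elim
    · exact h
  refine no_nonscalar hρ hD ?_ hx hy hopp
  intro x' y' hx' hy' h' c hc
  apply hne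
  obtain ⟨w, hw, e⟩ := hx.opp_order hρ hy hopp
  obtain ⟨w', hw', e'⟩ := hx'.opp_order hρ hy' h'
  have : Fact (Nat.Prime 5) := ⟨by norm_num⟩
  obtain ⟨g, hg⟩ := hρ.good.conj_of_order (p := 5) (by norm_num) hw' hw
  rw [mem_zpowers_iff_mem_range_orderOf, Finset.mem_image] at hg
  obtain ⟨k, -, hk⟩ := hg
  have hsc : ρ w' + ρ w'⁻¹ = ((c - 2) / 4) • 1 := by
    rw [e'] at hc
    linear_combination (norm := module) (1/4 : ℝ) • hc
  obtain ⟨d, hd⟩ := sum_pow_scalar hsc k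
  rw [hk, show (g * w * g⁻¹)⁻¹ = g * w⁻¹ * g⁻¹ by group] at hd
  have hfin : ρ w + ρ w⁻¹ = d • 1 := by
    have h1 : ρ w + ρ w⁻¹ = ρ g⁻¹ * (ρ (g * w * g⁻¹) + ρ (g * w⁻¹ * g⁻¹)) * ρ g := by
      simp only [mul_add, add_mul, ← map_mul]
      congr 2 <;> group
    rw [h1, hd, mul_smul_comm, mul_one, smul_mul_assoc, rho_inv_mul]
  exact ⟨4 * d + 2, by rw [e, hfin]; module⟩

/-- The possible values of the (scalar) anticommutators. -/
lemma IsX.values (hρ : FreeRep ρ) (hD : PropD ρ) {x y : Mat} (hx : IsX ρ x) (hy : IsX ρ y) :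
    ∃ c : ℝ, T x y = c • 1 ∧ (c = -6 ∨ c = 6 ∨ c = -2 ∨ c = 2 ∨ c * c = 20) := by
  obtain ⟨c, hc⟩ := all_scalar hρ hD hx hy
  refine ⟨c, hc, ?_⟩
  have F : ∀ d : ℝ, c • (1 : Mat) = d • 1 → c = d := fun d h => by
    by_contra hne; exact smul_one_ne hne h
  rcases hx.tri hρ hy with h | h | h | h | h
  · left; exact F _ (hc ▸ h)
  · right; left; exact F _ (hc ▸ h)
  · right; right; left; exact F _ (hc ▸ h)
  · right; right; right; left; exact F _ (hc ▸ h)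
  · right; right; right; right
    rw [hc, sq_smul_one] at h
    by_contra hne; exact smul_one_ne hne h
end

/-! ### Fusion in four-groups -/

section
variable {M : Type*} [Group M]

/-- Let `V = {1, x, y, w}` be a four-group containing all `2`-elements that centralize it. If `x`
and `y` are conjugate and the centralizer of `w` contains a Sylow `2`-subgroup, then `x` and `y`
are conjugate under the normalizer of `V`: either `V` is a Sylow subgroup and Burnside's fusion
argument applies, or a `2`-element centralizing `w` normalizes `V` without lying in it. -/
lemma four_group_swap [Finite M] {V : Subgroup M} {x y w : M} (hV : ∀ v, v ∈ V ↔ v = 1 ∨ v = x ∨ v = y ∨ v = w)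
    (hsq : ∀ v ∈ V, v * v = 1) (hwx : w ≠ x) (hx1 : x ≠ 1) (hy : y = x * w)
    (hab : ∀ a ∈ V, ∀ b ∈ V, a * b = b * a)
    (hself : ∀ c : M, (∃ n : ℕ, c ^ 2 ^ n = 1) → (∀ v ∈ V, c * v = v * c) → c ∈ V)
    {g : M} (hg : g * x * g⁻¹ = y) (P : Sylow 2 M) (hP : ∀ s ∈ P, s * w = w * s) :
    ∃ m : M, (∀ v ∈ V, m * v * m⁻¹ ∈ V) ∧ m * x * m⁻¹ = y := by
  have : Fact (Nat.Prime 2) := ⟨Nat.prime_two⟩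
  have hxV : x ∈ V := (hV x).2 (by simp)
  have hyV : y ∈ V := (hV y).2 (by simp)
  have hwV : w ∈ V := (hV w).2 (by simp)
  have hV2 : IsPGroup 2 V := fun v => ⟨1, Subtype.ext (by
    rw [pow_one, pow_two]; exact hsq v v.2)⟩
  by_cases hc : ∃ Q : Sylow 2 M, (Q : Subgroup M) = V
  · obtain ⟨Q, rfl⟩ := hc
    obtain ⟨n, hn, e⟩ := Q.conj_eq_normalizer_conj_of_mem_centralizer x g⁻¹
      (Subgroup.mem_centralizer_iff.2 fun v hv => hab v hv x hxV)
      (by rw [inv_inv, hg]; exact Subgroup.mem_centralizer_iff.2 fun v hv => hab v hv y hyV)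
    rw [inv_inv, hg] at e
    refine ⟨n⁻¹, fun v hv => ?_, by rw [inv_inv, ← e]⟩
    have := (Subgroup.mem_normalizer_iff.1 (inv_mem hn) v).1 hv
    exact this
  · -- a Sylow subgroup `R` of the centralizer of `w` containing `V`
    set C := Subgroup.centralizer ({w} : Set M) with hC
    have hVC : V ≤ C := fun v hv => Subgroup.mem_centralizer_singleton_iff.2 (hab v hv w hwV)
    have hPC : (P : Subgroup M) ≤ C := fun s hs => Subgroup.mem_centralizer_singleton_iff.2 (hP s hs)
    obtain ⟨R, hR⟩ := (hV2.comap_subtype (K := C)).exists_le_sylow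
    set R' : Subgroup M := (R : Subgroup C).map C.subtype with hR'
    have hR'2 : IsPGroup 2 R' := R.2.map _
    have hVR : V ≤ R' := fun v hv => ⟨⟨v, hVC hv⟩, hR (show v ∈ V from hv), rfl⟩
    have hcard : Nat.card R' = Nat.card P := by
      rw [hR', Subgroup.card_subtype, Nat.card_congr (R.equiv (P.subtype hPC)).toEquiv]
      exact Nat.card_congr (Subgroup.subgroupOfEquivOfLe hPC).toEquiv
    have hne : V ≠ R' := by
      rintro h
      apply hc
      refine ⟨Sylow.ofCard V ?_, rfl⟩
      rw [h, hcard, P.card_eq_multiplicity]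
    have hnil : Group.IsNilpotent R' := hR'2.isNilpotent
    have hlt := Group.normalizerCondition_of_isNilpotent (G := R') (V.subgroupOf R') (by
      rw [lt_top_iff_ne_top, Ne, Subgroup.subgroupOf_eq_top]
      exact fun h => hne (le_antisymm hVR h))
    obtain ⟨m, hm, hmV⟩ := SetLike.exists_of_lt hlt
    have hmn : ∀ v ∈ V, (m : M) * v * (m : M)⁻¹ ∈ V := fun v hv =>
      (Subgroup.mem_normalizer_iff.1 hm ⟨v, hVR hv⟩).1 (show v ∈ V from hv)
    have hmw : (m : M) * w = w * m := by
      obtain ⟨⟨c, hc⟩, -, e⟩ := m.2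
      rw [← e]; exact Subgroup.mem_centralizer_singleton_iff.1 hc
    refine ⟨m, hmn, ?_⟩
    rcases (hV _).1 (hmn x hxV) with h | h | h | h
    · exact (hx1 (conj_eq_one_iff.1 h)).elim
    · exfalso
      apply hmV
      have hmx : (m : M) * x = x * m := by rw [mul_inv_eq_iff_eq_mul] at h; exact h
      refine hself m ?_ ?_
      · obtain ⟨n, hn⟩ := hR'2 m
        exact ⟨n, by simpa using congrArg Subtype.val hn⟩
      · have hmy : (m : M) * y = y * m := by
          rw [hy, ← mul_assoc, hmx, mul_assoc, hmw, mul_assoc]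
        intro v hv
        rcases (hV _).1 hv with h | h | h | h
        · simp [h]
        · rw [h, hmx]
        · rw [h, hmy]
        · rw [h, hmw]
    · exact h
    · exact (hwx.symm (by
        have h2 : (m : M) * w * (m : M)⁻¹ = w := by rw [hmw]; group
        exact mul_left_cancel (mul_right_cancel (h.trans h2.symm)))).elim

lemma three_dvd_of_cycle {c x a b : M} (ha : a ≠ x) (hb : b ≠ x) (h1 : c * x * c⁻¹ = a)
    (h2 : c * a * c⁻¹ = b) (h3 : c * b * c⁻¹ = x) : 3 ∣ Nat.card M := by
  refine dvd_trans ?_ (orderOf_dvd_natCard c)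
  have hc3 : c ^ 3 * x * (c ^ 3)⁻¹ = x := by
    calc c ^ 3 * x * (c ^ 3)⁻¹ = c * (c * (c * x * c⁻¹) * c⁻¹) * c⁻¹ := by rw [pow_three]; group
      _ = x := by rw [h1, h2, h3]
  have hk : ∀ k : ℕ, c ^ (3 * k) * x * (c ^ (3 * k))⁻¹ = x := by
    intro k
    induction k with
    | zero => simp
    | succ k ih =>
      calc c ^ (3 * (k + 1)) * x * (c ^ (3 * (k + 1)))⁻¹
          = c ^ 3 * (c ^ (3 * k) * x * (c ^ (3 * k))⁻¹) * (c ^ 3)⁻¹ := by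
            rw [mul_add, mul_one, add_comm, pow_add]; group
        _ = x := by rw [ih, hc3]
  by_contra hn
  have hn1 := pow_orderOf_eq_one c
  have hdiv := Nat.div_add_mod (orderOf c) 3
  have hlt := Nat.mod_lt (orderOf c) (by norm_num : 0 < 3)
  have hx : c ^ (orderOf c % 3) * x * (c ^ (orderOf c % 3))⁻¹ = x := by
    have e : c ^ (3 * (orderOf c / 3)) * c ^ (orderOf c % 3) = 1 := by
      rw [← pow_add, hdiv, hn1]
    rw [eq_inv_of_mul_eq_one_right e, inv_inv]
    nth_rewrite 1 [← hk (orderOf c / 3)]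
    group
  rw [Nat.dvd_iff_mod_eq_zero] at hn
  obtain h | h : orderOf c % 3 = 1 ∨ orderOf c % 3 = 2 := by omega
  · rw [h, pow_one, h1] at hx; exact ha hx
  · rw [h] at hx
    apply hb
    rw [pow_two] at hx
    rw [← h2, ← h1]
    refine Eq.trans ?_ hx
    group

/-- If the three involutions of a four-group `{1, z, j, zj}` containing all `2`-elements that
centralize it are conjugate, and one of them centralizes a Sylow `2`-subgroup, then the normalizer
of the four-group permutes them transitively, so `3` divides the order of the group. -/
lemma three_dvd_of_fusion [Finite M] {z j : M} (hz : z * z = 1) (hj : j * j = 1) (hz1 : z ≠ 1) (hj1 : j ≠ 1)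
    (hzj : z ≠ j) (hcomm : z * j = j * z)
    (hself : ∀ c : M, (∃ n : ℕ, c ^ 2 ^ n = 1) → c * z = z * c → c * j = j * c →
      c = 1 ∨ c = z ∨ c = j ∨ c = z * j)
    {g g' : M} (hg : g * z * g⁻¹ = j) (hg' : g' * z * g'⁻¹ = z * j)
    (P : Sylow 2 M) (hP : ∀ s ∈ P, s * z = z * s) : 3 ∣ Nat.card M := by
  have e1 : z * (z * j) = j := by rw [← mul_assoc, hz, one_mul]
  have e2 : j * (z * j) = z := by rw [← mul_assoc, ← hcomm, mul_assoc, hj, mul_one]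
  have e3 : z * j * z = j := by rw [mul_assoc, ← hcomm, e1]
  have e4 : z * j * j = z := by rw [mul_assoc, hj, mul_one]
  have e5 : z * j * (z * j) = 1 := by rw [mul_assoc, e2, hz]
  have e6 : j * z = z * j := hcomm.symm
  let V : Subgroup M :=
    { carrier := {v | v = 1 ∨ v = z ∨ v = j ∨ v = z * j}
      mul_mem' := by
        rintro a b (rfl | rfl | rfl | rfl) (rfl | rfl | rfl | rfl) <;>
          simp [hz, hj, e1, e2, e3, e4, e5, e6]
      one_mem' := by simp
      inv_mem' := by
        rintro a (rfl | rfl | rfl | rfl)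
        · simp
        · rw [inv_eq_of_mul_eq_one_left hz]; simp
        · rw [inv_eq_of_mul_eq_one_left hj]; simp
        · rw [inv_eq_of_mul_eq_one_left e5]; simp }
  have hV : ∀ v, v ∈ V ↔ v = 1 ∨ v = z ∨ v = j ∨ v = z * j := fun v => Iff.rfl
  have hsq : ∀ v ∈ V, v * v = 1 := by
    rintro a (rfl | rfl | rfl | rfl) <;> simp [hz, hj, e5]
  have hab : ∀ a ∈ V, ∀ b ∈ V, a * b = b * a := by
    rintro a (rfl | rfl | rfl | rfl) b (rfl | rfl | rfl | rfl) <;>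
      simp [hz, hj, e1, e2, e3, e4, e5, e6]
  have hself' : ∀ c : M, (∃ n : ℕ, c ^ 2 ^ n = 1) → (∀ v ∈ V, c * v = v * c) → c ∈ V :=
    fun c h1 h2 => hself c h1 (h2 z (by simp [hV])) (h2 j (by simp [hV]))
  have hPc : ∀ (g w : M), g * z * g⁻¹ = w → ∀ s ∈ g • P, s * w = w * s := by
    rintro g w rfl s hs
    obtain ⟨t, ht, rfl⟩ : ∃ t ∈ P, g * t * g⁻¹ = s := by
      obtain ⟨t, ht, e⟩ := hs; exact ⟨t, ht, e⟩
    calc g * t * g⁻¹ * (g * z * g⁻¹) = g * (t * z) * g⁻¹ := by group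
      _ = g * (z * t) * g⁻¹ := by rw [hP t ht]
      _ = _ := by group
  have n1 : z * j ≠ z := by simpa using hj1
  have n2 : z * j ≠ j := by simpa using hz1
  have n3 : z * j ≠ 1 := fun h => hzj (by rw [← mul_right_inj z, hz, h])
  obtain ⟨m, hm, hmz⟩ := four_group_swap hV hsq n1 hz1 e1.symm hab hself' hg (g' • P) (hPc g' _ hg')
  obtain ⟨m', hm', hmz'⟩ := four_group_swap (V := V) (x := z) (y := z * j) (w := j)
    (fun v => by rw [hV]; tauto) hsq hzj.symm hz1 rfl hab hself' hg' (g • P) (hPc g _ hg)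
  have cmul : ∀ a b n : M, n * (a * b) * n⁻¹ = (n * a * n⁻¹) * (n * b * n⁻¹) := fun a b n => by group
  have cinj : ∀ {n a b : M}, n * a * n⁻¹ = n * b * n⁻¹ → a = b := fun h =>
    mul_left_cancel (mul_right_cancel h)
  rcases (hV _).1 (hm j (by simp [hV])) with h | h | h | h
  · exact (hj1 (conj_eq_one_iff.1 h)).elim
  · rcases (hV _).1 (hm' (z * j) (by simp [hV])) with h' | h' | h' | h'
    · exact (n3 (conj_eq_one_iff.1 h')).elim
    · refine three_dvd_of_cycle (c := m * m') (x := z) (a := z * j) (b := j) n1 hzj.symm ?_ ?_ ?_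
      · rw [mul_inv_rev, show m * m' * z * (m'⁻¹ * m⁻¹) = m * (m' * z * m'⁻¹) * m⁻¹ by group, hmz',
          cmul, hmz, h, e6]
      · rw [mul_inv_rev, show m * m' * (z * j) * (m'⁻¹ * m⁻¹) = m * (m' * (z * j) * m'⁻¹) * m⁻¹ by group,
          h', hmz]
      · have h2 : m' * j * m'⁻¹ = j := by
          rw [cmul, hmz', ← mul_right_inj (z * j), ← mul_assoc, e5, one_mul, e3] at h'
          exact h'
        rw [mul_inv_rev, show m * m' * j * (m'⁻¹ * m⁻¹) = m * (m' * j * m'⁻¹) * m⁻¹ by group, h2, h]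
    · refine three_dvd_of_cycle (c := m') (x := z) (a := z * j) (b := j) n1 hzj.symm hmz' h' ?_
      rw [← e3, cmul, h', hmz', e2]
    · exact (n1 (cinj (h'.trans hmz'.symm))).elim
  · exact (hzj (cinj (h.trans hmz.symm)).symm).elim
  · refine three_dvd_of_cycle (c := m) (x := z) (a := j) (b := z * j) hzj.symm n1 hmz h ?_
    rw [cmul, hmz, h, e2]
end

/-! ### Groups of order prime to three -/

section
variable {Γ : Type*} [Group Γ] {ε : Γ}

lemma Good.eps_comm (hG : Good Γ) (hε : ε * ε = 1) (hε1 : ε ≠ 1) (g : Γ) : g * ε = ε * g := by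
  have h := hG.inv (g * ε * g⁻¹) ε
    (by rw [show g * ε * g⁻¹ * (g * ε * g⁻¹) = g * (ε * ε) * g⁻¹ by group, hε]; group)
    (fun h => hε1 (conj_eq_one_iff.1 h)) hε hε1
  rwa [mul_inv_eq_iff_eq_mul] at h

lemma Good.eq_of_sq_one (hG : Good Γ) (hε : ε * ε = 1) (hε1 : ε ≠ 1) {c : Γ} (hc : c * c = 1) :
    c = 1 ∨ c = ε := by
  by_cases h : c = 1
  · exact Or.inl h
  · exact Or.inr (hG.inv c ε hc h hε hε1)

lemma Good.two_elt (hG : Good Γ) (hε : ε * ε = 1) (hε1 : ε ≠ 1) {c : Γ}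
    (hc : ∃ n : ℕ, c ^ 2 ^ n = 1) (h1 : c ≠ 1) (h2 : c ≠ ε) :
    ∃ k : ℕ, c ^ k * c ^ k = ε ∧ (k = 1 ∨ Even k) := by
  obtain ⟨n, hn⟩ := hc
  obtain ⟨m, -, hm⟩ := (Nat.dvd_prime_pow Nat.prime_two).1 (orderOf_dvd_of_pow_eq_one hn)
  match m with
  | 0 => exact (h1 (by rwa [pow_zero, orderOf_eq_one_iff] at hm)).elim
  | 1 =>
    have h := pow_orderOf_eq_one c
    rw [hm, pow_one, pow_two] at h
    rcases hG.eq_of_sq_one hε hε1 h with h | h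
    · exact (h1 h).elim
    · exact (h2 h).elim
  | m + 2 =>
    refine ⟨2 ^ m, ?_, ?_⟩
    · have hne : c ^ 2 ^ (m + 1) ≠ 1 := pow_ne_one_of_lt_orderOf (by positivity) (by
        rw [hm]; exact Nat.pow_lt_pow_right (by norm_num) (by omega))
      have e : c ^ 2 ^ m * c ^ 2 ^ m = c ^ 2 ^ (m + 1) := by rw [← pow_add, pow_succ]; congr 1; ring
      rw [e]
      refine hG.inv _ _ ?_ hne hε hε1
      rw [← pow_add, show 2 ^ (m + 1) + 2 ^ (m + 1) = 2 ^ (m + 2) by ring, ← hm, pow_orderOf_eq_one]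
    · match m with
      | 0 => left; rfl
      | m + 1 => right; exact ⟨2 ^ m, by ring⟩

lemma Good.four_comm (hG : Good Γ) (hε : ε * ε = 1) (hε1 : ε ≠ 1) {y z : Γ} (hy : y * y = ε)
    (hz : z * z = ε) (h : y * z = z * y) : y = z ∨ y = ε * z := by
  have hc : Commute y z⁻¹ := (show Commute y z from h).inv_right
  have : y * z⁻¹ * (y * z⁻¹) = 1 := by
    rw [mul_assoc, ← mul_assoc z⁻¹, ← hc.eq, ← mul_assoc, ← mul_assoc, hy, mul_assoc, ← mul_inv_rev, hz,
      mul_inv_cancel]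
  rcases hG.eq_of_sq_one hε hε1 this with h | h
  · left; rwa [mul_inv_eq_one] at h
  · right; rwa [mul_inv_eq_iff_eq_mul] at h

/-- A `2`-group with unique involution `ε`, other than `{1, ε}`, has a normal subgroup of order
four. -/
lemma Good.exists_four [Finite Γ] (hG : Good Γ) (hε : ε * ε = 1) (hε1 : ε ≠ 1) (hP : IsPGroup 2 Γ)
    {c : Γ} (h1 : c ≠ 1) (h2 : c ≠ ε) :
    ∃ z : Γ, z * z = ε ∧ ∀ s, s * z * s⁻¹ = z ∨ s * z * s⁻¹ = ε * z := by
  have : Fact (Nat.Prime 2) := ⟨Nat.prime_two⟩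
  let E : Subgroup Γ :=
    { carrier := {v | v = 1 ∨ v = ε}
      mul_mem' := by rintro a b (rfl | rfl) (rfl | rfl) <;> simp [hε]
      one_mem' := by simp
      inv_mem' := by
        rintro a (rfl | rfl)
        · simp
        · rw [inv_eq_of_mul_eq_one_left hε]; simp }
  have hE : ∀ v, v ∈ E ↔ v = 1 ∨ v = ε := fun v => Iff.rfl
  have hEn : E.Normal := ⟨by
    rintro a (rfl | rfl) g
    · left; group
    · right; rw [hG.eps_comm hε hε1]; group⟩
  have hQ : IsPGroup 2 (Γ ⧸ E) := hP.to_quotient _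
  have hnt : Nontrivial (Γ ⧸ E) := by
    rw [QuotientGroup.nontrivial_iff]
    intro htop
    have : c ∈ E := by rw [htop]; trivial
    rcases this with h | h
    · exact h1 h
    · exact h2 h
  have hc := hQ.center_nontrivial
  have hdvd : 2 ∣ Nat.card (Subgroup.center (Γ ⧸ E)) := by
    rcases (hQ.to_subgroup (Subgroup.center (Γ ⧸ E))).card_eq_or_dvd with h | h
    · have := Finite.one_lt_card (α := Subgroup.center (Γ ⧸ E)); omega
    · exact h
  obtain ⟨⟨xb, hxb⟩, hxo⟩ := exists_prime_orderOf_dvd_card' 2 hdvd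
  obtain ⟨z, rfl⟩ := QuotientGroup.mk_surjective xb
  rw [Subgroup.orderOf_mk] at hxo
  have hzE : z ∉ E := by
    intro h
    rw [(QuotientGroup.eq_one_iff z).2 h, orderOf_one] at hxo
    omega
  have hz2 : z * z ∈ E := by
    rw [← QuotientGroup.eq_one_iff, ← pow_two, QuotientGroup.mk_pow, ← hxo, pow_orderOf_eq_one]
  refine ⟨z, ?_, fun s => ?_⟩
  · rcases hz2 with h | h
    · exact (hzE (hG.eq_of_sq_one hε hε1 h)).elim
    · exact h
  · have : s * z * s⁻¹ * z⁻¹ ∈ E := by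
      rw [← QuotientGroup.eq_one_iff]
      have := Subgroup.mem_center_iff.1 hxb s
      simp only [QuotientGroup.mk_mul, QuotientGroup.mk_inv, this]
      group
    rcases this with h | h
    · left; rwa [mul_inv_eq_one] at h
    · right; rwa [mul_inv_eq_iff_eq_mul] at h

/-- A `2`-group with unique involution and a central element of order four is abelian. -/
lemma Good.comm_of_central_four [Finite Γ] (hG : Good Γ) (hε : ε * ε = 1) (hε1 : ε ≠ 1)
    (hP : IsPGroup 2 Γ) {z : Γ} (hz : z * z = ε) (hzc : ∀ s, s * z = z * s) :
    ∀ a b : Γ, a * b = b * a := by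
  have : Fact (Nat.Prime 2) := ⟨Nat.prime_two⟩
  by_contra hna
  obtain ⟨h, w, ξ, hhw, hξ, hξp, hξ1, i, hi⟩ := hG.pgroup_trick hP hna
  have hξε : ξ = ε := by
    rcases hG.eq_of_sq_one hε hε1 (by rwa [pow_two] at hξp : ξ * ξ = 1) with h | h
    · exact (hξ1 h).elim
    · exact h
  have h2 : h * h = 1 ∨ h * h = ε := by
    rw [← pow_two, hi, hξε]
    have hz2 : ε ^ (2 : ℤ) = 1 := by rw [zpow_two, hε]
    rcases Int.even_or_odd' (i * ((2 * (2 - 1) / 2 : ℕ) : ℤ)) with ⟨k, hk | hk⟩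
    · left; rw [hk, zpow_mul, hz2, one_zpow]
    · right; rw [hk, zpow_add, zpow_mul, hz2, one_zpow, zpow_one, one_mul]
  have hεw := hG.eps_comm hε hε1 w
  rcases h2 with h2 | h2
  · rcases hG.eq_of_sq_one hε hε1 h2 with h | h
    · exact hhw (by simp [h])
    · exact hhw (by rw [h, hεw])
  · rcases hG.four_comm hε hε1 h2 hz (hzc h) with h | h
    · exact hhw (by rw [h, hzc])
    · exact hhw (by rw [h, ← mul_assoc, hεw, mul_assoc, mul_assoc, hzc])

lemma Good.sq_of_anti (hG : Good Γ) (hε : ε * ε = 1) (hε1 : ε ≠ 1) {z J : Γ} (hz : z * z = ε)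
    (hJ : ∃ n : ℕ, J ^ 2 ^ n = 1) (h : J * z * J⁻¹ = ε * z) : J * J = ε := by
  have hJz : J * z ≠ z * J := by
    intro e
    rw [e, mul_inv_cancel_right] at h
    exact hε1 (by simpa using h.symm)
  obtain ⟨k, hk, hk'⟩ := hG.two_elt hε hε1 hJ (by rintro rfl; simp at hJz)
    (by rintro rfl; exact hJz (hG.eps_comm hε hε1 z).symm)
  rcases hk' with rfl | ⟨l, rfl⟩
  · simpa using hk
  · exfalso
    have hc2 : Commute (J * J) z := by
      have : J * (J * z * J⁻¹) * J⁻¹ = z := by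
        rw [h, show J * (ε * z) * J⁻¹ = J * ε * J⁻¹ * (J * z * J⁻¹) by group, h,
          hG.eps_comm hε hε1 J, mul_inv_cancel_right, ← mul_assoc, hε, one_mul]
      show J * J * z = z * (J * J)
      calc J * J * z = J * (J * z * J⁻¹) * J⁻¹ * (J * J) := by group
        _ = _ := by rw [this]
    have hc : J ^ (l + l) * z = z * J ^ (l + l) := by
      rw [← two_mul, pow_mul, pow_two]; exact hc2.pow_left l
    have hJp : J * J ^ (l + l) = J ^ (l + l) * J := ((Commute.refl J).pow_right _).eq
    apply hJz
    rcases hG.four_comm hε hε1 hk hz hc with e | e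
    · rw [e] at hJp; exact hJp
    · rw [e, ← mul_assoc, hG.eps_comm hε hε1 J, mul_assoc, mul_assoc] at hJp
      exact mul_left_cancel hJp

/-- Transfer to a subgroup `Z` of index twice an odd number: if `J` has no conjugate in `Z` while
`J ^ 2` is central and lies in `Z`, then `J` acts on the cosets of `Z` as an odd permutation. -/
lemma sign_transfer {L : Type*} [Group L] [Finite L] {Z : Subgroup L} {n : ℕ} (hn : Odd n)
    (hidx : Z.index = 2 * n) {J : L} (hJc : ∀ g, g * (J * J) = J * J * g) (hJZ : J * J ∈ Z)
    (hconj : ∀ g, g * J * g⁻¹ ∉ Z) : ∃ f : L →* ℤˣ, f J = -1 := by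
  classical
  have : Fintype (L ⧸ Z) := Fintype.ofFinite _
  let φ := MulAction.toPermHom L (L ⧸ Z)
  refine ⟨Equiv.Perm.sign.comp φ, ?_⟩
  have hφ : ∀ x, φ J x ≠ x := by
    intro x
    obtain ⟨g, rfl⟩ := QuotientGroup.mk_surjective x
    intro h
    have h' : ((J * g : L) : L ⧸ Z) = g := h
    have := QuotientGroup.eq.1 h'.symm
    apply hconj g⁻¹
    rw [inv_inv, mul_assoc]; exact this
  have h2 : φ J ^ 2 = 1 := by
    ext x
    obtain ⟨g, rfl⟩ := QuotientGroup.mk_surjective x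
    rw [pow_two, ← map_mul]
    show ((J * J * g : L) : L ⧸ Z) = g
    rw [← hJc]
    exact (QuotientGroup.eq.2 (by simpa using hJZ)).symm
  show Equiv.Perm.sign (φ J) = -1
  have hemp : IsEmpty (Function.fixedPoints (φ J)) := ⟨fun x => hφ x x.2⟩
  have hcard : Fintype.card (L ⧸ Z) = 2 * n := by rw [← Nat.card_eq_fintype_card]; exact hidx
  rw [Equiv.Perm.sign_of_pow_two_eq_one h2, Fintype.card_eq_zero (α := Function.fixedPoints (φ J)),
    hcard, Nat.sub_zero, Nat.mul_div_cancel_left _ (by norm_num), hn.neg_one_pow]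

/-- Homomorphisms to `2`-groups are trivial on a group generated by elements of odd order. -/
lemma hom_trivial {L H : Type*} [Group L] [Group H] (hgen : Subgroup.closure {g : L | Odd (orderOf g)} = ⊤)
    (hH : IsPGroup 2 H) (f : L →* H) (g : L) : f g = 1 := by
  have hg : g ∈ Subgroup.closure {g : L | Odd (orderOf g)} := by rw [hgen]; trivial
  have hle : Subgroup.closure {g : L | Odd (orderOf g)} ≤ f.ker := by
    rw [Subgroup.closure_le]
    intro g hg
    obtain ⟨n, hn⟩ := hH (f g)
    have h1 : orderOf (f g) ∣ orderOf g := orderOf_map_dvd f g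
    have h2 : orderOf (f g) ∣ 2 ^ n := orderOf_dvd_of_pow_eq_one hn
    have hcop : Nat.Coprime (orderOf g) (2 ^ n) :=
      Nat.Coprime.pow_right _ (Nat.coprime_two_right.2 hg)
    exact orderOf_eq_one_iff.1 (Nat.eq_one_of_dvd_coprimes hcop h1 h2)
  exact hle hg

/-- A finite group of order prime to `3` with cyclic abelian subgroups and at most one involution,
if generated by elements of odd order, has odd order. -/
lemma Good.odd_of_odd_gen {L : Type*} [Group L] [Finite L] (hG : Good L) (h3 : ¬ 3 ∣ Nat.card L)
    (hgen : Subgroup.closure {g : L | Odd (orderOf g)} = ⊤) : Odd (Nat.card L) := by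
  have : Fact (Nat.Prime 2) := ⟨Nat.prime_two⟩
  by_contra hodd
  rw [Nat.not_odd_iff_even, even_iff_two_dvd] at hodd
  obtain ⟨ε, hεo⟩ := exists_prime_orderOf_dvd_card' 2 hodd
  have hε : ε * ε = 1 := by rw [← pow_two, ← hεo, pow_orderOf_eq_one]
  have hε1 : ε ≠ 1 := by rintro rfl; simp at hεo
  have hεc := hG.eps_comm hε hε1
  obtain ⟨S⟩ : Nonempty (Sylow 2 L) := inferInstance
  have hεS : ε ∈ S := by
    have hE : IsPGroup 2 (Subgroup.zpowers ε) :=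
      IsPGroup.of_card (n := 1) (by rw [Nat.card_zpowers, hεo, pow_one])
    have hEn : (Subgroup.zpowers ε).Normal := ⟨by
      intro n hn g
      obtain ⟨k, rfl⟩ := hn
      have : g * ε ^ k * g⁻¹ = ε ^ k := by
        rw [((show Commute g ε from hεc g).zpow_right k).eq]; group
      exact ⟨k, this.symm⟩⟩
    exact hE.le_sylow_of_normal S (Subgroup.mem_zpowers ε)
  have hpow : ∀ s ∈ S, ∃ n : ℕ, s ^ 2 ^ n = 1 := fun s hs => by
    obtain ⟨n, hn⟩ := S.2 ⟨s, hs⟩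
    exact ⟨n, by simpa using congrArg Subtype.val hn⟩
  -- a cyclic Sylow `2`-subgroup is a homomorphic image
  have hncyc : ¬ IsCyclic S := by
    intro hc
    have hmin : (Nat.card L).minFac = 2 := (Nat.minFac_eq_two_iff _).2 hodd
    have hcompl := hc.isComplement' hmin
    have hker : (MonoidHom.transferSylow S (hc.normalizer_le_centralizer hmin)).ker = ⊤ := by
      rw [eq_top_iff]
      intro g _
      exact hom_trivial hgen S.2 _ g
    rw [hker] at hcompl
    have : (S : Subgroup L) = ⊥ := by
      have h := hcompl.disjoint
      rwa [top_disjoint] at h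
    have h1 : ε ∈ (⊥ : Subgroup L) := this ▸ hεS
    exact hε1 (Subgroup.mem_bot.1 h1)
  have hGS := hG.sub (S : Subgroup L)
  have hnab : ¬ ∀ a b : S, a * b = b * a := by
    intro h
    exact hncyc (hG.cyc _ fun a ha b hb => congrArg Subtype.val (h ⟨a, ha⟩ ⟨b, hb⟩))
  set ε' : S := ⟨ε, hεS⟩ with hε'
  have hεS2 : ε' * ε' = 1 := Subtype.ext hε
  have hεS1 : ε' ≠ 1 := fun h => hε1 (congrArg Subtype.val h)
  obtain ⟨c, hc1, hc2⟩ : ∃ c : S, c ≠ 1 ∧ c ≠ ε' := by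
    by_contra! h
    apply hnab
    intro a b
    by_cases ha : a = 1
    · simp [ha]
    · rw [h a ha]; exact (hGS.eps_comm hεS2 hεS1 b).symm
  obtain ⟨⟨z, hzS⟩, hz', hzn'⟩ := hGS.exists_four hεS2 hεS1 S.2 hc1 hc2
  have hz : z * z = ε := congrArg Subtype.val hz'
  have hzn : ∀ s ∈ S, s * z * s⁻¹ = z ∨ s * z * s⁻¹ = ε * z := fun s hs => by
    rcases hzn' ⟨s, hs⟩ with h | h
    · left; exact congrArg Subtype.val h
    · right; exact congrArg Subtype.val h
  have hz1 : z ≠ 1 := by rintro rfl; exact hε1 (by rw [← hz, one_mul])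
  have hzε : z ≠ ε := by rintro rfl; exact hε1 (by rw [← hz, hε])
  obtain ⟨J, hJS, hJz⟩ : ∃ J ∈ S, J * z * J⁻¹ = ε * z := by
    by_contra! h
    apply hnab
    refine hGS.comm_of_central_four hεS2 hεS1 S.2 hz' fun s => Subtype.ext ?_
    rcases hzn s s.2 with h' | h'
    · rw [mul_inv_eq_iff_eq_mul] at h'; exact h'
    · exact (h s s.2 h').elim
  have hsq : ∀ J ∈ S, J * z * J⁻¹ = ε * z → J * J = ε := fun J hJ h =>
    hG.sq_of_anti hε hε1 hz (hpow J hJ) h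
  set Z : Subgroup L := (S : Subgroup L) ⊓ Subgroup.centralizer {z} with hZ
  have hmemZ : ∀ s, s ∈ Z ↔ s ∈ S ∧ s * z = z * s := fun s => by
    rw [hZ, Subgroup.mem_inf, Subgroup.mem_centralizer_singleton_iff]; rfl
  have hne : ∀ J : L, J * z * J⁻¹ = ε * z → J * z ≠ z * J := fun J h e => by
    rw [e, mul_inv_cancel_right] at h
    exact hε1 (by simpa using h.symm)
  have hidx : Z.index = 2 * (S : Subgroup L).index := by
    have h1 : Z.relIndex S = 2 := by
      rw [Subgroup.relIndex, Subgroup.index_eq_two_iff]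
      refine ⟨⟨J, hJS⟩, fun b => ?_⟩
      have hb : b ∈ Z.subgroupOf S ↔ (b : L) * z * (b : L)⁻¹ = z := by
        rw [Subgroup.mem_subgroupOf, hmemZ, mul_inv_eq_iff_eq_mul]; simp
      have hbJ : b * ⟨J, hJS⟩ ∈ Z.subgroupOf S ↔ (b : L) * z * (b : L)⁻¹ = ε * z := by
        rw [Subgroup.mem_subgroupOf, hmemZ, ← mul_inv_eq_iff_eq_mul]
        have e : (b : L) * J * z * ((b : L) * J)⁻¹ = ε * (b * z * (b : L)⁻¹) := by
          rw [show (b : L) * J * z * ((b : L) * J)⁻¹ = b * (J * z * J⁻¹) * (b : L)⁻¹ by group, hJz,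
            ← mul_assoc, hεc, mul_assoc, mul_assoc, mul_assoc]
        simp only [Subgroup.coe_mul, e]
        constructor
        · rintro ⟨-, h⟩
          nth_rewrite 2 [← h]
          rw [← mul_assoc, hε, one_mul]
        · intro h
          exact ⟨S.mul_mem b.2 hJS, by rw [h, ← mul_assoc, hε, one_mul]⟩
      rw [hb, hbJ]
      have hd : ε * z ≠ z := by simpa using hε1
      rcases hzn b b.2 with h | h
      · right; exact ⟨h, fun h' => hd (h'.symm.trans h)⟩
      · left; exact ⟨h, fun h' => hd (h.symm.trans h')⟩
    rw [← Subgroup.relIndex_mul_index (inf_le_left : Z ≤ S), h1]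
  -- every element of `S` inverting `z` is conjugate to `z` or `z⁻¹`
  have hfus : ∀ J ∈ S, J * z * J⁻¹ = ε * z → ∃ g, g * J * g⁻¹ = z ∨ g * J * g⁻¹ = ε * z := by
    intro J hJ h
    by_contra! hno
    have hJJ := hsq J hJ h
    obtain ⟨f, hf⟩ := sign_transfer (Z := Z) (J := J) (n := (S : Subgroup L).index)
      (by rw [← Nat.not_even_iff_odd, even_iff_two_dvd]; exact S.not_dvd_index) hidx
      (by rw [hJJ]; exact hεc) (by rw [hJJ, hmemZ]; exact ⟨hεS, (hεc z).symm⟩)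
      (fun g hg => by
        rw [hmemZ] at hg
        have h4 : g * J * g⁻¹ * (g * J * g⁻¹) = ε := by
          rw [show g * J * g⁻¹ * (g * J * g⁻¹) = g * (J * J) * g⁻¹ by group, hJJ, hεc]; group
        rcases hG.four_comm hε hε1 h4 hz hg.2 with e | e
        · exact (hno g).1 e
        · exact (hno g).2 e)
    have := hom_trivial hgen (IsPGroup.of_card (n := 1) (by simp [Nat.card_eq_fintype_card])) f J
    rw [this] at hf
    exact absurd hf (by decide)
  have hJJ := hsq J hJS hJz
  -- pass to the quotient by the centre `{1, ε}`
  let E : Subgroup L :=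
    { carrier := {v | v = 1 ∨ v = ε}
      mul_mem' := by rintro a b (rfl | rfl) (rfl | rfl) <;> simp [hε]
      one_mem' := by simp
      inv_mem' := by
        rintro a (rfl | rfl)
        · simp
        · rw [inv_eq_of_mul_eq_one_left hε]; simp }
  have hE : ∀ v, v ∈ E ↔ v = 1 ∨ v = ε := fun v => Iff.rfl
  have hEn : E.Normal := ⟨by
    rintro a (rfl | rfl) g
    · left; group
    · right; rw [hεc]; group⟩
  set π := QuotientGroup.mk' E with hπ
  have hπs : Function.Surjective π := QuotientGroup.mk'_surjective E
  have hπ1 : ∀ a, π a = 1 ↔ a = 1 ∨ a = ε := fun a => by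
    rw [hπ, QuotientGroup.mk'_apply, QuotientGroup.eq_one_iff, hE]
  have hπε : π ε = 1 := (hπ1 ε).2 (Or.inr rfl)
  have hπe : ∀ a b, π a = π b → a = b ∨ a = ε * b := fun a b h => by
    have : π (a * b⁻¹) = 1 := by rw [map_mul, map_inv, h, mul_inv_cancel]
    rcases (hπ1 _).1 this with h | h
    · left; rwa [mul_inv_eq_one] at h
    · right; rwa [mul_inv_eq_iff_eq_mul] at h
  have hJz' : J * z = ε * (z * J) := by rw [mul_inv_eq_iff_eq_mul] at hJz; rw [hJz, mul_assoc]
  have hnJz := hne J hJz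
  have hcore : ∀ d : L, (∃ n : ℕ, π d ^ 2 ^ n = 1) → d * z = z * d → d * J = J * d → π d = 1 := by
    rintro d ⟨n, hn⟩ hdz hdJ
    rw [hπ1]
    by_contra! hd
    rw [← map_pow, hπ1] at hn
    obtain ⟨k, hk, -⟩ := hG.two_elt hε hε1 (c := d) ⟨n + 1, by
      rw [pow_succ, pow_mul]; rcases hn with h | h <;> simp [h, pow_two, hε]⟩ hd.1 hd.2
    have h1 := hG.four_comm hε hε1 hk hz ((show Commute d z from hdz).pow_left k).eq
    have h2 : d ^ k * J = J * d ^ k := ((show Commute d J from hdJ).pow_left k).eq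
    apply hnJz
    rcases h1 with h1 | h1
    · rw [h1] at h2; exact h2.symm
    · rw [h1, ← mul_assoc, hεc J, mul_assoc, mul_assoc] at h2
      exact (mul_left_cancel h2).symm
  have hZ1 : π z * π z = 1 := by rw [← map_mul, hz, hπε]
  have hJ1 : π J * π J = 1 := by rw [← map_mul, hJJ, hπε]
  have hZJ : π z * π J = π J * π z := by
    rw [← map_mul, ← map_mul, hJz', map_mul π ε, hπε, one_mul]
  have hself : ∀ c : L ⧸ E, (∃ n : ℕ, c ^ 2 ^ n = 1) → c * π z = π z * c → c * π J = π J * c →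
      c = 1 ∨ c = π z ∨ c = π J ∨ c = π z * π J := by
    intro c hc hcz hcJ
    obtain ⟨c, rfl⟩ := hπs c
    -- a product with an element `q` of the quaternion group commutes with `z` and `J`
    have hq : ∀ q : L, π q * π q = 1 → π c * π q = π q * π c → c * q * z = z * (c * q) →
        c * q * J = J * (c * q) → π c = π q := by
      intro q hq hcq h1 h2
      have := hcore (c * q) ?_ h1 h2
      · rw [map_mul] at this
        rw [← mul_left_inj (π q), this, hq]
      · obtain ⟨n, hn⟩ := hc
        refine ⟨n + 1, ?_⟩
        rw [map_mul, (show Commute (π c) (π q) from hcq).mul_pow, pow_succ, pow_mul, hn, one_pow,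
          one_mul, mul_comm (2 ^ n), pow_mul, pow_two, hq, one_pow]
    rw [← map_mul, ← map_mul] at hcz hcJ
    have hε2 : ∀ a : L, ε * (ε * a) = a := fun a => by rw [← mul_assoc, hε, one_mul]
    have hl : ∀ a b : L, a * (ε * b) = ε * (a * b) := fun a b => by
      rw [← mul_assoc, hεc, mul_assoc]
    have has : ∀ {a b t : L}, a * b = t → ∀ r, a * (b * r) = t * r := fun h r => by
      rw [← mul_assoc, h]
    rcases hπe _ _ hcz with h1 | h1 <;> rcases hπe _ _ hcJ with h2 | h2
    · left; rw [← map_one π]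
      exact hq 1 (by simp) (by simp) (by simpa using h1) (by simpa using h2)
    · right; left
      refine hq z hZ1 (by rw [← map_mul, ← map_mul]; exact hcz) ?_ ?_ <;>
        simp only [mul_assoc, has h1, has h2, has hJz', h1, h2, hJz', hl, hε2]
    · right; right; left
      refine hq J hJ1 (by rw [← map_mul, ← map_mul]; exact hcJ) ?_ ?_ <;>
        simp only [mul_assoc, has h1, has h2, has hJz', h1, h2, hJz', hl, hε2]
    · right; right; right
      rw [← map_mul]
      refine hq (z * J) ?_ ?_ ?_ ?_
      · rw [map_mul, mul_assoc, ← mul_assoc (π J), ← hZJ, mul_assoc (π z), hJ1, mul_one, hZ1]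
      · rw [map_mul, ← mul_assoc, ← map_mul, hcz, map_mul, mul_assoc, ← map_mul, hcJ, map_mul, mul_assoc]
      · simp only [mul_assoc, has h1, has h2, has hJz', h1, h2, hJz', hl, hε2]
      · simp only [mul_assoc, has h1, has h2, has hJz', h1, h2, hJz', hl, hε2]
  obtain ⟨g, hg⟩ := hfus J hJS hJz
  have hJz2 : z * J * z * (z * J)⁻¹ = ε * z := by
    rw [show z * J * z * (z * J)⁻¹ = z * (J * z * J⁻¹) * z⁻¹ by group, hJz, ← mul_assoc, hεc]; group
  obtain ⟨g', hg'⟩ := hfus (z * J) (S.mul_mem hzS hJS) hJz2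
  have hflip : ∀ g y : L, (g * y * g⁻¹ = z ∨ g * y * g⁻¹ = ε * z) → π g⁻¹ * π z * (π g⁻¹)⁻¹ = π y := by
    intro g y h
    have : π z = π g * π y * (π g)⁻¹ := by
      rw [← map_mul, ← map_inv, ← map_mul]
      rcases h with h | h
      · rw [h]
      · rw [h, map_mul, hπε, one_mul]
    rw [this, map_inv]; group
  refine h3 (dvd_trans (three_dvd_of_fusion (M := L ⧸ E) hZ1 hJ1 ?_ ?_ ?_ hZJ hself (hflip g J hg)
    ((hflip g' _ hg').trans (map_mul π z J)) (S.mapSurjective hπs) ?_) (Subgroup.card_quotient_dvd_card E))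
  · rw [Ne, hπ1]; tauto
  · rw [Ne, hπ1]
    rintro (h | h)
    · exact hnJz (by simp [h])
    · exact hnJz (by rw [h, hεc])
  · intro h
    rcases hπe _ _ h with h | h
    · exact hnJz (by rw [h])
    · exact hnJz (by rw [h, ← mul_assoc, hεc J, mul_assoc])
  · intro s hs
    obtain ⟨t, ht, rfl⟩ : ∃ t ∈ S, π t = s := hs
    rcases hzn t ht with h | h
    · rw [mul_inv_eq_iff_eq_mul] at h
      rw [← map_mul, h, map_mul]
    · rw [mul_inv_eq_iff_eq_mul] at h
      rw [← map_mul, h, map_mul, map_mul, hπε, one_mul]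
end

/-! ### The subgroup generated by elements of odd order -/

section
variable {Γ : Type*} [Group Γ]

/-- The subgroup generated by the elements of odd order of `H`. -/
def oddPart (H : Subgroup Γ) : Subgroup Γ := Subgroup.closure {g | g ∈ H ∧ Odd (orderOf g)}

lemma oddPart_le (H : Subgroup Γ) : oddPart H ≤ H := by
  rw [oddPart, Subgroup.closure_le]; exact fun g hg => hg.1

lemma mem_oddPart {H : Subgroup Γ} {g : Γ} (hg : g ∈ H) (ho : Odd (orderOf g)) : g ∈ oddPart H :=
  Subgroup.subset_closure ⟨hg, ho⟩

lemma orderOf_conj (g a : Γ) : orderOf (g * a * g⁻¹) = orderOf a :=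
  orderOf_injective (MulAut.conj g).toMonoidHom (MulAut.conj g).injective a

lemma oddPart_normal (H : Subgroup Γ) [hH : H.Normal] : (oddPart H).Normal := by
  refine ⟨fun n hn g => ?_⟩
  have : oddPart H ≤ (oddPart H).comap (MulAut.conj g).toMonoidHom := by
    conv_lhs => rw [oddPart]
    rw [Subgroup.closure_le]
    intro a ha
    refine mem_oddPart (hH.conj_mem a ha.1 g) ?_
    show Odd (orderOf (g * a * g⁻¹))
    rw [orderOf_conj]; exact ha.2
  exact this hn

lemma pow_mem_oddPart [Finite Γ] {H : Subgroup Γ} {g : Γ} (hg : g ∈ H) :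
    ∃ n : ℕ, g ^ 2 ^ n ∈ oddPart H := by
  obtain ⟨n, m, hm, e⟩ := Nat.exists_eq_two_pow_mul_odd (orderOf_pos g).ne'
  refine ⟨n, mem_oddPart (H.pow_mem hg _) ?_⟩
  rw [orderOf_pow_of_dvd (by positivity) ⟨m, e⟩, e, Nat.mul_div_cancel_left _ (by positivity)]
  exact hm

lemma Good.odd_card_oddPart [Finite Γ] (hG : Good Γ) {H : Subgroup Γ} (h3 : ¬ 3 ∣ Nat.card H) :
    Odd (Nat.card (oddPart H)) := by
  refine (hG.sub _).odd_of_odd_gen (fun h => h3 (h.trans (Subgroup.card_dvd_of_le (oddPart_le H)))) ?_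
  rw [eq_top_iff]
  have h : Subgroup.closure (((↑) : oddPart H → Γ) ⁻¹' {g | g ∈ H ∧ Odd (orderOf g)}) = ⊤ :=
    Subgroup.closure_closure_coe_preimage
  refine h.ge.trans (Subgroup.closure_mono ?_)
  intro g hg
  show Odd (orderOf g)
  rw [← Subgroup.orderOf_coe]
  exact hg.2

lemma Ix2.mem_of_odd {H : Subgroup Γ} (hH : Ix2 H) {g : Γ} (ho : Odd (orderOf g)) : g ∈ H := by
  by_contra hg
  have h2 := hH g g hg hg
  obtain ⟨m, hm⟩ := ho
  apply hg
  have : g = ((g * g) ^ m)⁻¹ := by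
    rw [eq_inv_iff_mul_eq_one, ← pow_two, ← pow_mul, ← pow_succ', ← hm, pow_orderOf_eq_one]
  rw [this]
  exact H.inv_mem (H.pow_mem h2 m)

variable {ρ : Γ →* Mat} [Finite Γ]

lemma Ix2_of_comm (hD : PropD ρ) (hρ : FreeRep ρ) (B : Subgroup Γ) [B.Normal]
    (hB : ∀ a ∈ B, ∀ b ∈ B, a * b = b * a) : Ix2 (Subgroup.centralizer (B : Set Γ)) :=
  Ix2_of_cyclic hD hρ B (hρ.good.cyc B hB)

/-- A normal subgroup of odd order is abelian: its Sylow subgroups are cyclic, so its commutator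
subgroup is cyclic with cyclic quotient, and the commutator subgroup is central because it is
centralized by a subgroup of index at most two. -/
lemma odd_normal_comm (hD : PropD ρ) (hρ : FreeRep ρ) (K : Subgroup Γ) [hK : K.Normal]
    (hodd : Odd (Nat.card K)) : ∀ a ∈ K, ∀ b ∈ K, a * b = b * a := by
  have hG := hρ.good
  have hZ : IsZGroup K := ⟨fun p hp P => by
    have : Fact p.Prime := ⟨hp⟩
    by_cases h2 : p = 2
    · subst h2
      have h1 : Nat.card P = 1 := by
        obtain ⟨n, hn⟩ := P.2.exists_card_eq
        have hd : Nat.card P ∣ Nat.card K := Subgroup.card_subgroup_dvd_card _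
        rcases Nat.eq_zero_or_pos n with rfl | hpos
        · simpa using hn
        · exfalso
          have : 2 ∣ Nat.card K := (dvd_pow_self 2 hpos.ne').trans (hn ▸ hd)
          exact (Nat.not_even_iff_odd.2 hodd) (even_iff_two_dvd.2 this)
      have : Subsingleton P := (Nat.card_eq_one_iff_unique.1 h1).1
      infer_instance
    · exact (hG.sub K).sylow_cyclic h2 P P.2⟩
  have hcyc := IsZGroup.isCyclic_commutator (G := K)
  set B : Subgroup Γ := (commutator K).map K.subtype with hB
  have hBn : B.Normal := by
    have : B = ⁅K, K⁆ := by rw [hB, commutator_def, Subgroup.map_commutator]; simp [← MonoidHom.range_eq_map]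
    rw [this]; infer_instance
  have hBc : IsCyclic B := ((commutator K).equivMapOfInjective _ K.subtype_injective).isCyclic.1 hcyc
  have hI := Ix2_of_cyclic hD hρ B hBc
  have hcent : (Abelianization.of (G := K)).ker ≤ Subgroup.center K := by
    rw [Abelianization.ker_of]
    intro b hb
    rw [Subgroup.mem_center_iff]
    intro g
    have hg : (g : Γ) ∈ Subgroup.centralizer (B : Set Γ) := hI.mem_of_odd (by
      have hd : orderOf (g : Γ) ∣ Nat.card K := by
        rw [Subgroup.orderOf_coe]; exact orderOf_dvd_natCard g
      exact hodd.of_dvd_nat hd)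
    exact Subtype.ext (Subgroup.mem_centralizer_iff.1 hg b ⟨b, hb, rfl⟩).symm
  intro a ha b hb
  have hc := MonoidHom.isMulCommutative_of_isCyclic_of_ker_le_center _ hcent
  exact congrArg Subtype.val (hc.is_comm.comm ⟨a, ha⟩ ⟨b, hb⟩)
end

/-! ### Quaternion factorizations -/

section
variable {Γ : Type*} [Group Γ] {ρ : Γ →* Mat}

lemma commute_adjoin_right {s : Mat} {U : Set Mat} (h : ∀ t ∈ U, Commute s t) {b : Mat}
    (hb : b ∈ Algebra.adjoin ℝ U) : Commute s b := by
  induction hb using Algebra.adjoin_induction with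
  | mem x hx => exact h x hx
  | algebraMap r => exact (Algebra.commutes r s).symm
  | add x y _ _ hx hy => exact hx.add_right hy
  | mul x y _ _ hx hy => exact hx.mul_right hy

lemma commute_adjoin {S U : Set Mat} (h : ∀ s ∈ S, ∀ t ∈ U, Commute s t) {a b : Mat}
    (ha : a ∈ Algebra.adjoin ℝ S) (hb : b ∈ Algebra.adjoin ℝ U) : Commute a b :=
  (commute_adjoin_right (fun _ hs => (commute_adjoin_right (h _ hs) hb).symm) ha).symm

lemma quat_form {i j : Mat} (hii : i * i = -1) (hjj : j * j = -1) (hij : j * i = -(i * j)) {m : Mat}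
    (hm : m ∈ Algebra.adjoin ℝ {i, j}) :
    ∃ α β γ δ : ℝ, m = α • 1 + β • i + γ • j + δ • (i * j) := by
  induction hm using Algebra.adjoin_induction with
  | mem x hx =>
    rcases hx with rfl | rfl
    · exact ⟨0, 1, 0, 0, by simp⟩
    · exact ⟨0, 0, 1, 0, by simp⟩
  | algebraMap r => exact ⟨r, 0, 0, 0, by simp [Algebra.algebraMap_eq_smul_one]⟩
  | add x y _ _ hx hy =>
    obtain ⟨a, b, c, d, rfl⟩ := hx
    obtain ⟨a', b', c', d', rfl⟩ := hy
    exact ⟨a + a', b + b', c + c', d + d', by module⟩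
  | mul x y _ _ hx hy =>
    obtain ⟨a, b, c, d, rfl⟩ := hx
    obtain ⟨a', b', c', d', rfl⟩ := hy
    refine ⟨a * a' - b * b' - c * c' - d * d', a * b' + b * a' + c * d' - d * c',
      a * c' - b * d' + c * a' + d * b', a * d' + b * c' - c * b' + d * a', ?_⟩
    simp only [mul_add, add_mul, mul_assoc, smul_mul_assoc, mul_smul_comm, mul_one, one_mul, smul_add,
      smul_smul, neg_mul, mul_neg, smul_neg, neg_neg, hii, hjj, hij, assoc2 hii, assoc2 hjj, assoc2 hij]
    module

/-- A subgroup of index at most two cannot lie in `ℍ · 𝒞`, where `ℍ` is the quaternion algebra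
generated by `i`, `j` and `𝒞` is generated by a family `S` which commutes with itself, with its
transposes and with `ℍ`. -/
lemma no_quaternion_gen (hD : PropD ρ) (hρ : FreeRep ρ) {H : Subgroup Γ} (hH : Ix2 H)
    {i j : Mat} (hi : i.transpose = -i) (hj : j.transpose = -j) (hii : i * i = -1) (hjj : j * j = -1)
    (hij : j * i = -(i * j)) (S : Set Mat) (hS : ∀ c ∈ S, ∀ d ∈ S, Commute c d)
    (hST : ∀ c ∈ S, ∀ d ∈ S, Commute c d.transpose) (hSi : ∀ c ∈ S, Commute c i)
    (hSj : ∀ c ∈ S, Commute c j)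
    (hfac : ∀ g ∈ H, ∃ q ∈ Algebra.adjoin ℝ {i, j}, ∃ c ∈ Algebra.adjoin ℝ S, ρ g = q * c) :
    False := by
  have tr : ∀ {c d : Mat}, Commute c d → Commute c.transpose d.transpose := by
    intro c d h
    show _ * _ = _ * _
    rw [← Matrix.transpose_mul, ← Matrix.transpose_mul, h.eq]
  set U : Set Mat := S ∪ {c | c.transpose ∈ S} with hU
  have hUtr : ∀ c ∈ U, c.transpose ∈ U := by
    rintro c (hc | hc)
    · right; simpa using hc
    · left; exact hc
  have hUi : ∀ c ∈ U, Commute c i := by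
    rintro c (hc | hc)
    · exact hSi c hc
    · have := tr (hSi _ hc); rw [hi] at this; simpa using this.neg_right
  have hUj : ∀ c ∈ U, Commute c j := by
    rintro c (hc | hc)
    · exact hSj c hc
    · have := tr (hSj _ hc); rw [hj] at this; simpa using this.neg_right
  have hUU : ∀ c ∈ U, ∀ d ∈ U, Commute c d := by
    rintro c (hc | hc) d (hd | hd)
    · exact hS c hc d hd
    · simpa using hST c hc _ hd
    · simpa using (hST d hd _ hc).symm
    · simpa using tr (hS _ hc _ hd)
  refine no_quaternion_ix2 hD hρ hH hi hj hii hjj hij (Algebra.adjoin ℝ U : Set Mat)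
    (fun c hc d hd => commute_adjoin hUU hc hd) ?_
    (fun c hc => commute_adjoin (U := {i}) (by rintro s hs _ rfl; exact hUi s hs) hc
      (Algebra.subset_adjoin rfl))
    (fun c hc => commute_adjoin (U := {j}) (by rintro s hs _ rfl; exact hUj s hs) hc
      (Algebra.subset_adjoin rfl)) ?_
  · intro c hc
    show c.transpose ∈ Algebra.adjoin ℝ U
    change c ∈ Algebra.adjoin ℝ U at hc
    induction hc using Algebra.adjoin_induction with
    | mem x hx => exact Algebra.subset_adjoin (hUtr x hx)
    | algebraMap r =>
      rw [Algebra.algebraMap_eq_smul_one, Matrix.transpose_smul, Matrix.transpose_one]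
      exact Subalgebra.smul_mem _ (one_mem _) r
    | add x y _ _ hx hy => rw [Matrix.transpose_add]; exact add_mem hx hy
    | mul x y _ _ hx hy => rw [Matrix.transpose_mul]; exact mul_mem hy hx
  · intro g hg
    obtain ⟨q, hq, c, hc, e⟩ := hfac g hg
    obtain ⟨α, β, γ, δ, rfl⟩ := quat_form hii hjj hij hq
    exact ⟨α, β, γ, δ, c, Algebra.adjoin_mono Set.subset_union_left hc, e⟩

/-- `m` is the product of an element of the algebra `Q` and an element of the algebra `R`. -/
def Fac (Q R : Subalgebra ℝ Mat) (m : Mat) : Prop := ∃ q ∈ Q, ∃ c ∈ R, m = q * c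

lemma Fac.left {Q R : Subalgebra ℝ Mat} {m : Mat} (h : m ∈ Q) : Fac Q R m :=
  ⟨m, h, 1, one_mem _, by simp⟩

lemma Fac.right {Q R : Subalgebra ℝ Mat} {m : Mat} (h : m ∈ R) : Fac Q R m :=
  ⟨1, one_mem _, m, h, by simp⟩

lemma Fac.mul {Q R : Subalgebra ℝ Mat} (hQR : ∀ q ∈ Q, ∀ c ∈ R, Commute q c) {m n : Mat}
    (hm : Fac Q R m) (hn : Fac Q R n) : Fac Q R (m * n) := by
  obtain ⟨q, hq, c, hc, rfl⟩ := hm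
  obtain ⟨q', hq', c', hc', rfl⟩ := hn
  refine ⟨q * q', mul_mem hq hq', c * c', mul_mem hc hc', ?_⟩
  rw [mul_assoc, ← mul_assoc c, ← (hQR q' hq' c hc).eq]; simp only [mul_assoc]
end

/-! ### The quaternion algebra of two elements of order three -/

section
variable {Γ : Type*} [Group Γ] [Finite Γ] {ρ : Γ →* Mat}

lemma k_eq {x p : Mat} (qx : x * x = (-3 : ℝ) • 1) (h : T x p = (2 : ℝ) • 1) :
    x * p - 1 = (-2 : ℝ) • cj x p - p - x := by
  rw [cj_formula qx h, mul_smul_comm, mul_one]; module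

lemma T_k_scalar (hρ : FreeRep ρ) (hD : PropD ρ) {x p y : Mat} (hx : IsX ρ x) (hp : IsX ρ p)
    (h : T x p = (2 : ℝ) • 1) (hy : IsX ρ y) : ∃ c : ℝ, T (x * p - 1) y = c • 1 := by
  obtain ⟨a, ha⟩ := all_scalar hρ hD (hx.cj hρ hp) hy
  obtain ⟨b, hb⟩ := all_scalar hρ hD hp hy
  obtain ⟨c, hc⟩ := all_scalar hρ hD hx hy
  refine ⟨-2 * a - b - c, ?_⟩
  rw [k_eq (hx.sq hρ) h]
  unfold T at *
  simp only [mul_add, add_mul, mul_sub, sub_mul, smul_mul_assoc, mul_smul_comm]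
  linear_combination (norm := module) (-2 : ℝ) • ha - hb - hc

lemma k_sq {x p : Mat} (qx : x * x = (-3 : ℝ) • 1) (qp : p * p = (-3 : ℝ) • 1) (h : T x p = (2 : ℝ) • 1) :
    (x * p - 1) * (x * p - 1) = (-8 : ℝ) • 1 := by
  have s1 := swap_of_T h
  simp only [mul_add, add_mul, mul_sub, sub_mul, mul_assoc, smul_mul_assoc, mul_smul_comm, mul_one, one_mul,
      smul_add, smul_sub, smul_smul, neg_mul, mul_neg, smul_neg, qx, assoc2 qx, s1, assoc2 s1, qp, assoc2 qp]
  module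

lemma k_anti {x p : Mat} (qx : x * x = (-3 : ℝ) • 1) (h : T x p = (2 : ℝ) • 1) :
    (x * p - 1) * x = -(x * (x * p - 1)) := by
  have s1 := swap_of_T h
  simp only [mul_add, add_mul, mul_sub, sub_mul, mul_assoc, smul_mul_assoc, mul_smul_comm, mul_one, one_mul,
      smul_add, smul_sub, smul_smul, neg_mul, mul_neg, smul_neg, qx, assoc2 qx, s1, assoc2 s1]
  module

/-- Once all anticommutators are scalar, the elements `a - a⁻¹` lie in a three-dimensional space. -/
lemma IsX.coords (hρ : FreeRep ρ) (hD : PropD ρ) {x p y : Mat} (hx : IsX ρ x) (hp : IsX ρ p)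
    (h : T x p = (2 : ℝ) • 1) (hy : IsX ρ y) :
    ∃ a b c : ℝ, y = a • x + b • p + c • (x * p - 1) := by
  have qx := hx.sq hρ
  have qp := hp.sq hρ
  obtain ⟨c1, h1⟩ := all_scalar hρ hD hx hy
  obtain ⟨c2, h2⟩ := all_scalar hρ hD hp hy
  obtain ⟨c3, h3⟩ := T_k_scalar hρ hD hx hp h hy
  refine ⟨-(3 * c1 + c2) / 16, -(c1 + 3 * c2) / 16, -c3 / 16, ?_⟩
  set w := y - ((-(3 * c1 + c2) / 16) • x + (-(c1 + 3 * c2) / 16) • p + (-c3 / 16) • (x * p - 1)) with hw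
  have s1 := swap_of_T h
  have e1 : x * w + w * x = 0 := by
    unfold T at h1
    simp only [hw, mul_add, add_mul, mul_sub, sub_mul, mul_assoc, smul_mul_assoc, mul_smul_comm, mul_one, one_mul,
      smul_add, smul_sub, smul_smul, neg_mul, mul_neg, smul_neg, qx, assoc2 qx, s1, assoc2 s1, qp, assoc2 qp]
    linear_combination (norm := module) h1
  have e2 : p * w + w * p = 0 := by
    unfold T at h2
    simp only [hw, mul_add, add_mul, mul_sub, sub_mul, mul_assoc, smul_mul_assoc, mul_smul_comm, mul_one, one_mul,
      smul_add, smul_sub, smul_smul, neg_mul, mul_neg, smul_neg, qx, assoc2 qx, s1, assoc2 s1, qp, assoc2 qp]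
    linear_combination (norm := module) h2
  have e3 : (x * p - 1) * w + w * (x * p - 1) = 0 := by
    unfold T at h3
    have s3 : y * (x * p) = c3 • 1 + (2 : ℝ) • y - x * (p * y) := by
      linear_combination (norm := (simp only [mul_add, add_mul, mul_sub, sub_mul, mul_assoc, mul_one, one_mul]; module)) h3
    simp only [hw, mul_add, add_mul, mul_sub, sub_mul, mul_assoc, smul_mul_assoc, mul_smul_comm, mul_one, one_mul,
      smul_add, smul_sub, smul_smul, neg_mul, mul_neg, smul_neg, qx, assoc2 qx, s1, assoc2 s1, qp, assoc2 qp, s3]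
    module
  clear_value w
  have e4 : (x * p - 1) * w = w * (x * p - 1) := by
    have e1' : x * w = - (w * x) := eq_neg_of_add_eq_zero_left e1
    have e2' : p * w = - (w * p) := eq_neg_of_add_eq_zero_left e2
    rw [sub_mul, mul_sub, mul_assoc, e2', mul_neg, ← mul_assoc, e1']; noncomm_ring
  have e5 : (x * p - 1) * w = 0 := by
    have : (2 : ℝ) • ((x * p - 1) * w) = 0 := by rw [two_smul]; nth_rw 2 [e4]; exact e3
    exact (smul_eq_zero.1 this).resolve_left (by norm_num)
  have e6 : (-8 : ℝ) • w = 0 := by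
    have := congrArg (fun m => (x * p - 1) * m) e5
    simp only [← mul_assoc, k_sq qx qp h, mul_zero, smul_mul_assoc, one_mul] at this
    exact this
  exact sub_eq_zero.1 (hw.symm.trans ((smul_eq_zero.1 e6).resolve_left (by norm_num)))

/-- An element commuting with `x` rotates the figure around `x` by a multiple of a third of a turn: for
any other angle `φ`, the values allowed for `T p p'` at the angles `φ` and `2φ` are incompatible. -/
lemma IsX.stab (hρ : FreeRep ρ) (hD : PropD ρ) {x p : Mat} (hx : IsX ρ x) (hp : IsX ρ p)
    (h : T x p = (2 : ℝ) • 1) {g : Γ} (hg : ρ g * x * ρ g⁻¹ = x) :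
    ρ g * p * ρ g⁻¹ = p ∨ ρ g * p * ρ g⁻¹ = FreeS7.cj x p ∨ ρ g * p * ρ g⁻¹ = FreeS7.cj (-x) p := by
  have qx := hx.sq hρ
  have qp := hp.sq hρ
  set p' := ρ g * p * ρ g⁻¹ with hp'
  have Xp' : IsX ρ p' := hp.conj g
  have qp' := Xp'.sq hρ
  have hxp' : T x p' = (2 : ℝ) • 1 := by
    have := T_conj (ρ := ρ) x p g
    rw [hg, ← hp', h] at this
    rw [← this, mul_smul_comm, smul_mul_assoc, mul_one, rho_mul_inv]
  obtain ⟨a, b, c, e⟩ := hx.coords hρ hD hp h Xp'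
  have s1 := swap_of_T h
  have sc : ∀ {r s : ℝ}, r • (1 : Mat) = s • 1 → r = s := fun {r s} hrs => by
    by_contra hne; exact smul_one_ne hne hrs
  have f1 : -6 * a + 2 * b = 2 := sc (by
    rw [← hxp', e]; unfold T
    simp only [mul_add, add_mul, mul_sub, sub_mul, mul_assoc, smul_mul_assoc, mul_smul_comm, mul_one, one_mul,
      smul_add, smul_sub, smul_smul, neg_mul, mul_neg, smul_neg, qx, assoc2 qx, s1, assoc2 s1, qp, assoc2 qp]
    module)
  have f2 : -3 * a ^ 2 - 3 * b ^ 2 - 8 * c ^ 2 + 2 * a * b = -3 := sc (by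
    rw [← qp', e]
    simp only [mul_add, add_mul, mul_sub, sub_mul, mul_assoc, smul_mul_assoc, mul_smul_comm, mul_one, one_mul,
      smul_add, smul_sub, smul_smul, neg_mul, mul_neg, smul_neg, qx, assoc2 qx, s1, assoc2 s1, qp, assoc2 qp]
    module)
  obtain ⟨d, hd, hdv⟩ := hp.values hρ hD Xp'
  have f3 : d = 2 * a - 6 * b := sc (by
    rw [← hd, e]; unfold T
    simp only [mul_add, add_mul, mul_sub, sub_mul, mul_assoc, smul_mul_assoc, mul_smul_comm, mul_one, one_mul,
      smul_add, smul_sub, smul_smul, neg_mul, mul_neg, smul_neg, qx, assoc2 qx, s1, assoc2 s1, qp, assoc2 qp]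
    module)
  obtain ⟨d', hd', hdv'⟩ := hp.values hρ hD (Xp'.conj g)
  have e'' : ρ g * p' * ρ g⁻¹ = a • x + b • p' + c • (x * p' - 1) := by
    have m : ∀ m n : Mat, ρ g * (m * n) * ρ g⁻¹ = (ρ g * m * ρ g⁻¹) * (ρ g * n * ρ g⁻¹) := by
      intro m n
      rw [show (ρ g * m * ρ g⁻¹) * (ρ g * n * ρ g⁻¹) = ρ g * m * (ρ g⁻¹ * ρ g) * (n * ρ g⁻¹) by noncomm_ring,
        rho_inv_mul]; noncomm_ring
    conv_lhs => rw [e]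
    simp only [mul_add, add_mul, mul_sub, sub_mul, mul_smul_comm, smul_mul_assoc, m, hg, ← hp', mul_one,
      rho_mul_inv]
  have f4 : d' = 2 * (a + a * b - c ^ 2) - 6 * (b ^ 2 - 3 * c ^ 2) := sc (by
    have e3 : x * p' - 1 = b • (x * p - 1) - (3 * c) • p - c • x := by
      rw [e]
      simp only [mul_add, add_mul, mul_sub, sub_mul, mul_assoc, smul_mul_assoc, mul_smul_comm, mul_one, one_mul,
        smul_add, smul_sub, smul_smul, neg_mul, mul_neg, smul_neg, qx, assoc2 qx]
      have : a = (b - 1) / 3 := by linarith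
      rw [this]; module
    rw [← hd', e'', e3, e]; unfold T
    simp only [mul_add, add_mul, mul_sub, sub_mul, mul_assoc, smul_mul_assoc, mul_smul_comm, mul_one, one_mul,
      smul_add, smul_sub, smul_smul, neg_mul, mul_neg, smul_neg, qx, assoc2 qx, s1, assoc2 s1, qp, assoc2 qp]
    module)
  -- `b` is the cosine of the angle and `2 * b ^ 2 - 1` that of twice the angle
  have ha : a = (b - 1) / 3 := by linarith
  have hc : 3 * c ^ 2 = 1 - b ^ 2 := by rw [ha] at f2; linarith
  have hdb : d = -(16 * b + 2) / 3 := by rw [f3, ha]; ring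
  have hdb' : d' = -(16 * (2 * b ^ 2 - 1) + 2) / 3 := by
    rw [f4, ha]; linear_combination (16 / 3) * hc
  have hb : b = -(3 * d + 2) / 16 := by linarith
  have key : d = -6 ∨ d = 2 := by
    rw [hb] at hdb'
    rcases hdv with r | r | r | r | r
    · left; exact r
    · exfalso; subst r; norm_num at hdb'; subst hdb'; norm_num at hdv'
    · exfalso; subst r; norm_num at hdb'; subst hdb'; norm_num at hdv'
    · right; exact r
    · exfalso
      have h5 : d' = -3 - d / 2 := by rw [hdb']; linear_combination (-3/8) * r
      have h6 : d = -6 - 2 * d' := by linarith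
      rcases hdv' with s | s | s | s | s
      · rw [h6, s] at r; norm_num at r
      · rw [h6, s] at r; norm_num at r
      · rw [h6, s] at r; norm_num at r
      · rw [h6, s] at r; norm_num at r
      · rw [h5] at s
        have : d = 2 := by linarith
        rw [this] at r; norm_num at r
  rcases key with r | r
  · left; exact hp.eq_of_T hρ Xp' (by rw [hd, r])
  · right; exact hx.third hρ hp Xp' h (by rw [T_comm, hxp']) (by rw [T_comm, hd, r])

/-- Two noncommuting elements of order three give two with anticommutator `2`. -/
lemma IsX.exists_adj (hρ : FreeRep ρ) (hD : PropD ρ) {x p : Mat} (hx : IsX ρ x) (hp : IsX ρ p)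
    (hne : ¬ Commute x p) : ∃ x' p', IsX ρ x' ∧ IsX ρ p' ∧ T x' p' = (2 : ℝ) • 1 := by
  obtain ⟨c, hc, h | h | h | h | h⟩ := hx.values hρ hD hp
  · exact absurd (hx.eq_of_T hρ hp (by rw [hc, h]) ▸ Commute.refl _) hne
  · refine absurd ?_ hne
    have := hx.eq_of_T hρ hp.neg (by rw [T_neg_right, hc, h]; module)
    rw [← neg_neg p, this]; exact (Commute.refl x).neg_right
  · exact ⟨x, -p, hx, hp.neg, by rw [T_neg_right, hc, h]; module⟩
  · exact ⟨x, p, hx, hp, by rw [hc, h]⟩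
  · refine ⟨p, -FreeS7.cj x p, hp, (hx.cj hρ hp).neg, ?_⟩
    rw [T_neg_right, opp_T1 (hx.sq hρ) (hp.sq hρ) hc (by rw [sq_smul_one, h])]; module
end

/-! ### Centralizers of elements of order three -/

section
variable {Γ : Type*} [Group Γ] {ρ : Γ →* Mat}

lemma conj_iff (g : Γ) (m n : Mat) : ρ g * m * ρ g⁻¹ = n ↔ ρ g * m = n * ρ g := by
  constructor
  · rintro rfl; rw [mul_assoc _ (ρ g⁻¹), rho_inv_mul, mul_one]
  · intro h; rw [h, mul_assoc, rho_mul_inv, mul_one]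

lemma conj_mul_mat (g : Γ) (m n : Mat) :
    ρ g * (m * n) * ρ g⁻¹ = (ρ g * m * ρ g⁻¹) * (ρ g * n * ρ g⁻¹) := by
  rw [show (ρ g * m * ρ g⁻¹) * (ρ g * n * ρ g⁻¹) = ρ g * m * (ρ g⁻¹ * ρ g) * (n * ρ g⁻¹) by noncomm_ring,
    rho_inv_mul]; noncomm_ring

lemma IsX.ne_commute (hρ : FreeRep ρ) {x p : Mat} (hx : IsX ρ x) (hp : IsX ρ p)
    (h : T x p = (2 : ℝ) • 1) : ¬ Commute x p := by
  intro hc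
  rcases hx.eq_or_neg_of_commute hρ hp hc with e | e
  · rw [e, hx.T_self hρ] at h; exact smul_one_ne (by norm_num) h
  · rw [e, T_neg_right, hx.T_self hρ, ← neg_smul] at h; exact smul_one_ne (by norm_num) h

lemma commute_of_data {x : Mat} {a g : Γ} (e : ρ a = (1/2 : ℝ) • (x - 1)) :
    Commute x (ρ g) ↔ Commute (ρ a) (ρ g) := by
  constructor
  · intro h; rw [e]; exact (h.sub_left (Commute.one_left _)).smul_left _
  · intro h
    have : x = (2 : ℝ) • ρ a + 1 := by rw [e]; module
    rw [this]; exact (h.smul_left _).add_left (Commute.one_left _)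

lemma FreeRep.comm_iff (hρ : FreeRep ρ) {a g : Γ} : Commute (ρ a) (ρ g) ↔ a * g = g * a :=
  ⟨fun h => hρ.inj (by rw [map_mul, map_mul]; exact h), fun h => by
    show ρ a * ρ g = ρ g * ρ a
    rw [← map_mul, ← map_mul, h]⟩

/-- The centralizer of the set of all elements of order three. -/
def cent3 (Γ : Type*) [Group Γ] : Subgroup Γ := Subgroup.centralizer {a : Γ | a ^ 3 = 1}

lemma cent3_normal : (cent3 Γ).Normal := by
  refine ⟨fun n hn g => ?_⟩
  rw [cent3, Subgroup.mem_centralizer_iff] at *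
  intro a ha
  have := hn (g⁻¹ * a * g) (by
    have := conj_pow (a := g⁻¹) (b := a) (i := 3)
    rw [inv_inv] at this
    show _ ^ 3 = 1
    rw [this, show a ^ 3 = 1 from ha]; group)
  calc a * (g * n * g⁻¹) = g * (g⁻¹ * a * g * n) * g⁻¹ := by group
    _ = g * n * g⁻¹ * a := by rw [this]; group

lemma IsX.commute_cent3 (hρ : FreeRep ρ) {x : Mat} (hx : IsX ρ x) {g : Γ} (hg : g ∈ cent3 Γ) :
    Commute x (ρ g) := by
  obtain ⟨a, h3, _, e, _⟩ := hx.data hρ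
  exact (commute_of_data e).2 (hρ.comm_iff.2 (Subgroup.mem_centralizer_iff.1 hg a h3))

variable [Finite Γ]

lemma IsX.mem_adjoin (hρ : FreeRep ρ) (hD : PropD ρ) {x p y : Mat} (hx : IsX ρ x) (hp : IsX ρ p)
    (h : T x p = (2 : ℝ) • 1) (hy : IsX ρ y) : y ∈ Algebra.adjoin ℝ {x, p} := by
  obtain ⟨a, b, c, rfl⟩ := hx.coords hρ hD hp h hy
  have m1 : x ∈ Algebra.adjoin ℝ {x, p} := Algebra.subset_adjoin (by simp)
  have m2 : p ∈ Algebra.adjoin ℝ {x, p} := Algebra.subset_adjoin (by simp)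
  exact add_mem (add_mem (Subalgebra.smul_mem _ m1 a) (Subalgebra.smul_mem _ m2 b))
    (Subalgebra.smul_mem _ (sub_mem (mul_mem m1 m2) (one_mem _)) c)

lemma mem_cent3 (hρ : FreeRep ρ) (hD : PropD ρ) {x p : Mat} (hx : IsX ρ x) (hp : IsX ρ p)
    (h : T x p = (2 : ℝ) • 1) {g : Γ} (h1 : Commute x (ρ g)) (h2 : Commute p (ρ g)) : g ∈ cent3 Γ := by
  rw [cent3, Subgroup.mem_centralizer_iff]
  intro a ha
  by_cases a1 : a = 1
  · simp [a1]
  have hy : IsX ρ (ρ a - ρ a⁻¹) := ⟨a, ha, a1, rfl⟩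
  have hc := (commute_adjoin_right (s := ρ g) (U := {x, p})
    (by rintro t (rfl | rfl); exacts [h1.symm, h2.symm]) (hx.mem_adjoin hρ hD hp h hy)).symm
  refine hρ.comm_iff.1 ((commute_of_data (x := ρ a - ρ a⁻¹) ?_).1 hc)
  have := hρ.cube ha a1
  have e : ρ a⁻¹ = -1 - ρ a := by rw [← this]; abel
  rw [e]; module

/-- The order three element attached to `x` brings an element commuting with `x` into the centralizer
of all elements of order three. -/
lemma stab_cent3 (hρ : FreeRep ρ) (hD : PropD ρ) {x p : Mat} (hx : IsX ρ x) (hp : IsX ρ p)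
    (h : T x p = (2 : ℝ) • 1) {g : Γ} (hg : Commute x (ρ g)) :
    ∃ b c : Γ, b ^ 3 = 1 ∧ c ∈ cent3 Γ ∧ g = b * c := by
  obtain ⟨a, h3, h1, ea, ea'⟩ := hx.data hρ
  have qx := hx.sq hρ
  have cx : Commute x (ρ a) := by rw [ea]; exact ((Commute.refl x).sub_right (Commute.one_right _)).smul_right _
  have cx' : Commute x (ρ a⁻¹) := by
    rw [ea']; exact ((Commute.refl x).neg_right.sub_right (Commute.one_right _)).smul_right _
  have f : ∀ b : Γ, Commute x (ρ b) → b ^ 3 = 1 → ρ b⁻¹ * (ρ g * p * ρ g⁻¹) * ρ b = p →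
      ∃ b c : Γ, b ^ 3 = 1 ∧ c ∈ cent3 Γ ∧ g = b * c := by
    intro b hb hb3 e
    refine ⟨b, b⁻¹ * g, hb3, ?_, by group⟩
    have hb' : Commute x (ρ b⁻¹) := by
      have := (conj_iff b x x).2 hb.symm.eq
      show x * _ = _
      rw [← (conj_iff b⁻¹ x x).1]
      rw [inv_inv]
      nth_rw 1 [← this]
      rw [← mul_assoc, ← mul_assoc, rho_inv_mul, one_mul, mul_assoc, rho_inv_mul, mul_one]
    refine mem_cent3 hρ hD hx hp h (by rw [map_mul]; exact hb'.mul_right hg) ?_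
    have := (conj_iff (ρ := ρ) (b⁻¹ * g) p p).1 (by
      rw [mul_inv_rev, inv_inv, map_mul, map_mul]
      simpa only [mul_assoc] using e)
    exact this.symm
  have e1 : ∀ y, ρ a⁻¹ * y * ρ a = FreeS7.cj (-x) y := by
    intro y; rw [ea, ea', cj]
    simp only [mul_add, add_mul, mul_sub, sub_mul, mul_assoc, smul_mul_assoc, mul_smul_comm, mul_one, one_mul,
      smul_add, smul_sub, smul_smul, neg_mul, mul_neg, smul_neg]
    module
  have e2 : ∀ y, ρ a * y * ρ a⁻¹ = FreeS7.cj x y := by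
    intro y; rw [ea, ea', cj]
    simp only [mul_add, add_mul, mul_sub, sub_mul, mul_assoc, smul_mul_assoc, mul_smul_comm, mul_one, one_mul,
      smul_add, smul_sub, smul_smul, neg_mul, mul_neg, smul_neg]
    module
  rcases hx.stab hρ hD hp h ((conj_iff g x x).2 hg.symm.eq) with e | e | e
  · exact f 1 (by simp) (by simp) (by simp [e])
  · exact f a cx h3 (by rw [e, e1, cj_neg_cj qx])
  · exact f a⁻¹ cx' (by simp [h3]) (by rw [e, inv_inv, e2, cj_cj_neg qx])

/-- If `t` inverts `x`, conjugation by `t` is the half-turn about some axis `u` orthogonal to `x`, so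
that `u * ρ t` centralizes the quaternion algebra. -/
lemma half_turn (hρ : FreeRep ρ) (hD : PropD ρ) {x p : Mat} (hx : IsX ρ x) (hp : IsX ρ p)
    (h : T x p = (2 : ℝ) • 1) {t : Γ} (ht : ρ t * x * ρ t⁻¹ = -x) :
    ∃ u ∈ Algebra.adjoin ℝ {x, p}, ∃ r : ℝ, r ≠ 0 ∧ u * u = r • 1 ∧ u.transpose = -u ∧
      Commute (u * ρ t) x ∧ Commute (u * ρ t) (x * p - 1) := by
  have qx := hx.sq hρ
  have qp := hp.sq hρ
  set k := x * p - 1 with hk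
  have k2 : k * k = (-8 : ℝ) • 1 := k_sq qx qp h
  have kx : k * x = -(x * k) := k_anti qx h
  have ek : k = (-2 : ℝ) • FreeS7.cj x p - p - x := k_eq qx h
  have Xq := hx.cj hρ hp
  have hkt : k.transpose = -k := by
    rw [ek]; simp only [Matrix.transpose_sub, Matrix.transpose_smul, Xq.skew hρ, hp.skew hρ, hx.skew hρ]; module
  have mx : x ∈ Algebra.adjoin ℝ {x, p} := Algebra.subset_adjoin (by simp)
  have mp : p ∈ Algebra.adjoin ℝ {x, p} := Algebra.subset_adjoin (by simp)
  have mk : k ∈ Algebra.adjoin ℝ {x, p} := sub_mem (mul_mem mx mp) (one_mem _)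
  set k' := ρ t * k * ρ t⁻¹ with hk'
  have ek' : k' = (-2 : ℝ) • (ρ t * FreeS7.cj x p * ρ t⁻¹) - (ρ t * p * ρ t⁻¹) - (ρ t * x * ρ t⁻¹) := by
    rw [hk', ek]; simp only [mul_sub, sub_mul, mul_smul_comm, smul_mul_assoc]
  have Y1 := Xq.conj t
  have Y2 := hp.conj t
  have Y3 := hx.conj t
  have hkt' : k'.transpose = -k' := by
    rw [ek']; simp only [Matrix.transpose_sub, Matrix.transpose_smul, Y1.skew hρ, Y2.skew hρ, Y3.skew hρ]; module
  have mk' : k' ∈ Algebra.adjoin ℝ {x, p} := by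
    rw [ek']
    exact sub_mem (sub_mem (Subalgebra.smul_mem _ (hx.mem_adjoin hρ hD hp h Y1) _) (hx.mem_adjoin hρ hD hp h Y2))
      (hx.mem_adjoin hρ hD hp h Y3)
  have k2' : k' * k' = (-8 : ℝ) • 1 := by
    rw [hk', ← conj_mul_mat, k2, mul_smul_comm, smul_mul_assoc, mul_one, rho_mul_inv]
  have kx' : k' * x = -(x * k') := by
    have := conj_mul_mat (ρ := ρ) t k x
    have h2 := conj_mul_mat (ρ := ρ) t x k
    rw [ht, ← hk'] at this h2
    rw [kx, mul_neg, neg_mul, h2] at this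
    rw [mul_neg, neg_mul, neg_neg] at this
    rw [this, neg_neg]
  obtain ⟨s, hs⟩ : ∃ s : ℝ, T k k' = s • 1 := by
    obtain ⟨a, ha⟩ := T_k_scalar hρ hD hx hp h Y1
    obtain ⟨b, hb⟩ := T_k_scalar hρ hD hx hp h Y2
    obtain ⟨c, hc⟩ := T_k_scalar hρ hD hx hp h Y3
    refine ⟨-2 * a - b - c, ?_⟩
    rw [← hk] at ha hb hc
    rw [ek']
    unfold T at *
    simp only [mul_sub, sub_mul, smul_mul_assoc, mul_smul_comm]
    linear_combination (norm := module) (-2 : ℝ) • ha - hb - hc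
  have tx : ρ t * x = -x * ρ t := (conj_iff t x (-x)).1 ht
  have tk : ρ t * k = k' * ρ t := (conj_iff t k k').1 rfl
  have fin : ∀ u ∈ Algebra.adjoin ℝ {x, p}, u.transpose = -u → u * x = -(x * u) → u * k' = k * u →
      (∃ r : ℝ, r ≠ 0 ∧ u * u = r • 1) → ∃ u ∈ Algebra.adjoin ℝ {x, p}, ∃ r : ℝ, r ≠ 0 ∧ u * u = r • 1 ∧
        u.transpose = -u ∧ Commute (u * ρ t) x ∧ Commute (u * ρ t) k := by
    rintro u hu h1 h2 h3 ⟨r, hr, h4⟩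
    refine ⟨u, hu, r, hr, h4, h1, ?_, ?_⟩
    · show _ * _ = _ * _
      rw [mul_assoc, tx, neg_mul, mul_neg, ← mul_assoc, h2]; noncomm_ring
    · show _ * _ = _ * _
      rw [mul_assoc, tk, ← mul_assoc, h3, mul_assoc]
  by_cases hu : k + k' = 0
  · have e : k' = -k := by rw [eq_neg_iff_add_eq_zero, add_comm]; exact hu
    refine fin (x * k) (mul_mem mx mk) ?_ ?_ ?_ ⟨-24, by norm_num, ?_⟩
    · rw [Matrix.transpose_mul, hkt, hx.skew hρ, neg_mul_neg, kx]
    · rw [mul_assoc, kx]; noncomm_ring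
    · rw [e, mul_neg, ← mul_assoc, kx]; noncomm_ring
    · rw [mul_assoc, ← mul_assoc k, kx, neg_mul, mul_neg, mul_assoc x k k, k2, ← mul_assoc, qx]
      simp only [smul_mul_assoc, mul_smul_comm, one_mul, mul_one]; module
  · have e2 : (k + k') * (k + k') = (s - 16) • 1 := by
      unfold T at hs
      rw [show (k + k') * (k + k') = k * k + k' * k' + (k * k' + k' * k) by noncomm_ring, hs, k2, k2']; module
    have sk : (k + k').transpose = -(k + k') := by rw [Matrix.transpose_add, hkt, hkt']; abel
    refine fin (k + k') (add_mem mk mk') sk ?_ ?_ ⟨s - 16, ?_, e2⟩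
    · rw [add_mul, kx, kx']; noncomm_ring
    · rw [add_mul, mul_add, k2, k2']; abel
    · intro h0
      rw [h0, zero_smul] at e2
      exact hu (skew_sq_zero sk e2)
end

/-! ### Elements of order three commute -/

section
variable {Γ : Type*} [Group Γ] [Finite Γ] {ρ : Γ →* Mat}

/-- In a subgroup without elements of square `ε`, every element has odd order up to multiplication by
the central involution `ε`. -/
lemma Good.odd_or_eps {ε : Γ} (hG : Good Γ) (hε : ε * ε = 1) (hε1 : ε ≠ 1) {C : Subgroup Γ}
    (hεC : ∀ g ∈ C, g * g ≠ ε) {g : Γ} (hg : g ∈ C) : Odd (orderOf g) ∨ Odd (orderOf (ε * g)) := by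
  have hcen := hG.eps_comm hε hε1 g
  obtain ⟨n, m, hm, e⟩ := Nat.exists_eq_two_pow_mul_odd (orderOf_pos g).ne'
  rcases n with _ | _ | n
  · left; rw [e]; simpa using hm
  · right
    have h1 : g ^ m * g ^ m = 1 := by
      rw [← pow_add, ← two_mul]; rw [show 2 * m = orderOf g by rw [e]; ring]; exact pow_orderOf_eq_one g
    have hm0 : 0 < m := hm.pos
    have h2 : g ^ m ≠ 1 := pow_ne_one_of_lt_orderOf hm0.ne' (by rw [e]; norm_num; omega)
    have h3 : g ^ m = ε := (hG.eq_of_sq_one hε hε1 h1).resolve_left h2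
    refine hm.of_dvd_nat (orderOf_dvd_of_pow_eq_one ?_)
    rw [(show Commute ε g from hcen.symm).mul_pow, h3]
    obtain ⟨l, rfl⟩ := hm
    rw [pow_succ, pow_mul, pow_two, hε, one_pow, one_mul, hε]
  · exfalso
    have hm0 : 0 < m := hm.pos
    have h0 : orderOf g = 4 * (2 ^ n * m) := by rw [e]; ring
    have hpos : 0 < 2 ^ n * m := by positivity
    have h1 : g ^ (2 ^ n * m) * g ^ (2 ^ n * m) ≠ 1 := by
      rw [← pow_add]; exact pow_ne_one_of_lt_orderOf (by omega) (by rw [h0]; omega)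
    refine hεC _ (C.pow_mem hg (2 ^ n * m)) ((hG.eq_of_sq_one hε hε1 ?_).resolve_left h1)
    rw [← pow_add, ← pow_add, ← pow_orderOf_eq_one g, h0]; congr 1; ring

/-- The elements of order three commute pairwise. Otherwise all of them lie in the quaternion algebra
generated by two of them, and a subgroup of index at most two lies in the product of this algebra with matrices
commuting with it. -/
lemma IsX.comm (hρ : FreeRep ρ) (hD : PropD ρ) {x₀ p₀ : Mat} (hx₀ : IsX ρ x₀) (hp₀ : IsX ρ p₀) :
    Commute x₀ p₀ := by
  by_contra hne
  obtain ⟨x, p, hx, hp, h⟩ := hx₀.exists_adj hρ hD hp₀ hne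
  clear hne hx₀ hp₀ x₀ p₀
  have hG := hρ.good
  have qx := hx.sq hρ
  have qp := hp.sq hρ
  have hnc := hx.ne_commute hρ hp h
  obtain ⟨a, ha3, ha1, ea, ea'⟩ := hx.data hρ
  obtain ⟨b, hb3, hb1, eb, eb'⟩ := hp.data hρ
  have s1 := swap_of_T h
  -- an element of order four in the quaternion algebra of `x` and `p`
  set J := a * b⁻¹ with hJ
  have J2 : ρ (J * J) = -1 := by
    rw [hJ, map_mul, map_mul, ea, eb']
    simp only [mul_add, add_mul, mul_sub, sub_mul, mul_assoc, smul_mul_assoc, mul_smul_comm, mul_one, one_mul,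
      smul_add, smul_sub, smul_smul, neg_mul, mul_neg, smul_neg, qx, assoc2 qx, s1, assoc2 s1, qp, assoc2 qp]
    module
  set ε := J * J with hεd
  have hε : ε * ε = 1 := hρ.inj (by rw [map_mul, J2]; simp)
  have hε1 : ε ≠ 1 := by
    intro e
    rw [e, map_one] at J2
    have := congrFun (congrFun J2 0) 0
    norm_num at this
  have hCn := cent3_normal (Γ := Γ)
  have hC4 : ∀ g ∈ cent3 Γ, g * g ≠ ε := by
    intro g hg e
    have hJC : J ∈ cent3 Γ := by
      have hc : J * g = g * J := by
        have h1 : a * g = g * a := Subgroup.mem_centralizer_iff.1 hg a ha3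
        have h2 : b⁻¹ * g = g * b⁻¹ := Subgroup.mem_centralizer_iff.1 hg b⁻¹ (by simp [hb3])
        rw [hJ, mul_assoc, h2, ← mul_assoc, h1, mul_assoc]
      rcases hG.four_comm hε hε1 hεd.symm e hc with e | e
      · rw [e]; exact hg
      · rw [e]
        refine (cent3 Γ).mul_mem ?_ hg
        rw [cent3, Subgroup.mem_centralizer_iff]
        exact fun m _ => hG.eps_comm hε hε1 m
    have h1 := Subgroup.mem_centralizer_iff.1 hJC a ha3
    have h2 : a * b = b * a := by
      have : a * b⁻¹ = b⁻¹ * a := by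
        rw [hJ, mul_assoc] at h1; exact mul_left_cancel h1
      simpa using (show Commute a b⁻¹ from this).inv_right.eq
    have h4 : Commute p (ρ a) := (commute_of_data eb).2 (hρ.comm_iff.2 h2.symm)
    have e2 : x = (2 : ℝ) • ρ a + 1 := by rw [ea]; module
    refine hnc ?_
    rw [e2]
    exact ((h4.smul_right 2).add_right (Commute.one_right _)).symm
  have h3C : ¬ 3 ∣ Nat.card (cent3 Γ) := by
    intro h3
    have : Fact (Nat.Prime 3) := ⟨Nat.prime_three⟩
    obtain ⟨c, hc⟩ := exists_prime_orderOf_dvd_card' 3 h3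
    have hc3 : (c : Γ) ^ 3 = 1 := by
      rw [← Subgroup.coe_pow, ← hc, pow_orderOf_eq_one]; rfl
    have hc1 : (c : Γ) ≠ 1 := by
      intro e
      have : c = 1 := Subtype.ext e
      rw [this, orderOf_one] at hc; norm_num at hc
    have hy : IsX ρ (ρ c - ρ (c : Γ)⁻¹) := ⟨c, hc3, hc1, rfl⟩
    have cm : ∀ z, IsX ρ z → Commute z (ρ c - ρ (c : Γ)⁻¹) := fun z hz =>
      (hz.commute_cent3 hρ c.2).sub_right (hz.commute_cent3 hρ ((cent3 Γ).inv_mem c.2))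
    have h2 := cm p hp
    rcases hx.eq_or_neg_of_commute hρ hy (cm x hx) with e | e
    · rw [e] at h2; exact hnc h2.symm
    · rw [e] at h2; exact hnc (by simpa using h2.symm)
  have hKn := oddPart_normal (cent3 Γ)
  set K := oddPart (cent3 Γ) with hK
  have hKC : K ≤ cent3 Γ := oddPart_le _
  have hKc := odd_normal_comm hD hρ K (hG.odd_card_oddPart h3C)
  have hI := Ix2_of_comm hD hρ K hKc
  set G₁ := Subgroup.centralizer (K : Set Γ) with hG₁
  have h3G : ∀ b : Γ, b ^ 3 = 1 → b ∈ G₁ := fun b hb => hI.mem_of_odd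
    (Odd.of_dvd_nat (by decide) (orderOf_dvd_of_pow_eq_one hb))
  set Q := Algebra.adjoin ℝ {x, p} with hQ
  have mx : x ∈ Q := Algebra.subset_adjoin (by simp)
  have mp : p ∈ Q := Algebra.subset_adjoin (by simp)
  have h3Q : ∀ b : Γ, b ^ 3 = 1 → ρ b ∈ Q := by
    intro b hb
    by_cases hb1 : b = 1
    · rw [hb1, map_one]; exact one_mem _
    have hy : IsX ρ (ρ b - ρ b⁻¹) := ⟨b, hb, hb1, rfl⟩
    have := hρ.cube hb hb1
    have e : ρ b = (1/2 : ℝ) • ((ρ b - ρ b⁻¹) - 1) := by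
      have : ρ b⁻¹ = -1 - ρ b := by rw [← this]; abel
      rw [this]; module
    rw [e]
    exact Subalgebra.smul_mem _ (sub_mem (hx.mem_adjoin hρ hD hp h hy) (one_mem _)) _
  set N := Subgroup.closure {b : Γ | b ^ 3 = 1} with hN
  have hNQ : ∀ n ∈ N, ρ n ∈ Q := by
    intro n hn
    induction hn using Subgroup.closure_induction with
    | mem b hb => exact h3Q b hb
    | one => rw [map_one]; exact one_mem _
    | mul b c _ _ hb hc => rw [map_mul]; exact mul_mem hb hc
    | inv b _ hb =>
      -- in a finite group the inverse is a power
      obtain ⟨l, hl⟩ : ∃ l : ℕ, b⁻¹ = b ^ l := ⟨orderOf b - 1, by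
        rw [inv_eq_iff_mul_eq_one, ← pow_succ', Nat.sub_add_cancel (orderOf_pos b), pow_orderOf_eq_one]⟩
      rw [hl, map_pow]; exact pow_mem hb l
  have hNG : N ≤ G₁ := by rw [hN, Subgroup.closure_le]; exact h3G
  have trans : ∀ y, IsX ρ y → ∃ n ∈ N, ρ n * y * ρ n⁻¹ = x ∨ ρ n * y * ρ n⁻¹ = -x := by
    intro y hy
    obtain ⟨c, hc3, hc1, ec, ec'⟩ := hy.data hρ
    have : Fact (Nat.Prime 3) := ⟨Nat.prime_three⟩
    have o : ∀ d : Γ, ∀ hd : d ^ 3 = 1, d ≠ 1 → orderOf (⟨d, Subgroup.subset_closure hd⟩ : N) = 3 := by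
      intro d hd hd1
      rw [← Subgroup.orderOf_coe]
      exact orderOf_eq_prime hd hd1
    obtain ⟨n, hn⟩ := (hG.sub N).conj_of_order (by norm_num : (3:ℕ) ≠ 2) (o a ha3 ha1) (o c hc3 hc1)
    obtain ⟨z, hz⟩ := Subgroup.mem_zpowers_iff.1 hn
    have hz' : a ^ z = (n : Γ) * c * (n : Γ)⁻¹ := by
      have := congrArg Subtype.val hz; simpa using this
    refine ⟨n, n.2, ?_⟩
    refine hx.eq_or_neg_of_commute hρ (hy.conj n) ?_
    have hcm : Commute (ρ a) (ρ ((n : Γ) * c * (n : Γ)⁻¹)) := by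
      rw [← hz', hρ.comm_iff]; exact ((Commute.refl a).zpow_right z).eq
    have e1 : ρ (n : Γ) * y * ρ (n : Γ)⁻¹ = (2 : ℝ) • ρ ((n : Γ) * c * (n : Γ)⁻¹) + 1 := by
      rw [map_mul, map_mul, ec]
      simp only [mul_smul_comm, smul_mul_assoc, mul_sub, sub_mul, mul_one, rho_mul_inv]
      module
    rw [e1]
    exact ((commute_of_data ea).2 hcm).smul_right 2 |>.add_right (Commute.one_right _)
  -- the frame of the quaternion algebra
  set k := x * p - 1 with hk
  have mk : k ∈ Q := sub_mem (mul_mem mx mp) (one_mem _)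
  have k2 : k * k = (-8 : ℝ) • 1 := k_sq qx qp h
  have kx : k * x = -(x * k) := k_anti qx h
  have pk : p = (-1/3 : ℝ) • (x * (k + 1)) := by
    rw [hk, sub_add_cancel, ← mul_assoc, qx, smul_mul_assoc, one_mul]; module
  have hkt : k.transpose = -k := by
    rw [hk, k_eq qx h]
    simp only [Matrix.transpose_sub, Matrix.transpose_smul, (hx.cj hρ hp).skew hρ, hp.skew hρ, hx.skew hρ]; module
  obtain ⟨α, hα⟩ : ∃ α : ℝ, α * α * 3 = 1 := ⟨(√3)⁻¹, by
    rw [← mul_inv, Real.mul_self_sqrt (by norm_num)]; norm_num⟩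
  obtain ⟨β, hβ⟩ : ∃ β : ℝ, β * β * 8 = 1 := ⟨(√8)⁻¹, by
    rw [← mul_inv, Real.mul_self_sqrt (by norm_num)]; norm_num⟩
  have hQij : Q ≤ Algebra.adjoin ℝ {α • x, β • k} := by
    have n1 : x ∈ Algebra.adjoin ℝ {α • x, β • k} := by
      have e₀ : (3 * α) • (α • x) = x := by rw [smul_smul, show 3 * α * α = 1 by linarith, one_smul]
      have hm : α • x ∈ Algebra.adjoin ℝ {α • x, β • k} := Algebra.subset_adjoin (by simp)
      have := Subalgebra.smul_mem _ hm (3 * α)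
      rwa [e₀] at this
    have n2 : k ∈ Algebra.adjoin ℝ {α • x, β • k} := by
      have e₀ : (8 * β) • (β • k) = k := by rw [smul_smul, show 8 * β * β = 1 by linarith, one_smul]
      have hm : β • k ∈ Algebra.adjoin ℝ {α • x, β • k} := Algebra.subset_adjoin (by simp)
      have := Subalgebra.smul_mem _ hm (8 * β)
      rwa [e₀] at this
    rw [hQ]
    refine Algebra.adjoin_le ?_
    rintro m (rfl | rfl)
    · exact n1
    · rw [SetLike.mem_coe, pk]
      exact Subalgebra.smul_mem _ (mul_mem n1 (add_mem n2 (one_mem _))) _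
  have cpk : ∀ c : Mat, Commute c x → Commute c k → ∀ q ∈ Q, Commute q c := by
    intro c h1 h2 q hq
    refine (commute_adjoin_right ?_ hq).symm
    rintro m (rfl | rfl)
    · exact h1
    · rw [pk]; exact (h1.mul_right (h2.add_right (Commute.one_right _))).smul_right _
  have hKQ : ∀ g ∈ K, ∀ q ∈ Q, Commute q (ρ g) := fun g hg => cpk _ (hx.commute_cent3 hρ (hKC hg)).symm
    (((hx.commute_cent3 hρ (hKC hg)).symm.mul_right (hp.commute_cent3 hρ (hKC hg)).symm).sub_right
      (Commute.one_right _))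
  have main : ∀ S : Set Mat, ρ '' K ⊆ S → (∀ c ∈ S, ∀ d ∈ S, Commute c d) →
      (∀ c ∈ S, ∀ d ∈ S, Commute c d.transpose) → (∀ c ∈ S, ∀ q ∈ Q, Commute q c) →
      (∀ g ∈ G₁, ρ g * x * ρ g⁻¹ = -x → ∃ t ∈ G₁, ρ t * x * ρ t⁻¹ = -x ∧ Fac Q (Algebra.adjoin ℝ S) (ρ t)) →
      False := by
    intro S hKS hS hST hSQ ht
    have hQR : ∀ q ∈ Q, ∀ c ∈ Algebra.adjoin ℝ S, Commute q c := fun q hq c hc =>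
      commute_adjoin_right (fun s hs => hSQ s hs q hq) hc
    have st : ∀ g : Γ, ρ g * x * ρ g⁻¹ = x → Fac Q (Algebra.adjoin ℝ S) (ρ g) := by
      intro g hg
      obtain ⟨b, c, hb, hc, rfl⟩ := stab_cent3 hρ hD hx hp h ((conj_iff g x x).1 hg).symm
      rw [map_mul]
      refine (Fac.left (h3Q b hb)).mul hQR (Fac.right ?_)
      rcases hG.odd_or_eps hε hε1 hC4 hc with ho | ho
      · exact Algebra.subset_adjoin (hKS ⟨c, mem_oddPart hc ho, rfl⟩)
      · have hεc : ε * c ∈ K := mem_oddPart ((cent3 Γ).mul_mem (by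
          rw [cent3, Subgroup.mem_centralizer_iff]
          exact fun m _ => hG.eps_comm hε hε1 m) hc) ho
        have : ρ c = -ρ (ε * c) := by rw [map_mul, J2]; simp
        rw [this]; exact neg_mem (Algebra.subset_adjoin (hKS ⟨_, hεc, rfl⟩))
    refine no_quaternion_gen hD hρ hI (i := α • x) (j := β • k) ?_ ?_ ?_ ?_ ?_ S hS hST
      (fun c hc => ((hSQ c hc x mx).symm).smul_right α) (fun c hc => ((hSQ c hc k mk).symm).smul_right β) ?_
    · rw [Matrix.transpose_smul, hx.skew hρ, smul_neg]
    · rw [Matrix.transpose_smul, hkt, smul_neg]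
    · rw [smul_mul_smul_comm, qx, smul_smul, show α * α * -3 = -1 by linarith]; module
    · rw [smul_mul_smul_comm, k2, smul_smul, show β * β * -8 = -1 by linarith]; module
    · rw [smul_mul_smul_comm, smul_mul_smul_comm, kx, mul_comm]; module
    · intro g hg
      suffices hf : Fac Q (Algebra.adjoin ℝ S) (ρ g) by
        obtain ⟨q, hq, c, hc, e⟩ := hf
        exact ⟨q, hQij hq, c, hc, e⟩
      obtain ⟨n, hn, hnx⟩ := trans _ (hx.conj g)
      have e0 : ρ n * (ρ g * x * ρ g⁻¹) * ρ n⁻¹ = ρ (n * g) * x * ρ (n * g)⁻¹ := by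
        rw [mul_inv_rev, map_mul, map_mul]; simp only [mul_assoc]
      rw [e0] at hnx
      have hng : Fac Q (Algebra.adjoin ℝ S) (ρ (n * g)) := by
        rcases hnx with e | e
        · exact st _ e
        · obtain ⟨t, _, htx, hft⟩ := ht _ (G₁.mul_mem (hNG hn) hg) e
          have e2 : ρ (n * g * t⁻¹) * x * ρ (n * g * t⁻¹)⁻¹ = x := by
            have : ρ t⁻¹ * x * ρ t = -x := by
              have h5 : x = -(ρ t * x * ρ t⁻¹) := by rw [htx, neg_neg]
              nth_rw 1 [h5]
              rw [mul_neg, neg_mul, ← mul_assoc, ← mul_assoc, rho_inv_mul, one_mul, mul_assoc, rho_inv_mul, mul_one]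
            rw [mul_inv_rev, inv_inv, map_mul ρ (n * g), map_mul ρ t,
              show ρ (n * g) * ρ t⁻¹ * x * (ρ t * ρ (n * g)⁻¹) = ρ (n * g) * (ρ t⁻¹ * x * ρ t) * ρ (n * g)⁻¹ by noncomm_ring,
              this, mul_neg, neg_mul, e, neg_neg]
          have := (st _ e2).mul hQR hft
          rwa [← map_mul, inv_mul_cancel_right] at this
      have := (Fac.left (hNQ _ (N.inv_mem hn))).mul hQR hng
      rwa [← map_mul, inv_mul_cancel_left] at this
  have hKK : ∀ c ∈ ρ '' (K : Set Γ), ∀ d ∈ ρ '' (K : Set Γ), Commute c d := by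
    rintro _ ⟨c, hc, rfl⟩ _ ⟨d, hd, rfl⟩
    exact hρ.comm_iff.2 (hKc c hc d hd)
  have hKtr : ∀ d ∈ ρ '' (K : Set Γ), d.transpose ∈ ρ '' (K : Set Γ) := by
    rintro _ ⟨d, hd, rfl⟩
    exact ⟨d⁻¹, K.inv_mem hd, hρ.orth d⟩
  by_cases hex : ∃ t ∈ G₁, ρ t * x * ρ t⁻¹ = -x
  · obtain ⟨t, htG, htx⟩ := hex
    obtain ⟨u, huQ, r, hr, hu2, hut, hux, huk⟩ := half_turn hρ hD hx hp h htx
    set c := u * ρ t with hc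
    have hct : c.transpose * c = (-r) • 1 := by
      rw [hc, Matrix.transpose_mul, ← hρ.orth, hut,
        show ρ t⁻¹ * -u * (u * ρ t) = -(ρ t⁻¹ * (u * u) * ρ t) by noncomm_ring, hu2, mul_smul_comm, mul_one,
        smul_mul_assoc, rho_inv_mul, neg_smul]
    have hct' : c * c.transpose = (-r) • 1 := by
      rw [hc, Matrix.transpose_mul, ← hρ.orth, hut,
        show u * ρ t * (ρ t⁻¹ * -u) = -(u * (ρ t * ρ t⁻¹) * u) by noncomm_ring, rho_mul_inv, mul_one, hu2, neg_smul]
    have hcK : ∀ d ∈ ρ '' (K : Set Γ), Commute c d := by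
      rintro _ ⟨d, hd, rfl⟩
      exact (hKQ d hd u huQ).mul_left (hρ.comm_iff.2 (Subgroup.mem_centralizer_iff.1 htG d hd).symm)
    have tr : ∀ {c d : Mat}, Commute c d → Commute c.transpose d.transpose := by
      intro c d h
      show _ * _ = _ * _
      rw [← Matrix.transpose_mul, ← Matrix.transpose_mul, h.eq]
    refine main (insert c (ρ '' K)) (Set.subset_insert _ _) ?_ ?_ ?_ ?_
    · rintro a (rfl | ha) b (rfl | hb)
      · exact Commute.refl _
      · exact hcK b hb
      · exact (hcK a ha).symm
      · exact hKK a ha b hb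
    · rintro a (rfl | ha) b (rfl | hb)
      · exact hct'.trans hct.symm
      · exact hcK _ (hKtr b hb)
      · simpa using tr (hcK _ (hKtr a ha)).symm
      · exact hKK a ha _ (hKtr b hb)
    · rintro a (rfl | ⟨d, hd, rfl⟩)
      · exact cpk _ hux huk
      · exact hKQ d hd
    · intro g hg hgx
      refine ⟨t, htG, htx, r⁻¹ • u, Subalgebra.smul_mem _ huQ _, c, Algebra.subset_adjoin (by simp), ?_⟩
      rw [hc, smul_mul_assoc, ← mul_assoc, hu2, smul_mul_assoc, one_mul, smul_smul, inv_mul_cancel₀ hr, one_smul]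
  · refine main (ρ '' K) subset_rfl hKK (fun c hc d hd => hKK c hc _ (hKtr d hd)) ?_ ?_
    · rintro _ ⟨d, hd, rfl⟩
      exact hKQ d hd
    · exact fun g hg hgx => absurd ⟨g, hg, hgx⟩ hex
end

/-! ### Transfer and inner automorphisms -/

section
variable {Γ : Type*} [Group Γ]

lemma mem_of_coprime_pow (H : Subgroup Γ) {g : Γ} {m n : ℕ} (hc : Nat.Coprime m n) (hm : g ^ m ∈ H)
    (hn : g ^ n ∈ H) : g ∈ H := by
  have h := Nat.gcd_eq_gcd_ab m n
  rw [hc.gcd_eq_one] at h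
  have : g = (g ^ m) ^ (m.gcdA n) * (g ^ n) ^ (m.gcdB n) := by
    rw [← zpow_natCast, ← zpow_natCast, ← zpow_mul, ← zpow_mul, ← zpow_add, ← h]; simp
  rw [this]
  exact H.mul_mem (H.zpow_mem hm _) (H.zpow_mem hn _)

variable [Finite Γ]

/-- If all elements of order three are central, then a Sylow 3-subgroup satisfies the hypothesis of
Burnside's transfer theorem. -/
lemma Good.normalizer_le (hG : Good Γ) (h3 : ∀ a : Γ, a ^ 3 = 1 → ∀ g, a * g = g * a) [Fact (Nat.Prime 3)]
    (P : Sylow 3 Γ) : Subgroup.normalizer P ≤ Subgroup.centralizer (P : Set Γ) := by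
  have hcyc : IsCyclic P := hG.sylow_cyclic (by norm_num) P P.2
  have hab : ∀ a ∈ P, ∀ b ∈ P, a * b = b * a := by
    intro a ha b hb
    have := (IsCyclic.isMulCommutative (α := P)).is_comm.comm ⟨a, ha⟩ ⟨b, hb⟩
    exact congrArg Subtype.val this
  intro n hn
  have hPn : ∀ y ∈ P, ∀ k : ℕ, n ^ k * y * (n ^ k)⁻¹ ∈ P := by
    intro y hy k
    exact (Subgroup.mem_set_normalizer_iff.1 (Subgroup.pow_mem _ hn k) y).1 hy
  have step : ∀ j : ℕ, ∀ y ∈ P, y ^ 3 ^ (j + 1) = 1 → n ^ 3 ^ j * y = y * n ^ 3 ^ j := by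
    intro j
    induction j with
    | zero => intro y _ hy; exact (h3 y (by simpa using hy) _).symm
    | succ j ih =>
      intro y hy hy1
      set N := n ^ 3 ^ j with hN
      have e3 : n ^ 3 ^ (j + 1) = N ^ 3 := by rw [hN, ← pow_mul, ← pow_succ]
      have h1 : N * y ^ 3 = y ^ 3 * N := ih _ (Subgroup.pow_mem _ hy 3) (by
        rw [← pow_mul, ← pow_succ', hy1])
      have hw : N * y * N⁻¹ ∈ P := hPn y hy _
      obtain ⟨w, hwd⟩ : ∃ w, w = y⁻¹ * (N * y * N⁻¹) := ⟨_, rfl⟩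
      have hw3 : w ^ 3 = 1 := by
        have hcm : Commute y⁻¹ (N * y * N⁻¹) := (show Commute y (N * y * N⁻¹) from hab y hy _ hw).inv_left
        rw [hwd, hcm.mul_pow, conj_pow, h1, mul_inv_cancel_right, inv_pow, inv_mul_cancel]
      have hNy : N * y = y * w * N := by rw [hwd]; group
      have hwc := h3 w hw3
      rw [e3]
      have hNw : ∀ k : ℕ, N ^ k * y = y * w ^ k * N ^ k := by
        intro k
        induction k with
        | zero => simp
        | succ k ihk =>
          rw [pow_succ' N, mul_assoc, ihk, ← mul_assoc, ← mul_assoc, hNy, mul_assoc (y * w) N,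
            ← (show Commute w N from hwc N).pow_left k |>.eq, pow_succ' w]
          simp only [mul_assoc]
      rw [hNw, hw3, mul_one]
  obtain ⟨J, hJ⟩ := P.2.exists_card_eq
  have c1 : n ^ 3 ^ J ∈ Subgroup.centralizer (P : Set Γ) := by
    rw [Subgroup.mem_centralizer_iff]
    intro y hy
    refine (step J y hy ?_).symm
    have : (⟨y, hy⟩ : P) ^ Nat.card P = 1 := pow_card_eq_one'
    rw [hJ] at this
    have h2 : y ^ 3 ^ J = 1 := congrArg Subtype.val this
    rw [pow_succ, pow_mul, h2, one_pow]
  obtain ⟨f, m, hm, e⟩ := Nat.exists_eq_pow_mul_and_not_dvd (orderOf_pos n).ne' 3 (by norm_num)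
  have c2 : n ^ m ∈ Subgroup.centralizer (P : Set Γ) := by
    have h1 : IsPGroup 3 (Subgroup.zpowers (n ^ m)) := by
      refine IsPGroup.of_card (n := f) ?_
      rw [Nat.card_zpowers, orderOf_pow_of_dvd (by rintro rfl; simp at hm) ⟨3 ^ f, by rw [e, mul_comm]⟩, e,
        Nat.mul_div_cancel _ (Nat.pos_of_ne_zero (by rintro rfl; simp at hm))]
    have h2 := h1.inf_normalizer_sylow P
    have h3 : n ^ m ∈ Subgroup.zpowers (n ^ m) ⊓ Subgroup.normalizer P :=
      ⟨Subgroup.mem_zpowers _, Subgroup.pow_mem _ hn m⟩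
    rw [h2] at h3
    rw [Subgroup.mem_centralizer_iff]
    exact fun y hy => hab y hy _ h3.2
  exact mem_of_coprime_pow _ (((Nat.Prime.coprime_iff_not_dvd Nat.prime_three).2 hm).pow_left J) c1 c2

/-- If all elements of order three are central, the elements of order prime to three form the kernel of
a homomorphism to a cyclic group. -/
lemma Good.exists_hom (hG : Good Γ) (h3 : ∀ a : Γ, a ^ 3 = 1 → ∀ g, a * g = g * a) :
    ∃ (P : Subgroup Γ) (τ : Γ →* P), IsCyclic P ∧ (∀ g, τ g = 1 ↔ ¬ 3 ∣ orderOf g) ∧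
      ¬ 3 ∣ Nat.card τ.ker := by
  have : Fact (Nat.Prime 3) := ⟨Nat.prime_three⟩
  obtain ⟨P⟩ : Nonempty (Sylow 3 Γ) := inferInstance
  have hP := hG.normalizer_le h3 P
  refine ⟨P, MonoidHom.transferSylow P hP, hG.sylow_cyclic (by norm_num) P P.2, fun g => ⟨fun h hd => ?_, fun h => ?_⟩,
    MonoidHom.not_dvd_card_ker_transferSylow P hP⟩
  · refine MonoidHom.not_dvd_card_ker_transferSylow P hP (hd.trans ?_)
    have := orderOf_dvd_natCard (⟨g, h⟩ : (MonoidHom.transferSylow P hP).ker)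
    rwa [← Subgroup.orderOf_coe] at this
  · have h1 : orderOf (MonoidHom.transferSylow P hP g) ∣ orderOf g := orderOf_map_dvd _ g
    obtain ⟨k, hk⟩ := P.2 (MonoidHom.transferSylow P hP g)
    have h2 := orderOf_dvd_of_pow_eq_one hk
    have hc : Nat.Coprime (3 ^ k) (orderOf g) := ((Nat.Prime.coprime_iff_not_dvd Nat.prime_three).2 h).pow_left k
    have := Nat.dvd_gcd h2 h1
    rw [hc.gcd_eq_one, Nat.dvd_one] at this
    exact orderOf_eq_one_iff.1 this

/-- If every element has a power of two central, the elements of order a power of two form a subgroup,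
because `g ↦ g ^ n` is a homomorphism for `n` the index of the center. -/
lemma two_elts_mul (h : ∀ g : Γ, ∃ n : ℕ, g ^ 2 ^ n ∈ Subgroup.center Γ) {a b : Γ}
    (ha : ∃ n : ℕ, a ^ 2 ^ n = 1) (hb : ∃ n : ℕ, b ^ 2 ^ n = 1) : ∃ n : ℕ, (a * b) ^ 2 ^ n = 1 := by
  have : Fact (Nat.Prime 2) := ⟨Nat.prime_two⟩
  have hq : IsPGroup 2 (Γ ⧸ Subgroup.center Γ) := by
    intro q
    induction q using QuotientGroup.induction_on with
    | H g =>
      obtain ⟨n, hn⟩ := h g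
      exact ⟨n, by rw [← QuotientGroup.mk_pow]; exact (QuotientGroup.eq_one_iff _).2 hn⟩
  obtain ⟨k, hk⟩ := hq.exists_card_eq
  have hpow : ∀ g : Γ, (MonoidHom.transferCenterPow Γ g : Γ) = g ^ 2 ^ k := by
    intro g
    rw [MonoidHom.transferCenterPow_apply, Subgroup.index, hk]
  have hm : (a * b) ^ 2 ^ k = a ^ 2 ^ k * b ^ 2 ^ k := by
    rw [← hpow, ← hpow, ← hpow, map_mul]; rfl
  have hcm : Commute (a ^ 2 ^ k) (b ^ 2 ^ k) := by
    rw [← hpow b]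
    exact (Subgroup.mem_center_iff.1 (MonoidHom.transferCenterPow Γ b).2 _)
  obtain ⟨n, hn⟩ := ha
  obtain ⟨l, hl⟩ := hb
  refine ⟨k + (n + l), ?_⟩
  rw [pow_add, pow_mul, hm, hcm.mul_pow, ← pow_mul, ← pow_mul, show 2 ^ k * 2 ^ (n + l) = 2 ^ n * (2 ^ k * 2 ^ l) by ring,
    pow_mul, hn, one_pow, one_mul, show 2 ^ n * (2 ^ k * 2 ^ l) = 2 ^ l * (2 ^ n * 2 ^ k) by ring, pow_mul, hl, one_pow]
end

section
/-- An algebra homomorphism of a quaternion algebra into itself, given on generators, is inner. -/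
lemma inner_of_conj {i j i' j' : Mat} (hi : i.transpose = -i) (hj : j.transpose = -j) (hii : i * i = -1)
    (hjj : j * j = -1) (hij : j * i = -(i * j)) (hi' : i' ∈ Algebra.adjoin ℝ {i, j})
    (hj' : j' ∈ Algebra.adjoin ℝ {i, j}) (hii' : i' * i' = -1) (hjj' : j' * j' = -1)
    (hij' : j' * i' = -(i' * j')) :
    ∃ u ∈ Algebra.adjoin ℝ {i, j}, ∃ r : ℝ, r ≠ 0 ∧ u.transpose ∈ Algebra.adjoin ℝ {i, j} ∧
      u * u.transpose = r • 1 ∧ u.transpose * u = r • 1 ∧ u * i = i' * u ∧ u * j = j' * u := by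
  have mi : i ∈ Algebra.adjoin ℝ {i, j} := Algebra.subset_adjoin (by simp)
  have mj : j ∈ Algebra.adjoin ℝ {i, j} := Algebra.subset_adjoin (by simp)
  -- the average of `w' * v * w⁻¹` over the quaternion group intertwines the two actions
  set f : Mat → Mat := fun v => v - i' * v * i - j' * v * j - i' * j' * v * (i * j) with hf
  have f1 : ∀ v, f v * i = i' * f v := by
    intro v
    simp only [hf, mul_add, add_mul, mul_sub, sub_mul, mul_assoc, mul_neg, neg_mul, neg_neg, mul_one, one_mul,
      hii, hjj, hij, hii', hjj', hij', assoc2 hii, assoc2 hjj, assoc2 hij, assoc2 hii', assoc2 hjj', assoc2 hij']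
    abel
  have f2 : ∀ v, f v * j = j' * f v := by
    intro v
    simp only [hf, mul_add, add_mul, mul_sub, sub_mul, mul_assoc, mul_neg, neg_mul, neg_neg, mul_one, one_mul,
      hii, hjj, hij, hii', hjj', hij', assoc2 hii, assoc2 hjj, assoc2 hij, assoc2 hii', assoc2 hjj', assoc2 hij']
    abel
  have f3 : f 1 - f i * i - f j * j - f (i * j) * (i * j) = (4 : ℝ) • 1 := by
    simp only [hf, mul_add, add_mul, mul_sub, sub_mul, mul_assoc, mul_neg, neg_mul, neg_neg, mul_one, one_mul,
      hii, hjj, hij, assoc2 hii, assoc2 hjj, assoc2 hij]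
    module
  have f4 : ∀ v ∈ Algebra.adjoin ℝ {i, j}, f v ∈ Algebra.adjoin ℝ {i, j} := fun v hv =>
    sub_mem (sub_mem (sub_mem hv (mul_mem (mul_mem hi' hv) mi)) (mul_mem (mul_mem hj' hv) mj))
      (mul_mem (mul_mem (mul_mem hi' hj') hv) (mul_mem mi mj))
  obtain ⟨v, hv, hne⟩ : ∃ v ∈ Algebra.adjoin ℝ {i, j}, f v ≠ 0 := by
    by_contra hcon
    push Not at hcon
    rw [hcon 1 (one_mem _), hcon i mi, hcon j mj, hcon _ (mul_mem mi mj)] at f3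
    have := congrFun (congrFun f3 0) 0
    norm_num at this
  obtain ⟨α, β, γ, δ, e⟩ := quat_form hii hjj hij (f4 v hv)
  have et : (f v).transpose = α • 1 - β • i - γ • j - δ • (i * j) := by
    rw [e]
    simp only [Matrix.transpose_add, Matrix.transpose_smul, Matrix.transpose_one, Matrix.transpose_mul, hi, hj,
      neg_mul_neg, hij]
    module
  have e1 : f v * (f v).transpose = (α ^ 2 + β ^ 2 + γ ^ 2 + δ ^ 2) • 1 := by
    rw [et, e]
    simp only [mul_add, add_mul, mul_sub, sub_mul, mul_assoc, smul_mul_assoc, mul_smul_comm, mul_one, one_mul, smul_add,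
      smul_sub, smul_smul, neg_mul, mul_neg, smul_neg, neg_neg, hii, hjj, hij, assoc2 hii, assoc2 hjj, assoc2 hij]
    module
  refine ⟨f v, f4 v hv, α ^ 2 + β ^ 2 + γ ^ 2 + δ ^ 2, ?_, ?_, e1, ?_, f1 v, f2 v⟩
  · intro h0
    apply hne
    have h1 : α = 0 := by nlinarith [sq_nonneg α, sq_nonneg β, sq_nonneg γ, sq_nonneg δ]
    have h2 : β = 0 := by nlinarith [sq_nonneg α, sq_nonneg β, sq_nonneg γ, sq_nonneg δ]
    have h3 : γ = 0 := by nlinarith [sq_nonneg α, sq_nonneg β, sq_nonneg γ, sq_nonneg δ]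
    have h4 : δ = 0 := by nlinarith [sq_nonneg α, sq_nonneg β, sq_nonneg γ, sq_nonneg δ]
    rw [e, h1, h2, h3, h4]; simp
  · rw [et]
    exact sub_mem (sub_mem (sub_mem (Subalgebra.smul_mem _ (one_mem _) _) (Subalgebra.smul_mem _ mi _))
      (Subalgebra.smul_mem _ mj _)) (Subalgebra.smul_mem _ (mul_mem mi mj) _)
  · rw [et, e]
    simp only [mul_add, add_mul, mul_sub, sub_mul, mul_assoc, smul_mul_assoc, mul_smul_comm, mul_one, one_mul, smul_add,
      smul_sub, smul_smul, neg_mul, mul_neg, smul_neg, neg_neg, hii, hjj, hij, assoc2 hii, assoc2 hjj, assoc2 hij]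
    module
end

/-! ### Structure of the group -/

section
variable {Γ : Type*} [Group Γ]

lemma conj_three {a : Γ} (h : a ^ 3 = 1) (g : Γ) : (g * a * g⁻¹) ^ 3 = 1 := by
  rw [conj_pow, h]; group

lemma centralizer_normal_of_conj {S : Set Γ} (hS : ∀ s ∈ S, ∀ g, g * s * g⁻¹ ∈ S) :
    (Subgroup.centralizer S).Normal := by
  refine ⟨fun n hn g => ?_⟩
  rw [Subgroup.mem_centralizer_iff] at *
  intro s hs
  have h := hn _ (hS s hs g⁻¹)
  rw [inv_inv] at h
  calc s * (g * n * g⁻¹) = g * (g⁻¹ * s * g * n) * g⁻¹ := by group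
    _ = g * n * g⁻¹ * s := by rw [h]; group

variable [Finite Γ] {ρ : Γ →* Mat}

/-- The centralizer of a conjugation-invariant set of commuting elements is the whole group or has index
two. -/
lemma Ix2_of_set (hD : PropD ρ) (hρ : FreeRep ρ) {S : Set Γ} (hS : ∀ s ∈ S, ∀ g, g * s * g⁻¹ ∈ S)
    (hc : ∀ s ∈ S, ∀ t ∈ S, s * t = t * s) : Ix2 (Subgroup.centralizer S) := by
  rw [← Subgroup.centralizer_closure]
  have : (Subgroup.closure S).Normal := by
    refine ⟨fun n hn g => ?_⟩
    have h : Subgroup.closure S ≤ (Subgroup.closure S).comap (MulAut.conj g).toMonoidHom := by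
      rw [Subgroup.closure_le]
      intro s hs
      exact Subgroup.subset_closure (hS s hs g)
    exact h hn
  refine Ix2_of_comm hD hρ _ fun a ha b hb => ?_
  exact congrArg Subtype.val ((Subgroup.isMulCommutative_closure hc).is_comm.comm ⟨a, ha⟩ ⟨b, hb⟩)

lemma Good.exists_hom_sub (hG : Good Γ) {L : Subgroup Γ} (hL : L ≤ cent3 Γ) :
    ∃ (P : Subgroup L) (τ : L →* P), IsCyclic P ∧ (∀ g, τ g = 1 ↔ ¬ 3 ∣ orderOf (g : Γ)) ∧
      ¬ 3 ∣ Nat.card τ.ker := by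
  have := (hG.sub L).exists_hom (fun a ha g => Subtype.ext
    (Subgroup.mem_centralizer_iff.1 (hL g.2) a (congrArg Subtype.val ha)))
  simpa only [← Subgroup.orderOf_coe] using this

/-- A subgroup centralizing all elements of order three is abelian as soon as its elements of order prime
to three are central in it. -/
lemma Good.comm_of_prime_to_three (hG : Good Γ) {L : Subgroup Γ} (hL : L ≤ cent3 Γ)
    (hc : ∀ m ∈ L, ¬ 3 ∣ orderOf m → ∀ l ∈ L, m * l = l * m) : ∀ a ∈ L, ∀ b ∈ L, a * b = b * a := by
  obtain ⟨P, τ, hP, hτ, _⟩ := hG.exists_hom_sub hL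
  have := τ.isMulCommutative_of_isCyclic_of_ker_le_center (fun m hm => by
    rw [Subgroup.mem_center_iff]
    exact fun l => Subtype.ext (hc m m.2 ((hτ m).1 hm) l l.2).symm)
  intro a ha b hb
  exact congrArg Subtype.val (this.is_comm.comm ⟨a, ha⟩ ⟨b, hb⟩)

/-- A subgroup `L` centralizing the elements of order three is generated by a single element modulo
elements of order prime to three. -/
lemma Good.exists_gen (hG : Good Γ) {L : Subgroup Γ} (hL : L ≤ cent3 Γ) :
    ∃ b ∈ L, ∀ g ∈ L, ∃ n : ℕ, ∃ m ∈ L, ¬ 3 ∣ orderOf m ∧ g = b ^ n * m := by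
  obtain ⟨P, τ, hP, hτ, _⟩ := hG.exists_hom_sub hL
  obtain ⟨⟨_, b, rfl⟩, hb⟩ := IsCyclic.exists_generator (α := τ.range)
  refine ⟨b, b.2, fun g hg => ?_⟩
  obtain ⟨n, hn⟩ := (mem_powers_iff_mem_zpowers).2 (hb ⟨τ ⟨g, hg⟩, _, rfl⟩)
  have hn' : τ b ^ n = τ ⟨g, hg⟩ := congrArg Subtype.val hn
  refine ⟨n, ((b : Γ) ^ n)⁻¹ * g, L.mul_mem (L.inv_mem (L.pow_mem b.2 n)) hg, ?_, by group⟩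
  have := (hτ ((b ^ n)⁻¹ * ⟨g, hg⟩)).1 (by rw [map_mul, map_inv, map_pow, hn', inv_mul_cancel])
  simpa using this

/-- The elements of order prime to three centralizing all elements of order three form a normal subgroup. -/
lemma Good.exists_prime_to_three (hG : Good Γ) : ∃ M : Subgroup Γ, M.Normal ∧
    (∀ g, g ∈ M ↔ g ∈ cent3 Γ ∧ ¬ 3 ∣ orderOf g) ∧ ¬ 3 ∣ Nat.card M := by
  obtain ⟨P, τ, hP, hτ, h3⟩ := hG.exists_hom_sub (le_refl (cent3 Γ))
  have hmem : ∀ g, g ∈ τ.ker.map (cent3 Γ).subtype ↔ g ∈ cent3 Γ ∧ ¬ 3 ∣ orderOf g := by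
    intro g
    constructor
    · rintro ⟨g, hg, rfl⟩
      exact ⟨g.2, (hτ g).1 hg⟩
    · rintro ⟨hg, ho⟩
      exact ⟨⟨g, hg⟩, (hτ _).2 ho, rfl⟩
  refine ⟨_, ⟨fun n hn g => ?_⟩, hmem, ?_⟩
  · rw [hmem] at hn ⊢
    rw [orderOf_conj]
    exact ⟨cent3_normal.conj_mem _ hn.1 g, hn.2⟩
  · rwa [Subgroup.card_subtype]

/-- The structure of the group once its elements of order three commute: for a normal abelian subgroup `K`,
let `G₁` be the centralizer of `K` and of the elements of order three (of index at most two by `Struct.ix2`). Its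
elements of order prime to three lie in `K * S` for a normal 2-subgroup `S`. -/
structure Struct (K S : Subgroup Γ) : Prop where
  three : ∀ a b : Γ, a ^ 3 = 1 → b ^ 3 = 1 → a * b = b * a
  normK : K.Normal
  normS : S.Normal
  commK : ∀ a ∈ K, ∀ b ∈ K, a * b = b * a
  cent : K ≤ cent3 Γ
  two : IsPGroup 2 S
  le : S ≤ Subgroup.centralizer ({a : Γ | a ^ 3 = 1} ∪ K)
  fac : ∀ m ∈ Subgroup.centralizer ({a : Γ | a ^ 3 = 1} ∪ (K : Set Γ)), ¬ 3 ∣ orderOf m →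
    ∃ k ∈ K, ∃ s ∈ S, m = k * s

/-- The subgroup `K` is generated by the elements of odd order among those of order prime to three in
`cent3 Γ`, and `S` consists of the 2-elements of the centralizer `G₁`. -/
lemma exists_struct (hD : PropD ρ) (hρ : FreeRep ρ) : ∃ K S : Subgroup Γ, Struct K S := by
  have hG := hρ.good
  have three : ∀ a b : Γ, a ^ 3 = 1 → b ^ 3 = 1 → a * b = b * a := by
    intro a b ha hb
    by_cases a1 : a = 1
    · simp [a1]
    by_cases b1 : b = 1
    · simp [b1]
    have h := IsX.comm hρ hD ⟨a, ha, a1, rfl⟩ ⟨b, hb, b1, rfl⟩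
    have e : ∀ c : Γ, c ^ 3 = 1 → c ≠ 1 → ρ c = (1/2 : ℝ) • ((ρ c - ρ c⁻¹) - 1) := by
      intro c hc c1
      rw [sub_eq_add_neg _ (1 : Mat), ← hρ.cube hc c1]; module
    rw [← hρ.comm_iff, ← commute_of_data (e a ha a1), e b hb b1]
    exact (h.sub_right (Commute.one_right _)).smul_right _
  obtain ⟨M, hMn, hM, hM3⟩ := hG.exists_prime_to_three
  have hK := oddPart_normal M
  have hKc := odd_normal_comm hD hρ (oddPart M) (hG.odd_card_oddPart hM3)
  set K := oddPart M with hKd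
  have hKM : K ≤ M := oddPart_le M
  set G₁ := Subgroup.centralizer ({a : Γ | a ^ 3 = 1} ∪ (K : Set Γ)) with hG₁
  have hG₁n : G₁.Normal := centralizer_normal_of_conj (by
    rintro s (hs | hs) g
    · exact Or.inl (conj_three hs g)
    · exact Or.inr (hK.conj_mem s hs g))
  have hG₁c : G₁ ≤ cent3 Γ := Subgroup.centralizer_le Set.subset_union_left
  have hKG : K ≤ G₁ := by
    intro k hk
    rw [hG₁, Subgroup.mem_centralizer_iff]
    rintro s (hs | hs)
    · exact Subgroup.mem_centralizer_iff.1 ((hM k).1 (hKM hk)).1 s hs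
    · exact hKc s hs k hk
  have hpow : ∀ g : (M ⊓ G₁ : Subgroup Γ), ∃ n : ℕ, g ^ 2 ^ n ∈ Subgroup.center (M ⊓ G₁ : Subgroup Γ) := by
    rintro ⟨g, hg⟩
    obtain ⟨n, hn⟩ := pow_mem_oddPart hg.1
    refine ⟨n, Subgroup.mem_center_iff.2 fun l => Subtype.ext ?_⟩
    exact (Subgroup.mem_centralizer_iff.1 l.2.2 _ (Or.inr hn)).symm
  let S : Subgroup Γ :=
    { carrier := {g | g ∈ M ⊓ G₁ ∧ ∃ n : ℕ, g ^ 2 ^ n = 1}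
      one_mem' := ⟨one_mem _, 0, by simp⟩
      mul_mem' := by
        rintro a b ⟨ha, n, hn⟩ ⟨hb, l, hl⟩
        refine ⟨mul_mem ha hb, ?_⟩
        obtain ⟨m, hm⟩ := two_elts_mul hpow (a := ⟨a, ha⟩) (b := ⟨b, hb⟩) ⟨n, Subtype.ext hn⟩ ⟨l, Subtype.ext hl⟩
        exact ⟨m, congrArg Subtype.val hm⟩
      inv_mem' := by
        rintro a ⟨ha, n, hn⟩
        exact ⟨inv_mem ha, n, by rw [inv_pow, hn, inv_one]⟩ }
  refine ⟨K, S, three, hK, ⟨?_⟩, hKc, fun k hk => ((hM k).1 (hKM hk)).1, ?_, fun s hs => hs.1.2, ?_⟩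
  · rintro s ⟨⟨h1, h2⟩, n, hn⟩ g
    exact ⟨⟨hMn.conj_mem s h1 g, hG₁n.conj_mem s h2 g⟩, n, by rw [conj_pow, hn]; group⟩
  · rintro ⟨s, _, n, hn⟩
    exact ⟨n, Subtype.ext hn⟩
  · intro m hm h3
    have hmM : m ∈ M := (hM m).2 ⟨hG₁c hm, h3⟩
    obtain ⟨n, l, hl, e⟩ := Nat.exists_eq_two_pow_mul_odd (orderOf_pos m).ne'
    have h1 : m ^ 2 ^ n ∈ K := by
      refine mem_oddPart (M.pow_mem hmM _) ?_
      rw [orderOf_pow_of_dvd (by positivity) ⟨l, e⟩, e, Nat.mul_div_cancel_left _ (by positivity)]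
      exact hl
    have h2 : m ^ l ∈ S := ⟨⟨M.pow_mem hmM _, G₁.pow_mem hm _⟩, n, by
      rw [← pow_mul, mul_comm, ← e, pow_orderOf_eq_one]⟩
    have hc : Nat.Coprime (2 ^ n) l := (Nat.coprime_two_left.2 hl).pow_left n
    have h := Nat.gcd_eq_gcd_ab (2 ^ n) l
    rw [hc.gcd_eq_one] at h
    refine ⟨_, K.zpow_mem h1 ((2 ^ n).gcdA l), _, S.zpow_mem h2 ((2 ^ n).gcdB l), ?_⟩
    rw [← zpow_natCast, ← zpow_natCast, ← zpow_mul, ← zpow_mul, ← zpow_add, ← h]; simp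
end

/-! ### The final contradiction -/

section
variable {Γ : Type*} [Group Γ] [Finite Γ] {ρ : Γ →* Mat} {K S : Subgroup Γ}

lemma Struct.ix2 (h : Struct K S) (hD : PropD ρ) (hρ : FreeRep ρ) :
    Ix2 (Subgroup.centralizer ({a : Γ | a ^ 3 = 1} ∪ (K : Set Γ))) := by
  refine Ix2_of_set hD hρ ?_ ?_
  · rintro s (hs | hs) g
    · exact Or.inl (conj_three hs g)
    · exact Or.inr (h.normK.conj_mem s hs g)
  · rintro s (hs | hs) t (ht | ht)
    · exact h.three s t hs ht
    · exact Subgroup.mem_centralizer_iff.1 (h.cent ht) s hs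
    · exact (Subgroup.mem_centralizer_iff.1 (h.cent hs) t ht).symm
    · exact h.commK s hs t ht

/-- A self-centralizing normal abelian subgroup of the 2-subgroup `S` yields an abelian subgroup of index at
most two, which is impossible. -/
lemma Struct.no_self_centralizing (h : Struct K S) (hD : PropD ρ) (hρ : FreeRep ρ) (D : Subgroup Γ)
    (hDn : D.Normal) (hDS : D ≤ S) (hDc : ∀ a ∈ D, ∀ b ∈ D, a * b = b * a)
    (hself : ∀ s ∈ S, (∀ d ∈ D, d * s = s * d) → s ∈ D) : False := by
  have hDG : ∀ d ∈ D, ∀ a ∈ ({a : Γ | a ^ 3 = 1} ∪ (K : Set Γ)), a * d = d * a := fun d hd =>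
    Subgroup.mem_centralizer_iff.1 (h.le (hDS hd))
  set B : Set Γ := {a : Γ | a ^ 3 = 1} ∪ (K : Set Γ) ∪ (D : Set Γ) with hB
  have hI : Ix2 (Subgroup.centralizer B) := by
    refine Ix2_of_set hD hρ ?_ ?_
    · rintro s ((hs | hs) | hs) g
      · exact Or.inl (Or.inl (conj_three hs g))
      · exact Or.inl (Or.inr (h.normK.conj_mem s hs g))
      · exact Or.inr (hDn.conj_mem s hs g)
    · rintro s ((hs | hs) | hs) t ((ht | ht) | ht)
      · exact h.three s t hs ht
      · exact Subgroup.mem_centralizer_iff.1 (h.cent ht) s hs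
      · exact hDG t ht s (Or.inl hs)
      · exact (Subgroup.mem_centralizer_iff.1 (h.cent hs) t ht).symm
      · exact h.commK s hs t ht
      · exact hDG t ht s (Or.inr hs)
      · exact (hDG s hs t (Or.inl ht)).symm
      · exact (hDG s hs t (Or.inr ht)).symm
      · exact hDc s hs t ht
  refine no_abelian_ix2 hD hρ hI (hρ.good.comm_of_prime_to_three ?_ ?_)
  · exact Subgroup.centralizer_le (Set.subset_union_left.trans Set.subset_union_left)
  · intro m hm h3 l hl
    obtain ⟨k, hk, s, hs, rfl⟩ := h.fac m (Subgroup.centralizer_le Set.subset_union_left hm) h3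
    have hsD : s ∈ D := by
      refine hself s hs fun d hd => ?_
      have h1 : Commute d (k * s) := Subgroup.mem_centralizer_iff.1 hm d (Or.inr hd)
      have h2 : Commute d k := (hDG d hd k (Or.inr hk)).symm
      have h3 := h2.inv_right.mul_right h1
      rwa [inv_mul_cancel_left] at h3
    have h1 : Commute k l := Subgroup.mem_centralizer_iff.1 hl k (Or.inl (Or.inr hk))
    have h2 : Commute s l := Subgroup.mem_centralizer_iff.1 hl s (Or.inr hsD)
    exact (h1.mul_left h2).eq

/-- If `S` lies in the quaternion algebra generated by two anticommuting elements of order four, the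
centralizer `G₁` lies in the product of this algebra with commuting matrices, which is impossible. -/
lemma Struct.no_quaternion (h : Struct K S) (hD : PropD ρ) (hρ : FreeRep ρ) {z z' : Γ} (hz : z ∈ S) (hz' : z' ∈ S)
    (hi : (ρ z).transpose = -ρ z) (hj : (ρ z').transpose = -ρ z') (hii : ρ z * ρ z = -1) (hjj : ρ z' * ρ z' = -1)
    (hij : ρ z' * ρ z = -(ρ z * ρ z')) (hS : ∀ s ∈ S, ρ s ∈ Algebra.adjoin ℝ {ρ z, ρ z'}) : False := by
  set G₁ := Subgroup.centralizer ({a : Γ | a ^ 3 = 1} ∪ (K : Set Γ)) with hG₁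
  set Q := Algebra.adjoin ℝ {ρ z, ρ z'} with hQ
  have hKS : ∀ k ∈ K, ∀ q ∈ Q, Commute (ρ k) q := by
    intro k hk q hq
    refine commute_adjoin_right ?_ hq
    rintro _ (rfl | rfl)
    · exact hρ.comm_iff.2 (Subgroup.mem_centralizer_iff.1 (h.le hz) k (Or.inr hk))
    · exact hρ.comm_iff.2 (Subgroup.mem_centralizer_iff.1 (h.le hz') k (Or.inr hk))
  obtain ⟨b, hb, hgen⟩ := hρ.good.exists_gen (L := G₁) (Subgroup.centralizer_le Set.subset_union_left)
  have cj : ∀ g : Γ, ρ (b * g * b⁻¹) = ρ b * ρ g * ρ b⁻¹ := fun g => by rw [map_mul, map_mul]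
  have tj : ∀ g : Γ, (ρ g).transpose = -ρ g → (ρ (b * g * b⁻¹)).transpose = -ρ (b * g * b⁻¹) := by
    intro g hg
    rw [cj, Matrix.transpose_mul, Matrix.transpose_mul, hg, ← hρ.orth, ← hρ.orth, inv_inv]
    noncomm_ring
  have m1 : ∀ n : Mat, ρ b * (-n) * ρ b⁻¹ = -(ρ b * n * ρ b⁻¹) := fun n => by noncomm_ring
  have m2 : ρ b * 1 * ρ b⁻¹ = 1 := by rw [mul_one, rho_mul_inv]
  obtain ⟨u, hu, r, hr, hut, huu, huu', hui, huj⟩ := inner_of_conj hi hj hii hjj hij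
    (hS _ (h.normS.conj_mem z hz b)) (hS _ (h.normS.conj_mem z' hz' b))
    (by rw [cj, ← conj_mul_mat, hii, m1, m2]) (by rw [cj, ← conj_mul_mat, hjj, m1, m2])
    (by rw [cj, cj, ← conj_mul_mat, ← conj_mul_mat, hij, m1])
  set c := u.transpose * ρ b with hc
  have cc : ∀ g : Γ, (ρ g).transpose = -ρ g → u * ρ g = ρ (b * g * b⁻¹) * u → Commute c (ρ g) := by
    intro g hg e
    have e' := congrArg Matrix.transpose e
    rw [Matrix.transpose_mul, Matrix.transpose_mul, hg, tj g hg, neg_mul, mul_neg, neg_inj] at e'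
    show u.transpose * ρ b * ρ g = ρ g * (u.transpose * ρ b)
    rw [← mul_assoc, e', cj, mul_assoc, mul_assoc, mul_assoc, mul_assoc, rho_inv_mul, mul_one]
  have hci := cc z hi hui
  have hcj := cc z' hj huj
  have hct : c.transpose = ρ b⁻¹ * u := by rw [hc, Matrix.transpose_mul, ← hρ.orth, Matrix.transpose_transpose]
  have hcc : c * c.transpose = r • 1 := by
    rw [hct, hc, mul_assoc, ← mul_assoc (ρ b), rho_mul_inv, one_mul, huu']
  have hcc' : c.transpose * c = r • 1 := by
    rw [hct, hc, mul_assoc, ← mul_assoc u, huu, smul_mul_assoc, mul_smul_comm, one_mul, rho_inv_mul]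
  have hbc : ρ b = (r⁻¹ • u) * c := by
    rw [hc, smul_mul_assoc, ← mul_assoc, huu, smul_mul_assoc, one_mul, smul_smul, inv_mul_cancel₀ hr, one_smul]
  have hcK : ∀ d ∈ ρ '' (K : Set Γ), Commute c d := by
    rintro _ ⟨d, hd, rfl⟩
    exact (hKS d hd _ hut).symm.mul_left (hρ.comm_iff.2 (Subgroup.mem_centralizer_iff.1 hb d (Or.inr hd)).symm)
  have hKK : ∀ c ∈ ρ '' (K : Set Γ), ∀ d ∈ ρ '' (K : Set Γ), Commute c d := by
    rintro _ ⟨c, hc, rfl⟩ _ ⟨d, hd, rfl⟩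
    exact hρ.comm_iff.2 (h.commK c hc d hd)
  have hKtr : ∀ d ∈ ρ '' (K : Set Γ), d.transpose ∈ ρ '' (K : Set Γ) := by
    rintro _ ⟨d, hd, rfl⟩
    exact ⟨d⁻¹, K.inv_mem hd, hρ.orth d⟩
  have tr : ∀ {c d : Mat}, Commute c d → Commute c.transpose d.transpose := by
    intro c d h
    show _ * _ = _ * _
    rw [← Matrix.transpose_mul, ← Matrix.transpose_mul, h.eq]
  have mz : ρ z ∈ Q := Algebra.subset_adjoin (by simp)
  have mz' : ρ z' ∈ Q := Algebra.subset_adjoin (by simp)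
  have hUi : ∀ a ∈ insert c (ρ '' (K : Set Γ)), Commute a (ρ z) := by
    rintro a (rfl | ⟨d, hd, rfl⟩)
    · exact hci
    · exact hKS d hd _ mz
  have hUj : ∀ a ∈ insert c (ρ '' (K : Set Γ)), Commute a (ρ z') := by
    rintro a (rfl | ⟨d, hd, rfl⟩)
    · exact hcj
    · exact hKS d hd _ mz'
  have hQR : ∀ q ∈ Q, ∀ a ∈ Algebra.adjoin ℝ (insert c (ρ '' (K : Set Γ))), Commute q a := by
    intro q hq a ha
    refine (commute_adjoin ?_ ha hq).symm
    rintro a ha _ (rfl | rfl)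
    · exact hUi a ha
    · exact hUj a ha
  refine no_quaternion_gen hD hρ (h.ix2 hD hρ) hi hj hii hjj hij (insert c (ρ '' (K : Set Γ))) ?_ ?_ hUi hUj ?_
  · rintro a (rfl | ha) d (rfl | hd)
    · exact Commute.refl _
    · exact hcK d hd
    · exact (hcK a ha).symm
    · exact hKK a ha d hd
  · rintro a (rfl | ha) d (rfl | hd)
    · exact hcc.trans hcc'.symm
    · exact hcK _ (hKtr d hd)
    · simpa using tr (hcK _ (hKtr a ha)).symm
    · exact hKK a ha _ (hKtr d hd)
  · intro g hg
    obtain ⟨n, m, hm, h3, rfl⟩ := hgen g hg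
    obtain ⟨k, hk, s, hs, rfl⟩ := h.fac m hm h3
    have fb : Fac Q (Algebra.adjoin ℝ (insert c (ρ '' (K : Set Γ)))) (ρ b) :=
      ⟨_, Subalgebra.smul_mem _ hu _, c, Algebra.subset_adjoin (by simp), hbc⟩
    have fbn : ∀ n : ℕ, Fac Q (Algebra.adjoin ℝ (insert c (ρ '' (K : Set Γ)))) (ρ (b ^ n)) := by
      intro n
      induction n with
      | zero => rw [pow_zero, map_one]; exact Fac.left (one_mem _)
      | succ n ih => rw [pow_succ, map_mul]; exact ih.mul hQR fb
    rw [map_mul, map_mul]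
    exact (fbn n).mul hQR ((Fac.right (Algebra.subset_adjoin (Or.inr ⟨k, hk, rfl⟩))).mul hQR (Fac.left (hS s hs)))

/-- `PropD` fails for every free representation of a finite group. If `S` is abelian, it is itself a
self-centralizing abelian subgroup of `S`. Otherwise `S` has an element `z` of order four with only the conjugates `z`
and `z⁻¹` in `S`. If these are all its conjugates, the centralizer of `z` in `S` is normal, abelian and self-centralizing;
if not, two anticommuting conjugates of `z` generate a quaternion algebra containing `S`. -/
lemma not_propD (hρ : FreeRep ρ) (hD : PropD ρ) : False := by
  obtain ⟨K, S, h⟩ := exists_struct hD hρ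
  have hG := hρ.good
  by_cases hab : ∀ a ∈ S, ∀ b ∈ S, a * b = b * a
  · exact h.no_self_centralizing hD hρ S h.normS le_rfl hab fun s hs _ => hs
  push Not at hab
  obtain ⟨a, ha, b, hb, hne⟩ := hab
  have hnS := h.normS
  obtain ⟨ε, hεS, hε, hε1⟩ : ∃ ε ∈ S, ε * ε = 1 ∧ ε ≠ 1 := by
    have a1 : (⟨a, ha⟩ : S) ≠ 1 := by
      intro e
      have : a = 1 := congrArg Subtype.val e
      rw [this] at hne; simp at hne
    have hnt : Nontrivial S := ⟨_, _, a1⟩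
    have : Fact (Nat.Prime 2) := ⟨Nat.prime_two⟩
    obtain ⟨n, hn0, hn⟩ := h.two.nontrivial_iff_card.1 hnt
    obtain ⟨e, he⟩ := exists_prime_orderOf_dvd_card' (G := S) 2 (hn ▸ dvd_pow_self 2 hn0.ne')
    refine ⟨e, e.2, ?_, ?_⟩
    · have := pow_orderOf_eq_one e
      rw [he, pow_two] at this
      exact congrArg Subtype.val this
    · intro e1
      rw [OneMemClass.coe_eq_one] at e1
      rw [e1, orderOf_one] at he; omega
  have hεc := hG.eps_comm hε hε1
  obtain ⟨⟨z, hzS⟩, hz, hzs⟩ := (hG.sub S).exists_four (ε := ⟨ε, hεS⟩) (Subtype.ext hε)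
    (fun e => hε1 (congrArg Subtype.val e)) h.two (c := ⟨a, ha⟩)
    (fun e => by
      have : a = 1 := congrArg Subtype.val e
      rw [this] at hne; simp at hne)
    (fun e => by
      have : a = ε := congrArg Subtype.val e
      rw [this] at hne; exact hne (hεc b).symm)
  replace hz : z * z = ε := congrArg Subtype.val hz
  replace hzs : ∀ s ∈ S, s * z * s⁻¹ = z ∨ s * z * s⁻¹ = ε * z := fun s hs =>
    (hzs ⟨s, hs⟩).imp (congrArg Subtype.val) (congrArg Subtype.val)
  by_cases hall : ∀ g : Γ, g * z * g⁻¹ = z ∨ g * z * g⁻¹ = ε * z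
  · refine h.no_self_centralizing hD hρ (S ⊓ Subgroup.centralizer {z}) ⟨?_⟩ inf_le_left ?_ ?_
    · rintro d ⟨hd, hdz⟩ g
      refine ⟨hnS.conj_mem d hd g, ?_⟩
      have hdz : Commute z d := Subgroup.mem_centralizer_iff.1 hdz z rfl
      refine Subgroup.mem_centralizer_iff.2 fun y hy => ?_
      rw [Set.mem_singleton_iff.1 hy]
      have hw : Commute (g⁻¹ * z * g) d := by
        have := hall g⁻¹
        rw [inv_inv] at this
        rcases this with e | e
        · rw [e]; exact hdz
        · rw [e]; exact (show Commute ε d from (hεc d).symm).mul_left hdz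
      calc z * (g * d * g⁻¹) = g * (g⁻¹ * z * g * d) * g⁻¹ := by group
        _ = g * d * g⁻¹ * z := by rw [hw.eq]; group
    · set C := S ⊓ Subgroup.centralizer {z} with hC
      have mε : ε ∈ C := ⟨hεS, Subgroup.mem_centralizer_iff.2 (by rintro _ rfl; exact hεc _)⟩
      have mz : z ∈ C := ⟨hzS, Subgroup.mem_centralizer_iff.2 (by rintro _ rfl; rfl)⟩
      have := (hG.sub C).comm_of_central_four (ε := ⟨ε, mε⟩) (Subtype.ext hε)
        (fun e => hε1 (congrArg Subtype.val e)) (h.two.to_le inf_le_left) (z := ⟨z, mz⟩) (Subtype.ext hz)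
        (fun s => Subtype.ext (Subgroup.mem_centralizer_iff.1 s.2.2 z rfl).symm)
      intro x hx y hy
      exact congrArg Subtype.val (this ⟨x, hx⟩ ⟨y, hy⟩)
    · intro s hs hd
      refine ⟨hs, Subgroup.mem_centralizer_iff.2 ?_⟩
      rintro _ rfl
      exact hd _ ⟨hzS, Subgroup.mem_centralizer_iff.2 (by rintro _ rfl; rfl)⟩
  push Not at hall
  obtain ⟨g, hg1, hg2⟩ := hall
  obtain ⟨z', hz'd⟩ : ∃ z', z' = g * z * g⁻¹ := ⟨_, rfl⟩
  rw [← hz'd] at hg1 hg2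
  have hz'S : z' ∈ S := hz'd ▸ hnS.conj_mem z hzS g
  have hz' : z' * z' = ε := by
    rw [hz'd, show g * z * g⁻¹ * (g * z * g⁻¹) = g * (z * z) * g⁻¹ by group, hz, hεc]; group
  have hz's : ∀ s ∈ S, s * z' * s⁻¹ = z' ∨ s * z' * s⁻¹ = ε * z' := by
    intro s hs
    have e : s * z' * s⁻¹ = g * ((g⁻¹ * s * g) * z * (g⁻¹ * s * g)⁻¹) * g⁻¹ := by rw [hz'd]; group
    have := hnS.conj_mem s hs g⁻¹
    rw [inv_inv] at this
    rw [e]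
    rcases hzs _ this with e | e
    · left; rw [e, hz'd]
    · right; rw [e, hz'd, ← mul_assoc, hεc]; group
  have hncomm : z' * z ≠ z * z' := fun e => (hG.four_comm hε hε1 hz' hz e).elim hg1 hg2
  have hρε : ρ ε = -1 := hρ.involution hε hε1
  have hii : ρ z * ρ z = -1 := by rw [← map_mul, hz, hρε]
  have hjj : ρ z' * ρ z' = -1 := by rw [← map_mul, hz', hρε]
  have skew : ∀ y : Γ, y * y = ε → ρ y⁻¹ = -ρ y := by
    intro y hy
    have : y⁻¹ = ε * y := by
      rw [inv_eq_iff_mul_eq_one, ← mul_assoc, hεc, mul_assoc, hy, hε]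
    rw [this, map_mul, hρε, neg_one_mul]
  have toMat : ∀ s y : Γ, s * y * s⁻¹ = y ∨ s * y * s⁻¹ = ε * y →
      ρ s * ρ y = ρ y * ρ s ∨ ρ s * ρ y = -(ρ y * ρ s) := by
    rintro s y (e | e)
    · left; rw [← map_mul, mul_inv_eq_iff_eq_mul.1 e, map_mul]
    · right; rw [← map_mul, mul_inv_eq_iff_eq_mul.1 e, map_mul, map_mul, hρε]; simp
  have hij : ρ z' * ρ z = -(ρ z * ρ z') := by
    rcases toMat _ _ (hzs z' hz'S) with e | e
    · exact absurd (hρ.comm_iff.1 e) hncomm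
    · exact e
  have mz : ρ z ∈ Algebra.adjoin ℝ {ρ z, ρ z'} := Algebra.subset_adjoin (by simp)
  have mz' : ρ z' ∈ Algebra.adjoin ℝ {ρ z, ρ z'} := Algebra.subset_adjoin (by simp)
  refine h.no_quaternion hD hρ hzS hz'S (by rw [← hρ.orth, skew z hz]) (by rw [← hρ.orth, skew z' hz'])
    hii hjj hij fun s hs => ?_
  -- an element of `S` commuting with both generators is `1` or `ε`
  have key : ∀ t ∈ S, Commute (ρ t) (ρ z) → Commute (ρ t) (ρ z') → ρ t = 1 ∨ ρ t = -1 := by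
    intro t ht h1 h2
    by_cases t1 : t = 1
    · left; rw [t1, map_one]
    by_cases t2 : t = ε
    · right; rw [t2, hρε]
    exfalso
    obtain ⟨n, hn⟩ := h.two ⟨t, ht⟩
    obtain ⟨k, hk, -⟩ := hG.two_elt hε hε1 ⟨n, congrArg Subtype.val hn⟩ t1 t2
    have c1 : Commute t z := hρ.comm_iff.1 h1
    have c2 : Commute t z' := hρ.comm_iff.1 h2
    have c3 : Commute (t ^ k) z' := c2.pow_left k
    rcases hG.four_comm hε hε1 hk hz (c1.pow_left k).eq with e | e
    · rw [e] at c3; exact hncomm c3.eq.symm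
    · rw [e] at c3
      have c4 := (show Commute ε z' from (hεc z').symm).inv_left.mul_left c3
      rw [inv_mul_cancel_left] at c4
      exact hncomm c4.eq.symm
  have fin : ∀ w ∈ S, ρ w⁻¹ ∈ Algebra.adjoin ℝ {ρ z, ρ z'} → Commute (ρ s * ρ w) (ρ z) →
      Commute (ρ s * ρ w) (ρ z') → ρ s ∈ Algebra.adjoin ℝ {ρ z, ρ z'} := by
    intro w hw hw' h1 h2
    rw [← map_mul] at h1 h2
    have e : ρ s = ρ (s * w) * ρ w⁻¹ := by rw [← map_mul, mul_inv_cancel_right]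
    rw [e]
    rcases key _ (S.mul_mem hs hw) h1 h2 with e | e
    · rw [e, one_mul]; exact hw'
    · rw [e, neg_one_mul]; exact neg_mem hw'
  rcases toMat _ _ (hzs s hs) with e1 | e1 <;> rcases toMat _ _ (hz's s hs) with e2 | e2
  · exact fin 1 S.one_mem (by rw [inv_one, map_one]; exact one_mem _) (by rw [map_one, mul_one]; exact e1)
      (by rw [map_one, mul_one]; exact e2)
  · refine fin z hzS (by rw [skew z hz]; exact neg_mem mz) ?_ ?_ <;> show _ * _ = _ * _ <;>
      simp only [mul_assoc, e1, e2, hij, hii, hjj, assoc2 e1, assoc2 e2, assoc2 hij, assoc2 hii, assoc2 hjj,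
        mul_neg, neg_mul, neg_neg, mul_one, one_mul]
  · refine fin z' hz'S (by rw [skew z' hz']; exact neg_mem mz') ?_ ?_ <;> show _ * _ = _ * _ <;>
      simp only [mul_assoc, e1, e2, hij, hii, hjj, assoc2 e1, assoc2 e2, assoc2 hij, assoc2 hii, assoc2 hjj,
        mul_neg, neg_mul, neg_neg, mul_one, one_mul]
  · refine fin (z * z') (S.mul_mem hzS hz'S) (by
      rw [mul_inv_rev, map_mul, skew z hz, skew z' hz']; exact mul_mem (neg_mem mz') (neg_mem mz)) ?_ ?_ <;>
      rw [map_mul] <;> show _ * _ = _ * _ <;>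
      simp only [mul_assoc, e1, e2, hij, hii, hjj, assoc2 e1, assoc2 e2, assoc2 hij, assoc2 hii, assoc2 hjj,
        mul_neg, neg_mul, neg_neg, mul_one, one_mul]
end

end FreeS7

/-- For every finite subgroup `G` of `O(8)` acting freely on the unit sphere `S⁷ ⊂ ℝ⁸`,
there is a nonzero `G`-invariant harmonic polynomial on `ℝ⁸`, homogeneous of degree `d`
with `1 ≤ d ≤ 4` (so the first nonzero eigenvalue of the Laplacian on `S⁷/G` is at most
`4·(4+7−1) = 40`). -/
theorem free_quotient_S7_eigenvalue_bound
    (G : Subgroup (Matrix.orthogonalGroup (Fin 8) ℝ)) (hfin : Finite G)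
    (hfree : ∀ g ∈ G, g ≠ 1 → ∀ v : Fin 8 → ℝ,
      Matrix.mulVec (g : Matrix (Fin 8) (Fin 8) ℝ) v = v → v = 0) :
    ∃ (p : MvPolynomial (Fin 8) ℝ) (d : ℕ), p ≠ 0 ∧ 1 ≤ d ∧ d ≤ 4 ∧
      p.IsHomogeneous d ∧ IsHarmonic p ∧
      ∀ g ∈ G, aeval (matSub (g : Matrix (Fin 8) (Fin 8) ℝ)) p = p := by
  by_contra hno
  push Not at hno
  let ρ : G →* FreeS7.Mat := (Submonoid.subtype _).comp G.subtype
  have hρ : FreeS7.FreeRep ρ :=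
    { orth := fun g => rfl
      free := fun g v hv hv0 => by
        by_contra hg
        exact hv0 (hfree g g.2 (fun e => hg (Subtype.ext e)) v hv) }
  refine FreeS7.not_propD hρ (FreeS7.propD_of_no_invariant hρ fun p d h1 h4 hp hh hinv => ?_)
  by_contra hp0
  obtain ⟨g, hg, hne⟩ := hno p d hp0 h1 h4 hp hh
  exact hne (hinv ⟨g, hg⟩)
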